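/- arXiv:1407.6077 — 6 statements merged into one kernel-verified Lean document; each statement's English description precedes it below -/
import Mathlib

section
/- Let P be a finite poset and let m be the maximum size of an antichain in P. On the set A_m(P) of m-element antichains of P, define X ⪯ Y if and only if for every x ∈ X there exists y ∈ Y with x ≤ y. Then ⪯ is a partial order on A_m(P) and A_m(P) has a minimum element with respect to ⪯, i.e., there exists an m-element antichain Z such that Z ⪯ X for every m-element antichain X. -/
theorem meet_aux {P : Type*} [PartialOrder P] [Fintype P] (m : ℕ)
    (hmax : ∀ A : Finset P, IsAntichain (· ≤ ·) (A : Set P) → A.card ≤ m)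
    (X Y : Finset P) (hX : IsAntichain (· ≤ ·) (X : Set P)) (hXm : X.card = m)
    (hY : IsAntichain (· ≤ ·) (Y : Set P)) (hYm : Y.card = m) :
    ∃ M : Finset P, IsAntichain (· ≤ ·) (M : Set P) ∧ M.card = m ∧
      (∀ z ∈ M, ∃ x ∈ X, z ≤ x) ∧ (∀ z ∈ M, ∃ x ∈ Y, z ≤ x) := by
  classical
  have comp : ∀ X : Finset P, IsAntichain (· ≤ ·) (X : Set P) → X.card = m →
      ∀ p : P, ∃ x ∈ X, p ≤ x ∨ x ≤ p := by
    intro X hX hXm p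
    by_contra! h
    have hp : p ∉ X := fun hp => (h p hp).1 le_rfl
    have h1 : IsAntichain (· ≤ ·) ((insert p X : Finset P) : Set P) := by
      rw [Finset.coe_insert]
      refine hX.insert ?_ ?_
      · intro b hb _
        exact (h b hb).2
      · intro b hb _
        exact (h b hb).1
    have := hmax _ h1
    rw [Finset.card_insert_of_notMem hp] at this
    omega
  let M := (X ∪ Y).filter (fun a => ∀ b ∈ X ∪ Y, b ≤ a → b = a)
  let J := (X ∪ Y).filter (fun a => ∀ b ∈ X ∪ Y, a ≤ b → b = a)
  have hM : ∀ a, a ∈ M ↔ a ∈ X ∪ Y ∧ ∀ b ∈ X ∪ Y, b ≤ a → b = a := by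
    intro a; simp only [M, Finset.mem_filter]
  have hJ : ∀ a, a ∈ J ↔ a ∈ X ∪ Y ∧ ∀ b ∈ X ∪ Y, a ≤ b → b = a := by
    intro a; simp only [J, Finset.mem_filter]
  have hMa : IsAntichain (· ≤ ·) (M : Set P) := by
    intro a ha b hb hab hle
    exact hab (((hM b).1 hb).2 a ((hM a).1 ha).1 hle)
  have hJa : IsAntichain (· ≤ ·) (J : Set P) := by
    intro a ha b hb hab hle
    exact hab (((hJ a).1 ha).2 b ((hJ b).1 hb).1 hle).symm
  have eX : ∀ a ∈ X, ∀ b ∈ X, a ≤ b → a = b := fun a ha b hb h => hX.eq ha hb h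
  have eY : ∀ a ∈ Y, ∀ b ∈ Y, a ≤ b → a = b := fun a ha b hb h => hY.eq ha hb h
  have h1 : X ∪ Y ⊆ M ∪ J := by
    intro a ha
    rw [Finset.mem_union, hM, hJ]
    by_contra! h
    obtain ⟨b, hb, hba, hne⟩ := h.1 ha
    obtain ⟨c, hc, hac, hne'⟩ := h.2 ha
    have hbc := hba.trans hac
    have hbc' : b = c → False := fun e => hne (le_antisymm hba (e ▸ hac))
    rw [Finset.mem_union] at ha hb hc
    grind
  have h2 : X ∩ Y ⊆ M ∩ J := by
    intro a ha
    rw [Finset.mem_inter] at ha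
    rw [Finset.mem_inter, hM, hJ]
    have : a ∈ X ∪ Y := Finset.mem_union_left _ ha.1
    refine ⟨⟨this, ?_⟩, this, ?_⟩ <;> intro b hb hle <;> rw [Finset.mem_union] at hb <;> grind
  have c1 := Finset.card_le_card h1
  have c2 := Finset.card_le_card h2
  have c3 := Finset.card_union_add_card_inter X Y
  have c4 := Finset.card_union_add_card_inter M J
  have c5 := hmax M hMa
  have c6 := hmax J hJa
  refine ⟨M, hMa, by omega, ?_, ?_⟩
  · intro z hz
    obtain ⟨x, hx, h | h⟩ := comp X hX hXm z
    · exact ⟨x, hx, h⟩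
    · exact ⟨x, hx, (((hM z).1 hz).2 x (Finset.mem_union_left _ hx) h).ge⟩
  · intro z hz
    obtain ⟨x, hx, h | h⟩ := comp Y hY hYm z
    · exact ⟨x, hx, h⟩
    · exact ⟨x, hx, (((hM z).1 hz).2 x (Finset.mem_union_right _ hx) h).ge⟩

/-- For a finite poset `P` with maximum antichain size `m`, the relation
`X ⪯ Y ↔ ∀ x ∈ X, ∃ y ∈ Y, x ≤ y` is a partial order on the set of `m`-element antichains,
and this poset has a minimum element. -/
theorem stmt_0 {P : Type*} [PartialOrder P] [Fintype P] (m : ℕ)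
    (hmax : ∀ A : Finset P, IsAntichain (· ≤ ·) (A : Set P) → A.card ≤ m)
    (hex : ∃ A : Finset P, IsAntichain (· ≤ ·) (A : Set P) ∧ A.card = m) :
    -- reflexivity
    (∀ X : Finset P, IsAntichain (· ≤ ·) (X : Set P) → X.card = m →
      ∀ x ∈ X, ∃ y ∈ X, x ≤ y) ∧
    -- transitivity
    (∀ X Y Z : Finset P,
      IsAntichain (· ≤ ·) (X : Set P) → X.card = m →
      IsAntichain (· ≤ ·) (Y : Set P) → Y.card = m →
      IsAntichain (· ≤ ·) (Z : Set P) → Z.card = m →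
      (∀ x ∈ X, ∃ y ∈ Y, x ≤ y) → (∀ y ∈ Y, ∃ z ∈ Z, y ≤ z) →
      (∀ x ∈ X, ∃ z ∈ Z, x ≤ z)) ∧
    -- antisymmetry
    (∀ X Y : Finset P,
      IsAntichain (· ≤ ·) (X : Set P) → X.card = m →
      IsAntichain (· ≤ ·) (Y : Set P) → Y.card = m →
      (∀ x ∈ X, ∃ y ∈ Y, x ≤ y) → (∀ y ∈ Y, ∃ x ∈ X, y ≤ x) → X = Y) ∧
    -- existence of a minimum
    (∃ Z : Finset P, IsAntichain (· ≤ ·) (Z : Set P) ∧ Z.card = m ∧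
      ∀ X : Finset P, IsAntichain (· ≤ ·) (X : Set P) → X.card = m →
        ∀ z ∈ Z, ∃ x ∈ X, z ≤ x) := by
  classical
  refine ⟨fun X _ _ x hx => ⟨x, hx, le_rfl⟩, ?_, ?_, ?_⟩
  · intro X Y Z _ _ _ _ _ _ h1 h2 x hx
    obtain ⟨y, hy, hxy⟩ := h1 x hx
    obtain ⟨z, hz, hyz⟩ := h2 y hy
    exact ⟨z, hz, hxy.trans hyz⟩
  · have key : ∀ X Y : Finset P, IsAntichain (· ≤ ·) (X : Set P) →
        (∀ x ∈ X, ∃ y ∈ Y, x ≤ y) → (∀ y ∈ Y, ∃ x ∈ X, y ≤ x) → X ⊆ Y := by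
      intro X Y hX h1 h2 x hx
      obtain ⟨y, hy, hxy⟩ := h1 x hx
      obtain ⟨x', hx', hyx⟩ := h2 y hy
      have e : x = x' := hX.eq hx hx' (hxy.trans hyx)
      subst e
      rwa [le_antisymm hxy hyx]
    intro X Y hX _ hY _ h1 h2
    exact Finset.Subset.antisymm (key X Y hX h1 h2) (key Y X hY h2 h1)
  · let D : Finset P → Finset P := fun Z => Finset.univ.filter (fun p => ∃ z ∈ Z, p ≤ z)
    have hD : ∀ Z p, p ∈ D Z ↔ ∃ z ∈ Z, p ≤ z := by intro Z p; simp [D]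
    let S : Finset (Finset P) := Finset.univ.filter
      (fun A => IsAntichain (· ≤ ·) (A : Set P) ∧ A.card = m)
    have hS : ∀ A, A ∈ S ↔ IsAntichain (· ≤ ·) (A : Set P) ∧ A.card = m := by
      intro A; simp [S]
    obtain ⟨A, hA⟩ := hex
    obtain ⟨Z, hZ, hmin⟩ := S.exists_min_image (fun Z => (D Z).card) ⟨A, (hS A).2 hA⟩
    obtain ⟨hZa, hZm⟩ := (hS Z).1 hZ
    refine ⟨Z, hZa, hZm, ?_⟩
    intro X hX hXm z hz
    obtain ⟨M, hMa, hMm, hMZ, hMX⟩ := meet_aux m hmax Z X hZa hZm hX hXm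
    have hsub : D M ⊆ D Z := by
      intro p hp
      obtain ⟨q, hq, hpq⟩ := (hD _ _).1 hp
      obtain ⟨r, hr, hqr⟩ := hMZ q hq
      exact (hD _ _).2 ⟨r, hr, hpq.trans hqr⟩
    have heq := Finset.eq_of_subset_of_card_le hsub (hmin M ((hS M).2 ⟨hMa, hMm⟩))
    have hzD : z ∈ D M := by
      rw [heq]
      exact (hD _ _).2 ⟨z, hz, le_rfl⟩
    obtain ⟨q, hq, hzq⟩ := (hD _ _).1 hzD
    obtain ⟨x, hx, hqx⟩ := hMX q hq
    exact ⟨x, hx, hzq.trans hqx⟩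
end

section
/- Let P be a finite poset partitioned into chains C_1, …, C_m (each C_i is a chain, their union is P, and they are pairwise disjoint), and suppose every antichain of P has size at most m. Let X and Y be m-element antichains of P. Then each intersection X ∩ C_i and Y ∩ C_i is a singleton, say X ∩ C_i = {x_i} and Y ∩ C_i = {y_i}, and the following are equivalent: (1) x_i ≤ y_i for all i ∈ {1,…,m}; (2) for every x ∈ X there exists y ∈ Y with x ≤ y. -/
theorem meets_aux {P : Type*} [PartialOrder P] (m : ℕ) (C : Fin m → Finset P)
    (hchain : ∀ i, IsChain (· ≤ ·) ((C i : Set P)))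
    (hcover : ∀ p : P, ∃ i, p ∈ C i)
    (X : Finset P)
    (hX : IsAntichain (· ≤ ·) (X : Set P)) (hXcard : X.card = m) :
    ∀ i, ∃! x : P, x ∈ X ∧ x ∈ C i := by
  have huniq : ∀ i, ∀ x y : P, x ∈ X → x ∈ C i → y ∈ X → y ∈ C i → x = y := by
    intro i x y hx hxi hy hyi
    rcases (hchain i).total hxi hyi with h | h
    · exact hX.eq hx hy h
    · exact (hX.eq hy hx h).symm
  choose f hf using hcover
  have hinj : Function.Injective (fun x : X => f x.1) := by
    intro a b hab
    have hab' : f a.1 = f b.1 := hab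
    exact Subtype.ext (huniq (f a.1) a.1 b.1 a.2 (hf _) b.2 (hab' ▸ hf b.1))
  have hbij := (Fintype.bijective_iff_injective_and_card (fun x : X => f x.1)).2
    ⟨hinj, by simp [hXcard]⟩
  intro i
  obtain ⟨x, hx⟩ := hbij.2 i
  have hx' : f x.1 = i := hx
  have hxi : x.1 ∈ C i := hx' ▸ hf x.1
  exact ⟨x.1, ⟨x.2, hxi⟩, fun y hy => huniq i y x.1 hy.1 hy.2 x.2 hxi⟩

/-- If a finite poset `P` is partitioned into `m` chains and every antichain
has size at most `m`, then each `m`-element antichain meets each chain in exactly one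
element, and for two `m`-antichains `X`, `Y` the chainwise comparison `x_i ≤ y_i` for all `i`
is equivalent to: for every `x ∈ X` there exists `y ∈ Y` with `x ≤ y`. -/
theorem stmt_1 {P : Type*} [PartialOrder P] [Fintype P] (m : ℕ) (C : Fin m → Finset P)
    (hchain : ∀ i, IsChain (· ≤ ·) ((C i : Set P)))
    (hcover : ∀ p : P, ∃ i, p ∈ C i)
    (hdisj : ∀ i j, i ≠ j → ∀ p : P, p ∈ C i → p ∉ C j)
    (hmax : ∀ A : Finset P, IsAntichain (· ≤ ·) (A : Set P) → A.card ≤ m)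
    (X Y : Finset P)
    (hX : IsAntichain (· ≤ ·) (X : Set P)) (hXcard : X.card = m)
    (hY : IsAntichain (· ≤ ·) (Y : Set P)) (hYcard : Y.card = m) :
    (∀ i, ∃! x : P, x ∈ X ∧ x ∈ C i) ∧
    (∀ i, ∃! y : P, y ∈ Y ∧ y ∈ C i) ∧
    ((∀ i, ∀ x y : P, x ∈ X → x ∈ C i → y ∈ Y → y ∈ C i → x ≤ y) ↔
      (∀ x ∈ X, ∃ y ∈ Y, x ≤ y)) := by
  have h1 := meets_aux m C hchain hcover X hX hXcard
  have h2 := meets_aux m C hchain hcover Y hY hYcard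
  refine ⟨h1, h2, ?_, ?_⟩
  · intro h x hx
    obtain ⟨i, hi⟩ := hcover x
    obtain ⟨y, ⟨hy, hyi⟩, -⟩ := h2 i
    exact ⟨y, hy, h i x y hx hi hy hyi⟩
  · intro h i x y hx hxi hy hyi
    rcases (hchain i).total hxi hyi with hle | hle
    · exact hle
    · obtain ⟨z, hz, hxz⟩ := h x hx
      have hyz : y = z := hY.eq hy hz (hle.trans hxz)
      exact hyz ▸ hxz
end

section
/- Fix integers m, n ≥ 3, 2 ≤ k < min(m,n), and any positive real edge weights ω on the grid Γ. Let I, J ⊆ {1,…,2k−1} with |I| = |J| = k−1 and 1 ∉ J, 2k−1 ∉ J. Set J′ := {2,…,2k−1} ∖ J and J″ := {1,…,2k−2} ∖ J. Then wt(I,J) = wt(I,J′) + wt(I,J″). -/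
/-- One step of a directed path in the grid `Γ`: from `(i,j)` to `(i+1,j)` or `(i,j+1)`. -/
def GridStep (u v : ℕ × ℕ) : Prop := v = (u.1 + 1, u.2) ∨ v = (u.1, u.2 + 1)

/-- `p` is a directed path in the grid `{1,…,m} × {1,…,n}` from `src` to `tgt`. -/
def IsGridPath (m n : ℕ) (src tgt : ℕ × ℕ) (p : List (ℕ × ℕ)) : Prop :=
  p.head? = some src ∧ p.getLast? = some tgt ∧
  (∀ v ∈ p, 1 ≤ v.1 ∧ v.1 ≤ m ∧ 1 ≤ v.2 ∧ v.2 ≤ n) ∧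
  List.Chain' GridStep p

/-- A tuple of pairwise vertex-disjoint directed paths in the grid `{1,…,m} × {1,…,n}`,
the `l`-th one going from the `l`-th entry of `src` to the `l`-th entry of `tgt`. -/
structure NCTuple (m n : ℕ) (src tgt : List (ℕ × ℕ)) where
  path : List (List (ℕ × ℕ))
  hlen : path.length = src.length
  hlen' : path.length = tgt.length
  valid : ∀ l, l < path.length →
    IsGridPath m n (src.getD l (0, 0)) (tgt.getD l (0, 0)) (path.getD l [])
  disj : ∀ l l', l < path.length → l' < path.length → l ≠ l' →
    ∀ v ∈ path.getD l [], v ∉ path.getD l' []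

/-- The weight of a path: the product of the weights of its edges. -/
noncomputable def pathEdgeWeight (ω : ℕ × ℕ → ℕ × ℕ → ℝ) (p : List (ℕ × ℕ)) : ℝ :=
  ((p.zip p.tail).map fun e => ω e.1 e.2).prod

/-- The weight of a tuple of paths: the product of the weights of its paths. -/
noncomputable def tupleEdgeWeight (ω : ℕ × ℕ → ℕ × ℕ → ℝ) (ps : List (List (ℕ × ℕ))) : ℝ :=
  (ps.map (pathEdgeWeight ω)).prod

/-- The source `s_i` (for `1 ≤ i ≤ 2k-1`): `s_{2i-1} = (k+1-i, i)`, `s_{2i} = (k-i, i)`. -/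
def gridSource (k i : ℕ) : ℕ × ℕ :=
  if i % 2 = 1 then (k + 1 - (i + 1) / 2, (i + 1) / 2) else (k - i / 2, i / 2)

/-- The sink `t_j` (for `1 ≤ j ≤ 2k-1`): `t_{2j-1} = (m+1-j, n-k+j)`, `t_{2j} = (m-j, n-k+j)`. -/
def gridSink (m n k i : ℕ) : ℕ × ℕ :=
  if i % 2 = 1 then (m + 1 - (i + 1) / 2, n - k + (i + 1) / 2)
  else (m - i / 2, n - k + i / 2)

/-- `wt(I,J)`: the sum over all pairs `(R,B)` with
`R ∈ NCPath(I,J)` and `B ∈ NCPath({1,…,2k-1}∖I, {1,…,2k-1}∖J)` of `wt(R)·wt(B)`. -/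
noncomputable def patWeight (m n k : ℕ) (ω : ℕ × ℕ → ℕ × ℕ → ℝ) (I J : Finset ℕ) : ℝ :=
  ∑ᶠ RB : NCTuple m n ((I.sort (· ≤ ·)).map (gridSource k))
            ((J.sort (· ≤ ·)).map (gridSink m n k)) ×
          NCTuple m n (((Finset.Icc 1 (2 * k - 1) \ I).sort (· ≤ ·)).map (gridSource k))
            (((Finset.Icc 1 (2 * k - 1) \ J).sort (· ≤ ·)).map (gridSink m n k)),
    tupleEdgeWeight ω RB.1.path * tupleEdgeWeight ω RB.2.path


def colcons {r : ℕ} (e : Fin (r+1) → ℝ) (X : Matrix (Fin (r+1)) (Fin r) ℝ) :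
    Matrix (Fin (r+1)) (Fin (r+1)) ℝ :=
  Matrix.of fun i j => (Fin.cons (e i) (X i) : Fin (r+1) → ℝ) j

def colsnoc {r : ℕ} (X : Matrix (Fin (r+1)) (Fin r) ℝ) (e : Fin (r+1) → ℝ) :
    Matrix (Fin (r+1)) (Fin (r+1)) ℝ :=
  Matrix.of fun i j => (Fin.snoc (X i) (e i) : Fin (r+1) → ℝ) j

theorem exists_ker {r : ℕ} (La : Matrix (Fin r) (Fin (r+1)) ℝ) :
    ∃ y : Fin (r+1) → ℝ, y ≠ 0 ∧ La.mulVec y = 0 := by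
  have h := LinearMap.ker_ne_bot_of_finrank_lt (f := La.mulVecLin) (by simp)
  obtain ⟨y, hy, h0⟩ := (Submodule.ne_bot_iff _).1 h
  exact ⟨y, h0, by simpa using hy⟩

theorem colsnoc_det {r : ℕ} (X : Matrix (Fin (r+1)) (Fin r) ℝ) (e : Fin (r+1) → ℝ) :
    (colsnoc X e).det = (-1)^r * (colcons e X).det := by
  have h := Matrix.det_permute' (finRotate (r+1)) (colcons e X)
  have : (colcons e X).submatrix id (finRotate (r+1)) = colsnoc X e := by
    ext i j
    refine Fin.lastCases ?_ (fun j => ?_) j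
    · simp [colcons, colsnoc]
    · simp [colcons, colsnoc]
  rw [this] at h
  rw [h, sign_finRotate]; simp

theorem LA1 {r : ℕ} (La : Matrix (Fin r) (Fin (r+1)) ℝ) :
    ∃ e, ∀ X : Matrix (Fin (r+1)) (Fin r) ℝ, (La * X).det = (colcons e X).det := by
  obtain ⟨y, hy, h0⟩ := exists_ker La
  have hyy : y ⬝ᵥ y ≠ 0 := by simpa using hy
  set M : Matrix (Fin (r+1)) (Fin (r+1)) ℝ :=
    Matrix.of (Fin.cons y (fun i => La i) : Fin (r+1) → Fin (r+1) → ℝ)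
  have hM0 : ∀ j, M 0 j = y j := fun j => rfl
  have hMs : ∀ i j, M (Fin.succ i) j = La i j := fun i j => rfl
  clear_value M
  have key : ∀ X : Matrix (Fin (r+1)) (Fin r) ℝ,
      M.det * (colcons y X).det = (y ⬝ᵥ y) * (La * X).det := by
    intro X
    rw [← Matrix.det_mul, Matrix.det_succ_column_zero, Fin.sum_univ_succ]
    have hz : ∀ i : Fin r, (M * colcons y X) i.succ 0 = 0 := by
      intro i
      have := congrFun h0 i
      simpa [Matrix.mul_apply, hMs, colcons, Matrix.mulVec, dotProduct] using this
    have h00 : (M * colcons y X) 0 0 = y ⬝ᵥ y := by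
      simp [Matrix.mul_apply, hM0, colcons, dotProduct]
    have hs : (M * colcons y X).submatrix (Fin.succAbove 0) Fin.succ = La * X := by
      ext i j
      simp [Matrix.mul_apply, hMs, colcons]
    rw [h00, hs]
    simp [hz]
  refine ⟨(M.det / (y ⬝ᵥ y)) • y, fun X => ?_⟩
  have h2 : colcons ((M.det / (y ⬝ᵥ y)) • y) X
      = (colcons y X).updateCol 0 ((M.det / (y ⬝ᵥ y)) • fun i => colcons y X i 0) := by
    ext i j
    refine Fin.cases ?_ (fun j => ?_) j
    · simp [colcons]
    · simp [colcons]
  rw [h2, Matrix.det_updateCol_smul]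
  have h3 : (colcons y X).updateCol 0 (fun i => colcons y X i 0) = colcons y X := by
    ext i j
    refine Fin.cases ?_ (fun j => ?_) j <;> simp
  rw [h3, div_mul_eq_mul_div, key X]
  field_simp

theorem LA2 {r : ℕ} (hr : 1 ≤ r) (O : Fin (r+1) → ℕ → ℝ) (L : ℕ → Fin (r+1) → ℝ) (B : ℕ → ℕ → ℝ)
    (a : Fin r → ℕ) (b : Fin (r+1) → ℕ) (c : Fin r → ℕ) (d : Fin (r+1) → ℕ) 
    (hBa : ∀ i j, B (a i) j = ∑ l, L (a i) l * O l j)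
    (hBb : ∀ i j, B (b i) j = ∑ l, L (b i) l * O l j)
    (x : Fin (r+1) → ℝ) (hx : x ≠ 0)
    (hc : ∀ j, ∑ l, x l * O l (c j) = 0)
    (hd : ∀ j, j ≠ 0 → j ≠ Fin.last r → ∑ l, x l * O l (d j) = 0) :
    (Matrix.of fun i j => B (a i) (c j)).det * (Matrix.of fun i j => B (b i) (d j)).det =
    (Matrix.of fun i j => B (a i) (d (Fin.succ j))).det *
      (Matrix.of fun i j => B (b i) ((Fin.cons (d 0) c : Fin (r+1) → ℕ) j)).det +
    (Matrix.of fun i j => B (a i) (d (Fin.castSucc j))).det *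
      (Matrix.of fun i j => B (b i) ((Fin.snoc c (d (Fin.last r)) : Fin (r+1) → ℕ) j)).det := by
  obtain ⟨e, he⟩ := LA1 (Matrix.of fun i l => L (a i) l)
  have hP : ∀ f : Fin r → ℕ, (Matrix.of fun i j => B (a i) (f j)).det
      = (colcons e (Matrix.of fun l j => O l (f j))).det := by
    intro f
    rw [← he]; congr 1
    ext i j
    simp [Matrix.mul_apply, hBa]
  have hQ : ∀ f : Fin (r+1) → ℕ, (Matrix.of fun i j => B (b i) (f j)).det
      = (Matrix.of fun i l => L (b i) l).det * (Matrix.of fun l j => O l (f j)).det := by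
    intro f
    rw [← Matrix.det_mul]; congr 1
    ext i j
    simp [Matrix.mul_apply, hBb]
  simp only [hP, hQ]
  set W : Matrix (Fin (r+1)) (Fin (r+1)) ℝ := Matrix.of fun l j => O l (d j) with hW
  set C : Matrix (Fin (r+1)) (Fin r) ℝ := Matrix.of fun l j => O l (c j) with hC
  have hcram := Matrix.mulVec_cramer W e
  have hlin : W.det * (colcons e C).det = ∑ i, W.cramer e i * (colcons (fun l => W l i) C).det := by
    have hexp : ∀ v, (colcons v C).det = ((colcons e C).cramer v) 0 := by
      intro v
      rw [Matrix.cramer_apply]; congr 1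
      ext i j
      refine Fin.cases ?_ (fun j => ?_) j <;> simp [colcons]
    simp only [hexp]
    rw [← smul_eq_mul, ← Pi.smul_apply, ← map_smul, ← hcram]
    have : W.mulVec (W.cramer e) = ∑ i, W.cramer e i • (fun l => W l i) := by
      ext l
      simp [Matrix.mulVec, dotProduct, mul_comm]
    rw [this, map_sum]
    simp
  have hvan : ∀ i, i ≠ 0 → i ≠ Fin.last r → (colcons (fun l => W l i) C).det = 0 := by
    intro i h0 h1
    rw [← Matrix.exists_vecMul_eq_zero_iff]
    refine ⟨x, hx, ?_⟩
    ext j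
    refine Fin.cases ?_ (fun j => ?_) j
    · simpa [Matrix.vecMul, dotProduct, colcons, hW] using hd i h0 h1
    · simpa [Matrix.vecMul, dotProduct, colcons, hC] using hc j
  have hne : (0 : Fin (r+1)) ≠ Fin.last r := by
    intro h; have := congrArg Fin.val h; simp at this; omega
  have hlin2 : W.det * (colcons e C).det = W.cramer e 0 * (colcons (fun l => W l 0) C).det
      + W.cramer e (Fin.last r) * (colcons (fun l => W l (Fin.last r)) C).det := by
    rw [hlin]
    apply Finset.sum_eq_add 0 (Fin.last r) hne
    · intro i _ hi
      rw [hvan i hi.1 hi.2, mul_zero]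
    · simp
    · simp
  have e1 : W.cramer e 0 = (colcons e (Matrix.of fun l j => O l (d (Fin.succ j)))).det := by
    rw [Matrix.cramer_apply]; congr 1
    ext i j
    refine Fin.cases ?_ (fun j => ?_) j <;> simp [colcons, hW]
  have e2 : W.cramer e (Fin.last r) =
      (-1)^r * (colcons e (Matrix.of fun l j => O l (d (Fin.castSucc j)))).det := by
    rw [Matrix.cramer_apply, ← colsnoc_det]; congr 1
    ext i j
    refine Fin.lastCases ?_ (fun j => ?_) j
    · simp [colsnoc]
    · rw [Matrix.updateCol_ne (Fin.castSucc_lt_last j).ne]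
      simp [colsnoc, hW]
  have e3 : (Matrix.of fun l j => O l ((Fin.cons (d 0) c : Fin (r+1) → ℕ) j))
      = colcons (fun l => W l 0) C := by
    ext i j
    refine Fin.cases ?_ (fun j => ?_) j <;> simp [colcons, hW, hC]
  have e4 : (Matrix.of fun l j => O l ((Fin.snoc c (d (Fin.last r)) : Fin (r+1) → ℕ) j))
      = colsnoc C (fun l => W l (Fin.last r)) := by
    ext i j
    refine Fin.lastCases ?_ (fun j => ?_) j <;> simp [colsnoc, hW, hC]
  rw [e3, e4, colsnoc_det]
  rw [e1, e2] at hlin2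
  linear_combination (Matrix.of fun i l => L (b i) l).det * hlin2

abbrev lev (v : ℕ × ℕ) : ℕ := v.1 + v.2

theorem step_lev {u v : ℕ × ℕ} (h : GridStep u v) : lev v = lev u + 1 := by
  rcases h with h | h <;> subst h <;> simp [lev] <;> omega

theorem chain_pairwise {p : List (ℕ × ℕ)} (h : List.IsChain GridStep p) :
    p.Pairwise (fun a b => lev a < lev b) := by
  have h1 : List.IsChain (fun a b => lev a < lev b) p :=
    h.imp (fun a b hab => by rw [step_lev hab]; omega)
  haveI : Trans (fun a b : ℕ × ℕ => lev a < lev b) (fun a b => lev a < lev b)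
    (fun a b => lev a < lev b) := ⟨fun h1 h2 => lt_trans h1 h2⟩
  exact List.isChain_iff_pairwise.1 h1

def hd (d : ℕ) (p : List (ℕ × ℕ)) := p.filter (fun v => lev v ≤ d)
def tl (d : ℕ) (p : List (ℕ × ℕ)) := p.filter (fun v => d < lev v)

theorem hd_tl {d : ℕ} {p : List (ℕ × ℕ)} (h : p.Pairwise (fun a b => lev a < lev b)) :
    hd d p ++ tl d p = p := by
  induction p with
  | nil => simp [hd, tl]
  | cons a p ih =>
    have h' := List.pairwise_cons.1 h
    by_cases ha : lev a ≤ d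
    · have := ih h'.2
      simp only [hd, tl, List.filter_cons] at this ⊢
      simp [ha, this, Nat.not_lt.2 ha]
    · have h1 : hd d (a :: p) = [] := by
        simp only [hd, List.filter_eq_nil_iff, List.mem_cons]
        rintro b (rfl | hb)
        · simpa using ha
        · have := h'.1 b hb
          simp; omega
      have h2 : tl d (a :: p) = a :: p := by
        simp only [tl, List.filter_eq_self, List.mem_cons]
        rintro b (rfl | hb)
        · simpa using ha
        · have := h'.1 b hb
          simp; omega
      rw [h1, h2]; simp

theorem hd_append (d : ℕ) (p q : List (ℕ × ℕ)) : hd d (hd d p ++ tl d q) = hd d p := by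
  simp only [hd, tl, List.filter_append, List.filter_filter]
  have : q.filter (fun v => (decide (lev v ≤ d) && decide (d < lev v))) = [] := by
    rw [List.filter_eq_nil_iff]; intro a _; simp
  rw [this]; simp

theorem tl_append (d : ℕ) (p q : List (ℕ × ℕ)) : tl d (hd d p ++ tl d q) = tl d q := by
  simp only [hd, tl, List.filter_append, List.filter_filter]
  have : p.filter (fun v => (decide (d < lev v) && decide (lev v ≤ d))) = [] := by
    rw [List.filter_eq_nil_iff]; intro a _; simp
  rw [this]; simp

theorem mem_swap {d : ℕ} {p q : List (ℕ × ℕ)} {v : ℕ × ℕ} (hv : lev v ≤ d) :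
    v ∈ hd d p ++ tl d q ↔ v ∈ p := by
  simp only [hd, tl, List.mem_append, List.mem_filter, decide_eq_true_eq]
  constructor
  · rintro (h | h)
    · exact h.1
    · omega
  · intro h; exact Or.inl ⟨h, hv⟩

theorem split_at {p : List (ℕ × ℕ)} (h : p.Pairwise (fun a b => lev a < lev b))
    {v : ℕ × ℕ} (hv : v ∈ p) :
    ∃ p1, hd (lev v) p = p1 ++ [v] ∧ p = p1 ++ v :: tl (lev v) p := by
  obtain ⟨p1, p2, rfl⟩ := List.append_of_mem hv
  have h' := List.pairwise_append.1 h
  have h'' := List.pairwise_cons.1 h'.2.1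
  have e1 : hd (lev v) p1 = p1 := by
    simp only [hd, List.filter_eq_self]
    intro a ha
    have := h'.2.2 a ha v (by simp)
    simp; omega
  have e2 : hd (lev v) p2 = [] := by
    simp only [hd, List.filter_eq_nil_iff]
    intro a ha
    have := h''.1 a ha
    simp; omega
  have e3 : tl (lev v) p1 = [] := by
    simp only [tl, List.filter_eq_nil_iff]
    intro a ha
    have := h'.2.2 a ha v (by simp)
    simp; omega
  have e4 : tl (lev v) p2 = p2 := by
    simp only [tl, List.filter_eq_self]
    intro a ha
    have := h''.1 a ha
    simp; omega
  refine ⟨p1, ?_, ?_⟩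
  · have : hd (lev v) (p1 ++ v :: p2) = hd (lev v) p1 ++ v :: hd (lev v) p2 := by
      simp [hd, List.filter_cons]
    rw [this, e1, e2]
  · have : tl (lev v) (p1 ++ v :: p2) = tl (lev v) p1 ++ tl (lev v) p2 := by
      simp [tl, List.filter_cons]
    rw [this, e3, e4]; simp

theorem pw_cons (ω) (a b : ℕ × ℕ) (p) :
    pathEdgeWeight ω (a :: b :: p) = ω a b * pathEdgeWeight ω (b :: p) := by
  simp [pathEdgeWeight]

theorem pw_split (ω) (p : List (ℕ × ℕ)) (v : ℕ × ℕ) (q) :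
    pathEdgeWeight ω (p ++ v :: q) = pathEdgeWeight ω (p ++ [v]) * pathEdgeWeight ω (v :: q) := by
  induction p with
  | nil => simp [pathEdgeWeight]
  | cons a p ih =>
    cases p with
    | nil => simp [pathEdgeWeight]
    | cons b p =>
      simp only [List.cons_append] at ih ⊢
      rw [pw_cons, pw_cons, ih]; ring

theorem path_pairwise {m n s t p} (h : IsGridPath m n s t p) :
    p.Pairwise (fun a b => lev a < lev b) := chain_pairwise h.2.2.2

theorem swap_path {m n s t s' t' p q v} (hp : IsGridPath m n s t p) (hq : IsGridPath m n s' t' q)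
    (hvp : v ∈ p) (hvq : v ∈ q) :
    IsGridPath m n s t' (hd (lev v) p ++ tl (lev v) q) := by
  obtain ⟨p1, a1, a2⟩ := split_at (path_pairwise hp) hvp
  obtain ⟨q1, b1, b2⟩ := split_at (path_pairwise hq) hvq
  rw [a1]
  generalize tl (lev v) p = p2 at *
  generalize tl (lev v) q = q2 at *
  clear a1 b1
  subst a2 b2
  obtain ⟨h1, h2, h3, h4⟩ := hp
  obtain ⟨g1, g2, g3, g4⟩ := hq
  have h4' := List.isChain_split.1 h4
  have g4' := List.isChain_split.1 g4
  refine ⟨?_, ?_, ?_, ?_⟩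
  · cases p1 <;> simpa using h1
  · simpa using g2
  · intro w hw
    simp only [List.append_assoc, List.singleton_append, List.mem_append, List.mem_cons] at hw
    rcases hw with hw | hw | hw
    · exact h3 w (by simp [hw])
    · exact h3 w (by simp [hw])
    · exact g3 w (by simp [hw])
  · show List.IsChain _ _
    rw [List.append_assoc, List.singleton_append, List.isChain_split]
    exact ⟨h4'.1, g4'.2⟩

theorem swap_weight {m n s t p q v} (ω) (hp : IsGridPath m n s t p) (hvp : v ∈ p) :
    pathEdgeWeight ω (hd (lev v) p ++ tl (lev v) q) =
      pathEdgeWeight ω (hd (lev v) p) * pathEdgeWeight ω (v :: tl (lev v) q) := by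
  obtain ⟨p1, a1, a2⟩ := split_at (path_pairwise hp) hvp
  rw [a1, List.append_assoc, List.singleton_append, pw_split]

theorem finite_paths (m n s t) : {p | IsGridPath m n s t p}.Finite := by
  have hS : (Set.Icc (1:ℕ) m ×ˢ Set.Icc (1:ℕ) n).Finite :=
    (Set.finite_Icc _ _).prod (Set.finite_Icc _ _)
  haveI := hS.to_subtype
  refine ((List.finite_length_le (Set.Icc (1:ℕ) m ×ˢ Set.Icc (1:ℕ) n)
    (Nat.card (Set.Icc (1:ℕ) m ×ˢ Set.Icc (1:ℕ) n))).image (List.map Subtype.val)).subset ?_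
  intro p hp
  have hmem : ∀ v ∈ p, v ∈ (Set.Icc (1:ℕ) m ×ˢ Set.Icc (1:ℕ) n) := by
    intro v hv
    have := hp.2.2.1 v hv
    exact ⟨⟨this.1, this.2.1⟩, this.2.2⟩
  lift p to List (Set.Icc (1:ℕ) m ×ˢ Set.Icc (1:ℕ) n) using hmem
  refine ⟨p, ?_, rfl⟩
  have hnd : (p.map Subtype.val).Nodup :=
    (path_pairwise hp).imp (fun {a b} h => by rintro rfl; omega)
  have hnd2 := hnd.of_map
  haveI := Fintype.ofFinite (Set.Icc (1:ℕ) m ×ˢ Set.Icc (1:ℕ) n)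
  rw [Set.mem_ofPred_eq, Nat.card_eq_fintype_card]
  exact hnd2.length_le_card

noncomputable def PS (m n : ℕ) (s t : ℕ × ℕ) : Finset (List (ℕ × ℕ)) := (finite_paths m n s t).toFinset

theorem mem_PS {m n s t p} : p ∈ PS m n s t ↔ IsGridPath m n s t p := by simp [PS]

noncomputable def AW (m n : ℕ) (ω : ℕ × ℕ → ℕ × ℕ → ℝ) (s t : ℕ × ℕ) : ℝ :=
  ∑ p ∈ PS m n s t, pathEdgeWeight ω p

def coll {r : ℕ} (P : Fin r → List (ℕ × ℕ)) (d : ℕ) : Set (Fin r × Fin r) :=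
  {x | x.1 ≠ x.2 ∧ ∃ v ∈ P x.1, v ∈ P x.2 ∧ lev v = d}

def Bad {r : ℕ} (P : Fin r → List (ℕ × ℕ)) : Prop := {d | (coll P d).Nonempty}.Nonempty

noncomputable def dm {r : ℕ} (P : Fin r → List (ℕ × ℕ)) : ℕ := sInf {d | (coll P d).Nonempty}

theorem dm_spec {r : ℕ} {P : Fin r → List (ℕ × ℕ)} (h : Bad P) : (coll P (dm P)).Nonempty :=
  Nat.sInf_mem h

noncomputable def pk {r : ℕ} (P : Fin r → List (ℕ × ℕ)) (h : Bad P) : Fin r × Fin r :=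
  (dm_spec h).some

theorem pk_spec {r : ℕ} {P : Fin r → List (ℕ × ℕ)} (h : Bad P) : pk P h ∈ coll P (dm P) :=
  (dm_spec h).some_mem

def swP {r : ℕ} (P : Fin r → List (ℕ × ℕ)) (d : ℕ) (x : Fin r × Fin r) : Fin r → List (ℕ × ℕ) :=
  fun l => hd d (P l) ++ tl d (P (Equiv.swap x.1 x.2 l))

theorem coll_swP {r : ℕ} (P : Fin r → List (ℕ × ℕ)) (d : ℕ) (x : Fin r × Fin r) (e : ℕ)
    (he : e ≤ d) : coll (swP P d x) e = coll P e := by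
  ext y
  simp only [coll, swP]
  constructor
  · rintro ⟨h, v, h1, h2, h3⟩
    exact ⟨h, v, (mem_swap (by omega)).1 h1, (mem_swap (by omega)).1 h2, h3⟩
  · rintro ⟨h, v, h1, h2, h3⟩
    exact ⟨h, v, (mem_swap (by omega)).2 h1, (mem_swap (by omega)).2 h2, h3⟩

noncomputable def inv {r : ℕ} (P : Fin r → List (ℕ × ℕ)) (h : Bad P) : Fin r → List (ℕ × ℕ) :=
  swP P (dm P) (pk P h)

theorem inv_bad {r : ℕ} {P : Fin r → List (ℕ × ℕ)} (h : Bad P) : Bad (inv P h) := by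
  refine ⟨dm P, ?_⟩
  show (coll (inv P h) (dm P)).Nonempty
  rw [inv, coll_swP _ _ _ _ le_rfl]
  exact dm_spec h

theorem inv_dm {r : ℕ} {P : Fin r → List (ℕ × ℕ)} (h : Bad P) : dm (inv P h) = dm P := by
  apply le_antisymm
  · apply Nat.sInf_le
    show (coll (inv P h) (dm P)).Nonempty
    rw [inv, coll_swP _ _ _ _ le_rfl]
    exact dm_spec h
  · by_contra! hlt
    have := dm_spec (inv_bad h)
    have hc : coll (inv P h) (dm (inv P h)) = coll P (dm (inv P h)) := coll_swP _ _ _ _ hlt.le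
    rw [hc] at this
    have h2 : dm P ≤ dm (inv P h) := Nat.sInf_le this
    omega

theorem inv_pk {r : ℕ} {P : Fin r → List (ℕ × ℕ)} (h : Bad P) :
    pk (inv P h) (inv_bad h) = pk P h := by
  have : coll (inv P h) (dm (inv P h)) = coll P (dm P) := by
    rw [inv_dm, inv, coll_swP _ _ _ _ le_rfl]
  have key : ∀ (S T : Set (Fin r × Fin r)) (hS : S.Nonempty) (hT : T.Nonempty), S = T →
      hS.some = hT.some := by
    rintro S T hS hT rfl; rfl
  exact key _ _ _ _ this

theorem inv_inv' {r : ℕ} {P : Fin r → List (ℕ × ℕ)} (h : Bad P)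
    (hP : ∀ i, (P i).Pairwise (fun a b => lev a < lev b)) : inv (inv P h) (inv_bad h) = P := by
  funext l
  show swP (inv P h) (dm (inv P h)) (pk (inv P h) (inv_bad h)) l = _
  rw [inv_pk, inv_dm]
  simp only [swP, inv]
  rw [hd_append, tl_append, ← Equiv.Perm.mul_apply, Equiv.swap_mul_self, Equiv.Perm.one_apply,
    hd_tl (hP l)]

theorem inv_valid {m n r : ℕ} {s t : Fin r → ℕ × ℕ} {σ : Equiv.Perm (Fin r)}
    {P : Fin r → List (ℕ × ℕ)} (hP : ∀ i, IsGridPath m n (s i) (t (σ i)) (P i)) (h : Bad P) :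
    ∀ i, IsGridPath m n (s i) (t ((σ * Equiv.swap (pk P h).1 (pk P h).2) i)) (inv P h i) := by
  obtain ⟨hne, v, hv1, hv2, hd⟩ := pk_spec h
  intro i
  rw [inv, swP, Equiv.Perm.mul_apply]
  generalize pk P h = x at *
  rw [← hd]
  by_cases h1 : i = x.1
  · subst h1
    rw [Equiv.swap_apply_left]
    exact swap_path (hP _) (hP _) hv1 hv2
  by_cases h2 : i = x.2
  · subst h2
    rw [Equiv.swap_apply_right]
    exact swap_path (hP _) (hP _) hv2 hv1
  · rw [Equiv.swap_apply_of_ne_of_ne h1 h2, hd_tl (path_pairwise (hP i))]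
    exact hP i

theorem inv_weight {m n r : ℕ} {s t : Fin r → ℕ × ℕ} {σ : Equiv.Perm (Fin r)} (ω)
    {P : Fin r → List (ℕ × ℕ)} (hP : ∀ i, IsGridPath m n (s i) (t (σ i)) (P i)) (h : Bad P) :
    ∏ i, pathEdgeWeight ω (inv P h i) = ∏ i, pathEdgeWeight ω (P i) := by
  classical
  obtain ⟨hne, v, hv1, hv2, hd'⟩ := pk_spec h
  unfold inv swP
  generalize pk P h = x at *
  rw [← hd']
  have hv : ∀ l, (l = x.1 ∨ l = x.2) → v ∈ P l := by
    rintro l (rfl | rfl) <;> assumption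
  set H : Fin r → ℝ := fun l => if l = x.1 ∨ l = x.2 then pathEdgeWeight ω (hd (lev v) (P l))
    else pathEdgeWeight ω (P l) with hH
  set T : Fin r → ℝ := fun l => if l = x.1 ∨ l = x.2 then pathEdgeWeight ω (v :: tl (lev v) (P l))
    else 1 with hT
  have e1 : ∀ l, pathEdgeWeight ω (P l) = H l * T l := by
    intro l
    by_cases hl : l = x.1 ∨ l = x.2
    · simp only [hH, hT, if_pos hl]
      rw [← swap_weight ω (hP l) (hv l hl), hd_tl (path_pairwise (hP l))]
    · simp only [hH, hT, if_neg hl, mul_one]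
  have e2 : ∀ l, pathEdgeWeight ω (hd (lev v) (P l) ++ tl (lev v) (P (Equiv.swap x.1 x.2 l)))
      = H l * T (Equiv.swap x.1 x.2 l) := by
    intro l
    by_cases hl : l = x.1 ∨ l = x.2
    · have hl' : Equiv.swap x.1 x.2 l = x.1 ∨ Equiv.swap x.1 x.2 l = x.2 := by
        rcases hl with rfl | rfl <;> simp
      simp only [hH, hT, if_pos hl, if_pos hl']
      rw [swap_weight ω (hP l) (hv l hl)]
    · have hs : Equiv.swap x.1 x.2 l = l := by
        push Not at hl
        exact Equiv.swap_apply_of_ne_of_ne hl.1 hl.2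
      rw [hs, hd_tl (path_pairwise (hP l)), e1 l]
  simp only [e2, e1]
  rw [Finset.prod_mul_distrib, Finset.prod_mul_distrib, Equiv.prod_comp]

open Classical in
theorem LGV {m n r : ℕ} (ω : ℕ × ℕ → ℕ × ℕ → ℝ) (s t : Fin r → ℕ × ℕ)
    (hpl : ∀ i j, i < j → ∀ a b, a < b → ∀ p q, IsGridPath m n (s i) (t b) p →
      IsGridPath m n (s j) (t a) q → ∃ v ∈ p, v ∈ q) :
    (Matrix.of fun i j => AW m n ω (s i) (t j)).det =
      ∑ P ∈ (Fintype.piFinset fun i => PS m n (s i) (t i)).filter (fun P => ¬ Bad P),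
        ∏ i, pathEdgeWeight ω (P i) := by
  rw [← Matrix.det_transpose, Matrix.det_apply']
  simp only [Matrix.transpose_apply, Matrix.of_apply, AW, Finset.prod_univ_sum, Finset.mul_sum]
  rw [Finset.sum_sigma']
  rw [← Finset.sum_filter_add_sum_filter_not _ (fun a => Bad a.2)]
  refine (congrArg₂ (· + ·) (Finset.sum_involution
    (fun a ha => ⟨a.1 * Equiv.swap (pk a.2 (Finset.mem_filter.1 ha).2).1
      (pk a.2 (Finset.mem_filter.1 ha).2).2, inv a.2 (Finset.mem_filter.1 ha).2⟩)
      ?_ ?_ ?_ ?_) rfl).trans ?_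
  rotate_right
  · rw [zero_add]
    have hid : ∀ σ : Equiv.Perm (Fin r), ∀ P : Fin r → List (ℕ × ℕ),
        (∀ i, IsGridPath m n (s i) (t (σ i)) (P i)) → ¬ Bad P → σ = 1 := by
      intro σ P hP hB
      have hm : StrictMono σ := by
        intro i j hij
        by_contra hlt
        have hne : σ i ≠ σ j := fun h => hij.ne (σ.injective h)
        have hlt' : σ j < σ i := lt_of_le_of_ne (not_lt.1 hlt) hne.symm
        obtain ⟨v, hv1, hv2⟩ := hpl i j hij _ _ hlt' _ _ (hP i) (hP j)
        exact hB ⟨lev v, (i, j), hij.ne, v, hv1, hv2, rfl⟩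
      ext i
      have := Subsingleton.elim (StrictMono.orderIsoOfSurjective σ hm σ.surjective)
        (OrderIso.refl (Fin r))
      have h2 := congrArg (fun e : Fin r ≃o Fin r => e i) this
      simpa using congrArg Fin.val h2
    symm
    refine Finset.sum_bij (fun P _ => ⟨1, P⟩) ?_ ?_ ?_ ?_
    · intro P hP
      simpa using hP
    · intro P _ Q _ h
      simpa using h
    · rintro ⟨σ, P⟩ h
      simp only [Finset.mem_filter, Finset.mem_sigma, Finset.mem_univ, true_and,
        Fintype.mem_piFinset, mem_PS] at h
      have := hid σ P h.1 h.2
      subst this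
      refine ⟨P, ?_, rfl⟩
      simpa [mem_PS] using h
    · intro P hP
      simp
  · rintro ⟨σ, P⟩ ha
    simp only [Finset.mem_filter, Finset.mem_sigma, Finset.mem_univ, true_and,
        Fintype.mem_piFinset, mem_PS] at ha
    have := pk_spec ha.2
    dsimp only
    rw [inv_weight ω ha.1 ha.2, Equiv.Perm.sign_mul, Equiv.Perm.sign_swap this.1]
    simp
  · rintro ⟨σ, P⟩ ha _ heq
    simp only [Finset.mem_filter, Finset.mem_sigma, Finset.mem_univ, true_and,
        Fintype.mem_piFinset, mem_PS] at ha
    have := pk_spec ha.2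
    have h1 := congrArg Sigma.fst heq
    dsimp only at h1
    rw [mul_eq_left, Equiv.swap_eq_one_iff] at h1
    exact this.1 h1
  · rintro ⟨σ, P⟩ ha
    simp only [Finset.mem_filter, Finset.mem_sigma, Finset.mem_univ, true_and,
        Fintype.mem_piFinset, mem_PS] at ha ⊢
    exact ⟨inv_valid ha.1 ha.2, inv_bad ha.2⟩
  · rintro ⟨σ, P⟩ ha
    simp only [Finset.mem_filter, Finset.mem_sigma, Finset.mem_univ, true_and,
        Fintype.mem_piFinset, mem_PS] at ha
    dsimp only
    simp only [inv_pk, inv_inv' ha.2 (fun i => path_pairwise (ha.1 i)), mul_assoc,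
      Equiv.swap_mul_self, mul_one]

abbrev ct (v : ℕ × ℕ) : ℤ := (v.2 : ℤ) - v.1

theorem lev_last : ∀ (p : List (ℕ × ℕ)) (u v : ℕ × ℕ), List.IsChain GridStep (u :: p) →
    (u :: p).getLast? = some v → lev v = lev u + p.length := by
  intro p
  induction p with
  | nil => intro u v _ h; simp at h; simp [h]
  | cons b p ih =>
    intro u v h1 h2
    rw [List.isChain_cons_cons] at h1
    have := ih b v h1.2 (by simpa [List.getLast?_cons_cons] using h2)
    have h3 := step_lev h1.1
    simp only [List.length_cons]; omega

theorem step_ct {u v : ℕ × ℕ} (h : GridStep u v) : ct v = ct u + 1 ∨ ct v = ct u - 1 := by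
  rcases h with h | h <;> subst h <;> simp [ct] <;> omega

theorem eq_of_lev_ct {u v : ℕ × ℕ} (h : lev u = lev v) (h' : ct u = ct v) : u = v := by
  simp only [lev, ct] at h h'
  ext <;> omega

theorem cross_aux : ∀ (p q : List (ℕ × ℕ)) (u u' v v' : ℕ × ℕ),
    List.IsChain GridStep (u :: p) → List.IsChain GridStep (u' :: q) →
    (u :: p).getLast? = some v → (u' :: q).getLast? = some v' →
    lev u = lev u' → ct u < ct u' → ct v' < ct v → lev v ≤ lev v' + 1 → lev v' ≤ lev v + 1 →
    ∃ w ∈ u :: p, w ∈ u' :: q := by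
  intro p
  induction p with
  | nil =>
    intro q u u' v v' h1 h2 h3 h4 h5 h6 h7 h8 h9
    have l1 := lev_last _ _ _ h1 h3
    have l2 := lev_last _ _ _ h2 h4
    simp only [List.length_nil] at l1
    have hvu : u = v := by simpa using h3
    subst hvu
    match q, h2, h4, l2 with
    | [], h2, h4, l2 =>
      have : u' = v' := by simpa using h4
      subst this; omega
    | [b], h2, h4, l2 =>
      have : b = v' := by simpa using h4
      subst this
      have h2' := (List.isChain_cons_cons.1 h2).1
      have := step_ct h2'
      simp only [lev, ct] at *
      omega
    | b :: c :: q, h2, h4, l2 =>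
      simp only [List.length_cons] at l2
      omega
  | cons a p ih =>
    intro q u u' v v' h1 h2 h3 h4 h5 h6 h7 h8 h9
    have l1 := lev_last _ _ _ h1 h3
    have l2 := lev_last _ _ _ h2 h4
    rw [List.isChain_cons_cons] at h1
    have s1 := step_ct h1.1
    have t1 := step_lev h1.1
    match q, h2, h4, l2 with
    | [], h2, h4, l2 =>
      have : u' = v' := by simpa using h4
      subst this
      simp only [List.length_cons] at l1
      have hp : p = [] := List.length_eq_zero_iff.1 (by omega)
      subst hp
      have : a = v := by simpa using h3
      subst this
      simp only [lev, ct] at *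
      omega
    | b :: q, h2, h4, l2 =>
      rw [List.isChain_cons_cons] at h2
      have s2 := step_ct h2.1
      have t2 := step_lev h2.1
      by_cases hab : a = b
      · exact ⟨a, by simp, by simp [hab]⟩
      · have hlev : lev a = lev b := by omega
        have hct : ct a ≠ ct b := fun h => hab (eq_of_lev_ct hlev h)
        have hlt : ct a < ct b := by
          simp only [lev, ct] at *
          omega
        obtain ⟨w, hw1, hw2⟩ := ih q a b v v' h1.2 h2.2
          (by simpa [List.getLast?_cons_cons] using h3)
          (by simpa [List.getLast?_cons_cons] using h4) hlev hlt h7 h8 h9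
        exact ⟨w, List.mem_cons_of_mem _ hw1, List.mem_cons_of_mem _ hw2⟩

theorem path_form {m n u v p} (h : IsGridPath m n u v p) : ∃ p', p = u :: p' := by
  cases p with
  | nil => simp [IsGridPath] at h
  | cons a p =>
    have := h.1
    simp at this
    exact ⟨p, by rw [this]⟩

theorem cross {m n} {u u' v v' : ℕ × ℕ} {p q} (hp : IsGridPath m n u v p)
    (hq : IsGridPath m n u' v' q) (h1 : lev u ≤ lev u' + 1) (h2 : lev u' ≤ lev u + 1)
    (h3 : lev v ≤ lev v' + 1) (h4 : lev v' ≤ lev v + 1) (h5 : ct u < ct u') (h6 : ct v' < ct v)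
    (h7 : lev u < lev v) (h8 : lev u' < lev v') : ∃ w ∈ p, w ∈ q := by
  obtain ⟨p, rfl⟩ := path_form hp
  obtain ⟨q, rfl⟩ := path_form hq
  obtain ⟨-, p2, -, p4⟩ := hp
  obtain ⟨-, q2, -, q4⟩ := hq
  have p4 : List.IsChain GridStep _ := p4
  have q4 : List.IsChain GridStep _ := q4
  have l1 := lev_last _ _ _ p4 p2
  have l2 := lev_last _ _ _ q4 q2
  by_cases c1 : lev u = lev u'
  · exact cross_aux _ _ _ _ _ _ p4 q4 p2 q2 c1 h5 h6 h3 h4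
  by_cases c2 : lev u + 1 = lev u'
  · cases p with
    | nil => simp at l1; omega
    | cons b p =>
      rw [List.isChain_cons_cons] at p4
      have s2 := step_ct p4.1
      have t2 := step_lev p4.1
      by_cases hb : b = u'
      · exact ⟨b, by simp, by simp [hb]⟩
      have hct : ct b ≠ ct u' := fun h => hb (eq_of_lev_ct (by omega) h)
      obtain ⟨w, hw1, hw2⟩ := cross_aux p q b u' v v' p4.2 q4
        (by simpa [List.getLast?_cons_cons] using p2) q2 (by omega) (by omega) h6 h3 h4
      exact ⟨w, List.mem_cons_of_mem _ hw1, hw2⟩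
  · cases q with
    | nil => simp at l2; omega
    | cons b q =>
      rw [List.isChain_cons_cons] at q4
      have s2 := step_ct q4.1
      have t2 := step_lev q4.1
      by_cases hb : b = u
      · exact ⟨b, by simp [hb], by simp⟩
      have hct : ct b ≠ ct u := fun h => hb (eq_of_lev_ct (by omega) h)
      obtain ⟨w, hw1, hw2⟩ := cross_aux p q u b v v' p4 q4.2 p2
        (by simpa [List.getLast?_cons_cons] using q2) (by omega) (by omega) h6 h3 h4
      exact ⟨w, hw1, List.mem_cons_of_mem _ hw2⟩

theorem source_facts {k i : ℕ} (hi : i ∈ Finset.Icc 1 (2 * k - 1)) :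
    ct (gridSource k i) = (i : ℤ) - k ∧ lev (gridSource k i) ≤ k + 1 ∧ k ≤ lev (gridSource k i) := by
  rw [Finset.mem_Icc] at hi
  unfold gridSource
  split_ifs <;> simp only [ct, lev] <;> omega

theorem sink_facts {m n k i : ℕ} (hm : k < m) (hn : k < n) (hi : i ∈ Finset.Icc 1 (2 * k - 1)) :
    ct (gridSink m n k i) = (n : ℤ) - m - k + i ∧ lev (gridSink m n k i) ≤ m + n - k + 1 ∧
      m + n - k ≤ lev (gridSink m n k i) := by
  rw [Finset.mem_Icc] at hi
  unfold gridSink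
  split_ifs <;> simp only [ct, lev] <;> omega

theorem planar {m n k r : ℕ} (hm : k < m) (hn : k < n) (a c : Fin r → ℕ) (ha : StrictMono a)
    (hc : StrictMono c) (ha' : ∀ i, a i ∈ Finset.Icc 1 (2 * k - 1))
    (hc' : ∀ i, c i ∈ Finset.Icc 1 (2 * k - 1)) :
    ∀ i j, i < j → ∀ x y, x < y → ∀ p q,
      IsGridPath m n (gridSource k (a i)) (gridSink m n k (c y)) p →
      IsGridPath m n (gridSource k (a j)) (gridSink m n k (c x)) q → ∃ v ∈ p, v ∈ q := by
  intro i j hij x y hxy p q hp hq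
  have h1 := source_facts (ha' i)
  have h2 := source_facts (ha' j)
  have h3 := sink_facts hm hn (hc' x)
  have h4 := sink_facts hm hn (hc' y)
  have := ha hij
  have := hc hxy
  apply cross hp hq <;> omega

theorem AW_row (m n : ℕ) (ω) (u v : ℕ × ℕ) (hu : 1 ≤ u.1 ∧ u.1 ≤ m ∧ 1 ≤ u.2 ∧ u.2 ≤ n)
    (huv : u ≠ v) : AW m n ω u v =
      ω u (u.1 + 1, u.2) * AW m n ω (u.1 + 1, u.2) v + ω u (u.1, u.2 + 1) * AW m n ω (u.1, u.2 + 1) v := by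
  classical
  have hPS : PS m n u v = (PS m n (u.1 + 1, u.2) v).image (List.cons u) ∪
      (PS m n (u.1, u.2 + 1) v).image (List.cons u) := by
    have back : ∀ x p', GridStep u x → IsGridPath m n x v p' → IsGridPath m n u v (u :: p') := by
      intro x p' hx h
      obtain ⟨p'', rfl⟩ := path_form h
      refine ⟨by simp, by simpa [List.getLast?_cons_cons] using h.2.1, ?_, ?_⟩
      · intro w hw
        rcases List.mem_cons.1 hw with rfl | hw
        · exact hu
        · exact h.2.2.1 w hw
      · exact List.isChain_cons_cons.2 ⟨hx, h.2.2.2⟩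
    ext p
    simp only [Finset.mem_union, Finset.mem_image, mem_PS]
    constructor
    · intro h
      obtain ⟨p', rfl⟩ := path_form h
      cases p' with
      | nil => exact absurd (by simpa using h.2.1) huv
      | cons x p' =>
        have hc := List.isChain_cons_cons.1 h.2.2.2
        have hx : IsGridPath m n x v (x :: p') :=
          ⟨by simp, by simpa [List.getLast?_cons_cons] using h.2.1,
            fun w hw => h.2.2.1 w (List.mem_cons_of_mem _ hw), hc.2⟩
        rcases hc.1 with rfl | rfl
        · exact Or.inl ⟨_, hx, rfl⟩
        · exact Or.inr ⟨_, hx, rfl⟩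
    · rintro (⟨p', h, rfl⟩ | ⟨p', h, rfl⟩)
      · exact back _ _ (Or.inl rfl) h
      · exact back _ _ (Or.inr rfl) h
  have hdis : Disjoint ((PS m n (u.1 + 1, u.2) v).image (List.cons u))
      ((PS m n (u.1, u.2 + 1) v).image (List.cons u)) := by
    rw [Finset.disjoint_left]
    intro p hp hq
    simp only [Finset.mem_image, mem_PS] at hp hq
    obtain ⟨p', h, rfl⟩ := hp
    obtain ⟨q', g, e⟩ := hq
    have : q' = p' := by simpa using e
    subst this
    have := h.1.symm.trans g.1
    simp at this
  have hw : ∀ x, ∑ p ∈ (PS m n x v).image (List.cons u), pathEdgeWeight ω p = ω u x * AW m n ω x v := by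
    intro x
    rw [Finset.sum_image (by intro a _ b _ h; simpa using h), AW, Finset.mul_sum]
    apply Finset.sum_congr rfl
    intro p hp
    obtain ⟨p', rfl⟩ := path_form (mem_PS.1 hp)
    rw [pw_cons]
  rw [← hw, ← hw, ← Finset.sum_union hdis, ← hPS, AW]

theorem path_form' {m n u v p} (h : IsGridPath m n u v p) : ∃ p', p = p' ++ [v] := by
  rcases List.eq_nil_or_concat p with rfl | ⟨p', x, rfl⟩
  · simp [IsGridPath] at h
  · have := h.2.1
    simp at this
    exact ⟨p', by simp [this]⟩

theorem AW_col (m n : ℕ) (ω) (u : ℕ × ℕ) (a b : ℕ) (ha : a + 1 ≤ m) (hb : b + 1 ≤ n)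
    (huv : u ≠ (a + 1, b + 1)) : AW m n ω u (a + 1, b + 1) =
      ω (a, b + 1) (a + 1, b + 1) * AW m n ω u (a, b + 1) +
      ω (a + 1, b) (a + 1, b + 1) * AW m n ω u (a + 1, b) := by
  classical
  set v : ℕ × ℕ := (a + 1, b + 1) with hv
  have hPS : PS m n u v = (PS m n u (a, b + 1)).image (fun p => p ++ [v]) ∪
      (PS m n u (a + 1, b)).image (fun p => p ++ [v]) := by
    have back : ∀ x p', GridStep x v → IsGridPath m n u x p' → IsGridPath m n u v (p' ++ [v]) := by
      intro x p' hx h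
      obtain ⟨p'', rfl⟩ := path_form' h
      refine ⟨?_, by simp, ?_, ?_⟩
      · have := h.1
        cases p'' <;> simpa using this
      · intro w hw
        rcases List.mem_append.1 hw with hw | hw
        · exact h.2.2.1 w hw
        · rw [List.mem_singleton.1 hw]
          simp [hv]; omega
      · show List.IsChain _ _
        rw [List.append_assoc, List.singleton_append, List.isChain_split]
        exact ⟨h.2.2.2, by simpa using hx⟩
    ext p
    simp only [Finset.mem_union, Finset.mem_image, mem_PS]
    constructor
    · intro h
      obtain ⟨p', rfl⟩ := path_form' h
      rcases List.eq_nil_or_concat p' with rfl | ⟨p', x, rfl⟩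
      · exact absurd (by simpa using h.1.symm) huv
      · rw [List.concat_eq_append] at *
        have hc : List.IsChain GridStep _ := h.2.2.2
        rw [List.append_assoc, List.singleton_append, List.isChain_split] at hc
        have hx : IsGridPath m n u x (p' ++ [x]) := by
          refine ⟨?_, by simp, fun w hw => h.2.2.1 w (List.mem_append_left _ hw), hc.1⟩
          have := h.1
          cases p' <;> simpa using this
        have hs : GridStep x v := by simpa using hc.2
        have hxx : x = (a, b + 1) ∨ x = (a + 1, b) := by
          rcases hs with hs | hs
          · left
            rw [hv, Prod.mk.injEq] at hs
            ext <;> simp <;> omega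
          · right
            rw [hv, Prod.mk.injEq] at hs
            ext <;> simp <;> omega
        rcases hxx with rfl | rfl
        · exact Or.inl ⟨_, hx, rfl⟩
        · exact Or.inr ⟨_, hx, rfl⟩
    · rintro (⟨p', h, rfl⟩ | ⟨p', h, rfl⟩)
      · exact back _ _ (Or.inl rfl) h
      · exact back _ _ (Or.inr rfl) h
  have hdis : Disjoint ((PS m n u (a, b + 1)).image (fun p => p ++ [v]))
      ((PS m n u (a + 1, b)).image (fun p => p ++ [v])) := by
    rw [Finset.disjoint_left]
    intro p hp hq
    simp only [Finset.mem_image, mem_PS] at hp hq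
    obtain ⟨p', h, rfl⟩ := hp
    obtain ⟨q', g, e⟩ := hq
    have : q' = p' := by simpa using e
    subst this
    have := h.2.1.symm.trans g.2.1
    simp at this
  have hw : ∀ x, ∑ p ∈ (PS m n u x).image (fun p => p ++ [v]), pathEdgeWeight ω p =
      ω x v * AW m n ω u x := by
    intro x
    rw [Finset.sum_image (by intro a _ b _ h; simpa using h), AW, Finset.mul_sum]
    apply Finset.sum_congr rfl
    intro p hp
    obtain ⟨p', rfl⟩ := path_form' (mem_PS.1 hp)
    rw [List.append_assoc, List.singleton_append, pw_split]
    simp [pathEdgeWeight, mul_comm]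
  rw [← hw, ← hw, ← Finset.sum_union hdis, ← hPS, AW]

theorem NCTuple.ext' {m n src tgt} {R S : NCTuple m n src tgt} (h : R.path = S.path) : R = S := by
  cases R; cases S; cases h; rfl

open Classical in
noncomputable def ncEquiv (m n r : ℕ) (s t : Fin r → ℕ × ℕ) :
    NCTuple m n (List.ofFn s) (List.ofFn t) ≃
    {P // P ∈ (Fintype.piFinset fun i => PS m n (s i) (t i)).filter (fun P => ¬ Bad P)} where
  toFun R := ⟨fun i => R.path.getD i [], by
    have hl : R.path.length = r := by simpa using R.hlen
    simp only [Finset.mem_filter, Fintype.mem_piFinset, mem_PS]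
    refine ⟨fun i => ?_, ?_⟩
    · have := R.valid i (by omega)
      simpa [List.getD_eq_getElem?_getD] using this
    · rintro ⟨d, ⟨i, j⟩, hij, v, h1, h2, h3⟩
      exact R.disj i j (by omega) (by omega) (fun h => hij (Fin.ext h)) v h1 h2⟩
  invFun P :=
    { path := List.ofFn P.1
      hlen := by simp
      hlen' := by simp
      valid := by
        intro l hl
        have h := P.2
        simp only [Finset.mem_filter, Fintype.mem_piFinset, mem_PS] at h
        have hl' : l < r := by simpa using hl
        simpa [List.getD_eq_getElem?_getD, hl'] using h.1 ⟨l, hl'⟩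
      disj := by
        intro l l' hl hl' hne v h1 h2
        have h := P.2
        simp only [Finset.mem_filter, Fintype.mem_piFinset, mem_PS] at h
        have hl : l < r := by simpa using hl
        have hl' : l' < r := by simpa using hl'
        simp only [List.getD_eq_getElem?_getD, List.getElem?_ofFn, hl, hl', dite_true,
          Option.getD_some] at h1 h2
        exact h.2 ⟨lev v, (⟨l, hl⟩, ⟨l', hl'⟩), by simpa using hne, v, h1, h2, rfl⟩ }
  left_inv R := by
    apply NCTuple.ext'
    have hl : R.path.length = r := by simpa using R.hlen
    apply List.ext_getElem
    · simp [hl]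
    · intro i h1 h2
      simp [List.getD_eq_getElem?_getD, h2]
  right_inv P := by
    apply Subtype.ext
    funext i
    simp [List.getD_eq_getElem?_getD]

theorem nc_sum {m n r : ℕ} (ω : ℕ × ℕ → ℕ × ℕ → ℝ) (s t : Fin r → ℕ × ℕ)
    (hpl : ∀ i j, i < j → ∀ a b, a < b → ∀ p q, IsGridPath m n (s i) (t b) p →
      IsGridPath m n (s j) (t a) q → ∃ v ∈ p, v ∈ q)
    [Fintype (NCTuple m n (List.ofFn s) (List.ofFn t))] :
    ∑ R : NCTuple m n (List.ofFn s) (List.ofFn t), tupleEdgeWeight ω R.path =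
    (Matrix.of fun i j => AW m n ω (s i) (t j)).det := by
  classical
  rw [LGV ω s t hpl, ← Finset.sum_coe_sort (Finset.filter _ _), ← Equiv.sum_comp (ncEquiv m n r s t).symm]
  apply Finset.sum_congr rfl
  intro P _
  simp [ncEquiv, tupleEdgeWeight, List.map_ofFn, List.prod_ofFn]

theorem sort_eq {α : Type*} {r : ℕ} (S : Finset ℕ) (a : Fin r → ℕ) (f : ℕ → α) (ha : StrictMono a)
    (h : ∀ i, a i ∈ S) (hS : S.card = r) :
    (S.sort (· ≤ ·)).map f = List.ofFn (fun i => f (a i)) := by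
  rw [Finset.orderEmbOfFin_unique hS h ha]
  apply List.ext_getElem
  · simp [hS]
  · intro i h1 h2
    simp [Finset.orderEmbOfFin_apply]

theorem pat_eq (m n k r : ℕ) (hm : k < m) (hn : k < n) (hk : k = r + 1) (ω) (I J : Finset ℕ)
    (hI : I ⊆ Finset.Icc 1 (2 * k - 1)) (hJ : J ⊆ Finset.Icc 1 (2 * k - 1))
    (hIcard : I.card = r) (hJcard : J.card = r)
    (a c : Fin r → ℕ) (b d : Fin (r + 1) → ℕ)
    (ha : StrictMono a) (hb : StrictMono b) (hc : StrictMono c) (hd : StrictMono d)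
    (ha' : ∀ i, a i ∈ I) (hb' : ∀ i, b i ∈ Finset.Icc 1 (2 * k - 1) \ I)
    (hc' : ∀ i, c i ∈ J) (hd' : ∀ i, d i ∈ Finset.Icc 1 (2 * k - 1) \ J) :
    patWeight m n k ω I J =
      (Matrix.of fun i j => AW m n ω (gridSource k (a i)) (gridSink m n k (c j))).det *
      (Matrix.of fun i j => AW m n ω (gridSource k (b i)) (gridSink m n k (d j))).det := by
  have hIc : (Finset.Icc 1 (2 * k - 1) \ I).card = r + 1 := by
    rw [Finset.card_sdiff_of_subset hI]; simp; omega
  have hJc : (Finset.Icc 1 (2 * k - 1) \ J).card = r + 1 := by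
    rw [Finset.card_sdiff_of_subset hJ]; simp; omega
  unfold patWeight
  rw [sort_eq I a _ ha ha' hIcard, sort_eq J c _ hc hc' hJcard, sort_eq _ b _ hb hb' hIc,
    sort_eq _ d _ hd hd' hJc]
  haveI : Fintype (NCTuple m n (List.ofFn fun i => gridSource k (a i))
    (List.ofFn fun i => gridSink m n k (c i))) := Fintype.ofEquiv _ (ncEquiv _ _ _ _ _).symm
  haveI : Fintype (NCTuple m n (List.ofFn fun i => gridSource k (b i))
    (List.ofFn fun i => gridSink m n k (d i))) := Fintype.ofEquiv _ (ncEquiv _ _ _ _ _).symm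
  rw [finsum_eq_sum_of_fintype, Fintype.sum_prod_type]
  dsimp only
  rw [← Finset.sum_mul_sum, nc_sum, nc_sum]
  · exact planar hm hn b d hb hd (fun i => (Finset.mem_sdiff.1 (hb' i)).1)
      (fun i => (Finset.mem_sdiff.1 (hd' i)).1)
  · exact planar hm hn a c ha hc (fun i => hI (ha' i)) (fun i => hJ (hc' i))

theorem B_row (m n k : ℕ) (hm : k < m) (hn : k < n) (ω) (q : ℕ) (h1 : 1 ≤ q) (h2 : q < k) :
    ∃ x y : ℝ, ∀ j ∈ Finset.Icc 1 (2 * k - 1),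
      AW m n ω (gridSource k (2 * q)) (gridSink m n k j) =
        x * AW m n ω (gridSource k (2 * q - 1)) (gridSink m n k j) +
        y * AW m n ω (gridSource k (2 * q + 1)) (gridSink m n k j) := by
  have e0 : gridSource k (2 * q) = (k - q, q) := by
    unfold gridSource; rw [if_neg (by omega)]; ext <;> simp
  have e1 : gridSource k (2 * q - 1) = (k - q + 1, q) := by
    unfold gridSource; rw [if_pos (by omega)]; ext <;> simp <;> omega
  have e2 : gridSource k (2 * q + 1) = (k - q, q + 1) := by
    unfold gridSource; rw [if_pos (by omega)]; ext <;> simp <;> omega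
  refine ⟨ω (k - q, q) (k - q + 1, q), ω (k - q, q) (k - q, q + 1), fun j hj => ?_⟩
  have hs := sink_facts hm hn hj
  rw [e0, e1, e2]
  apply AW_row
  · simp only; omega
  · intro h; rw [← h] at hs; simp only [lev] at hs; omega

theorem B_col (m n k : ℕ) (hm : k < m) (hn : k < n) (ω) (q : ℕ) (h1 : 1 ≤ q) (h2 : q + 1 < k) :
    ∃ x y : ℝ, ∀ i ∈ Finset.Icc 1 (2 * k - 1),
      AW m n ω (gridSource k i) (gridSink m n k (2 * q + 1)) =
        x * AW m n ω (gridSource k i) (gridSink m n k (2 * q + 2)) +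
        y * AW m n ω (gridSource k i) (gridSink m n k (2 * q)) := by
  have e0 : gridSink m n k (2 * q + 1) = (m - q - 1 + 1, n - k + q + 1) := by
    unfold gridSink; rw [if_pos (by omega)]; ext <;> simp <;> omega
  have e1 : gridSink m n k (2 * q + 2) = (m - q - 1, n - k + q + 1) := by
    unfold gridSink; rw [if_neg (by omega)]; ext <;> simp <;> omega
  have e2 : gridSink m n k (2 * q) = (m - q - 1 + 1, n - k + q) := by
    unfold gridSink; rw [if_neg (by omega)]; ext <;> simp <;> omega
  refine ⟨ω (m - q - 1, n - k + q + 1) (m - q - 1 + 1, n - k + q + 1),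
    ω (m - q - 1 + 1, n - k + q) (m - q - 1 + 1, n - k + q + 1), fun i hi => ?_⟩
  have hs := source_facts hi
  rw [e0, e1, e2]
  apply AW_col
  · omega
  · omega
  · intro h; rw [h] at hs; simp only [lev] at hs; omega

theorem B_factor (m n k r : ℕ) (hm : k < m) (hn : k < n) (hk : k = r + 1) (ω) (i : ℕ)
    (hi : i ∈ Finset.Icc 1 (2 * k - 1)) :
    ∃ L : Fin (r + 1) → ℝ, ∀ j ∈ Finset.Icc 1 (2 * k - 1),
      AW m n ω (gridSource k i) (gridSink m n k j) =
        ∑ l : Fin (r + 1), L l * AW m n ω (gridSource k (2 * l + 1)) (gridSink m n k j) := by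
  classical
  rw [Finset.mem_Icc] at hi
  rcases Nat.even_or_odd' i with ⟨q, rfl | rfl⟩
  · obtain ⟨x, y, h⟩ := B_row m n k hm hn ω q (by omega) (by omega)
    refine ⟨x • Pi.single ⟨q - 1, by omega⟩ 1 + y • Pi.single ⟨q, by omega⟩ 1, fun j hj => ?_⟩
    rw [h j hj]
    have hq : 2 * (q - 1) + 1 = 2 * q - 1 := by omega
    simp [add_mul, Finset.sum_add_distrib, mul_assoc, ← Finset.mul_sum, Pi.single_apply, hq]
  · refine ⟨Pi.single ⟨q, by omega⟩ 1, fun j hj => ?_⟩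
    simp [Pi.single_apply]

theorem stmt_2 (m n k : ℕ) (hm : 3 ≤ m) (hn : 3 ≤ n) (hk : 2 ≤ k) (hkm : k < m) (hkn : k < n)
    (ω : ℕ × ℕ → ℕ × ℕ → ℝ) (hω : ∀ u v, 0 < ω u v)
    (I J : Finset ℕ) (hI : I ⊆ Finset.Icc 1 (2 * k - 1)) (hJ : J ⊆ Finset.Icc 1 (2 * k - 1))
    (hIcard : I.card = k - 1) (hJcard : J.card = k - 1)
    (h1 : 1 ∉ J) (h2 : 2 * k - 1 ∉ J) :
    patWeight m n k ω I J =
      patWeight m n k ω I (Finset.Icc 2 (2 * k - 1) \ J) +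
      patWeight m n k ω I (Finset.Icc 1 (2 * k - 2) \ J) := by
  obtain ⟨r, hr⟩ : ∃ r, k = r + 1 := ⟨k - 1, by omega⟩
  have hIr : I.card = r := by omega
  have hJr : J.card = r := by omega
  have hIc : (Finset.Icc 1 (2 * k - 1) \ I).card = r + 1 := by
    rw [Finset.card_sdiff_of_subset hI]; simp; omega
  have hJc : (Finset.Icc 1 (2 * k - 1) \ J).card = r + 1 := by
    rw [Finset.card_sdiff_of_subset hJ]; simp; omega
  -- enumerations
  obtain ⟨a, ha, ha'⟩ : ∃ a : Fin r → ℕ, StrictMono a ∧ ∀ i, a i ∈ I :=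
    ⟨I.orderEmbOfFin hIr, (I.orderEmbOfFin hIr).strictMono, I.orderEmbOfFin_mem hIr⟩
  obtain ⟨c, hc, hc'⟩ : ∃ a : Fin r → ℕ, StrictMono a ∧ ∀ i, a i ∈ J :=
    ⟨J.orderEmbOfFin hJr, (J.orderEmbOfFin hJr).strictMono, J.orderEmbOfFin_mem hJr⟩
  obtain ⟨b, hb, hb'⟩ : ∃ a : Fin (r + 1) → ℕ, StrictMono a ∧
      ∀ i, a i ∈ Finset.Icc 1 (2 * k - 1) \ I :=
    ⟨_, (Finset.orderEmbOfFin _ hIc).strictMono, Finset.orderEmbOfFin_mem _ hIc⟩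
  obtain ⟨d, hd, hd', hdr⟩ : ∃ a : Fin (r + 1) → ℕ, StrictMono a ∧
      (∀ i, a i ∈ Finset.Icc 1 (2 * k - 1) \ J) ∧
      ∀ x ∈ Finset.Icc 1 (2 * k - 1) \ J, ∃ i, a i = x :=
    ⟨_, (Finset.orderEmbOfFin _ hJc).strictMono, Finset.orderEmbOfFin_mem _ hJc, by
      intro x hx
      have := Finset.range_orderEmbOfFin _ hJc
      have hx' : x ∈ Set.range (Finset.orderEmbOfFin _ hJc) := by rw [this]; exact hx
      exact hx'⟩
  have haI : ∀ i, a i ∈ Finset.Icc 1 (2 * k - 1) := fun i => hI (ha' i)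
  have hcI : ∀ i, 2 ≤ c i ∧ c i ≤ 2 * k - 2 := by
    intro i
    have := Finset.mem_Icc.1 (hJ (hc' i))
    have n1 : c i ≠ 1 := fun h => h1 (h ▸ hc' i)
    have n2 : c i ≠ 2 * k - 1 := fun h => h2 (h ▸ hc' i)
    omega
  have hbI : ∀ i, b i ∈ Finset.Icc 1 (2 * k - 1) := fun i => (Finset.mem_sdiff.1 (hb' i)).1
  have hdI : ∀ i, 1 ≤ d i ∧ d i ≤ 2 * k - 1 :=
    fun i => Finset.mem_Icc.1 (Finset.mem_sdiff.1 (hd' i)).1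
  have hdJ : ∀ i, d i ∉ J := fun i => (Finset.mem_sdiff.1 (hd' i)).2
  have hd0 : d 0 = 1 := by
    obtain ⟨i, hi⟩ := hdr 1 (by simp [h1]; omega)
    have := hd.monotone (Fin.zero_le i)
    have := hdI 0
    omega
  have hdl : d (Fin.last r) = 2 * k - 1 := by
    obtain ⟨i, hi⟩ := hdr (2 * k - 1) (by simp [h2]; omega)
    have := hd.monotone (Fin.le_last i)
    have := hdI (Fin.last r)
    omega
  have hdpos : ∀ j : Fin r, 2 ≤ d j.succ := by
    intro j
    have := hd (Fin.succ_pos j); omega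
  have hdlt : ∀ j : Fin r, d j.castSucc ≤ 2 * k - 2 := by
    intro j
    have := hd (Fin.castSucc_lt_last j); omega
  -- the three weights as products of determinants
  have w1 := pat_eq m n k r hkm hkn hr ω I J hI hJ hIr hJr a c b d ha hb hc hd ha' hb' hc' hd'
  have w2 := pat_eq m n k r hkm hkn hr ω I (Finset.Icc 2 (2 * k - 1) \ J) hI
    (fun x hx => by simp at hx ⊢; omega) hIr
    (by rw [Finset.card_sdiff_of_subset]
        · simp; omega
        · intro x hx
          have := Finset.mem_Icc.1 (hJ hx)
          have n1 : x ≠ 1 := fun h => h1 (h ▸ hx)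
          rw [Finset.mem_Icc]; omega)
    a (fun j => d j.succ) b (Fin.cons (d 0) c) ha hb
    (fun i j hij => hd (Fin.succ_lt_succ_iff.2 hij))
    (by
      intro i j
      refine Fin.cases ?_ (fun i => ?_) i <;> refine Fin.cases ?_ (fun j => ?_) j
      · simp
      · intro _
        have := hcI j
        simp; omega
      · simp
      · intro h
        simpa using hc (Fin.succ_lt_succ_iff.1 h))
    ha' hb'
    (fun j => by
      have := hdpos j
      have := hdI j.succ
      simp [hdJ]; omega)
    (by
      intro j
      refine Fin.cases ?_ (fun j => ?_) j
      · simp [hd0]; omega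
      · have := hcI j
        simp [hc' j]; omega)
  have w3 := pat_eq m n k r hkm hkn hr ω I (Finset.Icc 1 (2 * k - 2) \ J) hI
    (fun x hx => by simp at hx ⊢; omega) hIr
    (by rw [Finset.card_sdiff_of_subset]
        · simp; omega
        · intro x hx
          have := Finset.mem_Icc.1 (hJ hx)
          have n1 : x ≠ 2 * k - 1 := fun h => h2 (h ▸ hx)
          rw [Finset.mem_Icc]; omega)
    a (fun j => d j.castSucc) b (Fin.snoc c (d (Fin.last r))) ha hb
    (fun i j hij => hd (Fin.castSucc_lt_castSucc_iff.2 hij))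
    (by
      intro i j
      refine Fin.lastCases ?_ (fun i => ?_) i <;> refine Fin.lastCases ?_ (fun j => ?_) j
      · simp
      · intro h
        exact absurd h (not_lt.2 (Fin.le_last _))
      · intro _
        have := hcI i
        simp; omega
      · intro h
        simpa using hc (Fin.castSucc_lt_castSucc_iff.1 h))
    ha' hb'
    (fun j => by
      have := hdlt j
      have := hdI j.castSucc
      simp [hdJ]; omega)
    (by
      intro j
      refine Fin.lastCases ?_ (fun j => ?_) j
      · simp [hdl]; omega
      · have := hcI j
        simp [hc' j]; omega)
  rw [w1, w2, w3]
  -- linear algebra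
  have hfac := fun i hi => B_factor m n k r hkm hkn hr ω i hi
  choose! L hL using hfac
  set B : ℕ → ℕ → ℝ := fun i j => if j ∈ Finset.Icc 1 (2 * k - 1) then
    AW m n ω (gridSource k i) (gridSink m n k j) else 0 with hB
  obtain ⟨x, hx, hx0⟩ := exists_ker (Matrix.of fun (q : Fin r) (l : Fin (r + 1)) =>
    B (2 * l + 1) (2 * q + 2))
  have hEven : ∀ q, q < r → ∑ l : Fin (r + 1), x l * B (2 * l + 1) (2 * q + 2) = 0 := by
    intro q hq
    have := congrFun hx0 ⟨q, hq⟩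
    simpa [Matrix.mulVec, dotProduct, mul_comm] using this
  have hInt : ∀ j, 2 ≤ j → j ≤ 2 * k - 2 → ∑ l : Fin (r + 1), x l * B (2 * l + 1) j = 0 := by
    intro j hj1 hj2
    rcases Nat.even_or_odd' j with ⟨q, rfl | rfl⟩
    · have := hEven (q - 1) (by omega)
      rwa [show 2 * (q - 1) + 2 = 2 * q by omega] at this
    · obtain ⟨y, z, h⟩ := B_col m n k hkm hkn ω q (by omega) (by omega)
      have g1 := hEven q (by omega)
      have g2 := hEven (q - 1) (by omega)
      rw [show 2 * (q - 1) + 2 = 2 * q by omega] at g2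
      have : ∀ l : Fin (r + 1), x l * B (2 * l + 1) (2 * q + 1) =
          y * (x l * B (2 * l + 1) (2 * q + 2)) + z * (x l * B (2 * l + 1) (2 * q)) := by
        intro l
        have hl := l.2
        simp only [hB]
        rw [if_pos (by rw [Finset.mem_Icc]; omega), if_pos (by rw [Finset.mem_Icc]; omega),
          if_pos (by rw [Finset.mem_Icc]; omega), h _ (by rw [Finset.mem_Icc]; omega)]
        ring
      simp only [this]
      rw [Finset.sum_add_distrib, ← Finset.mul_sum, ← Finset.mul_sum, g1, g2]
      ring
  have hBL : ∀ i ∈ Finset.Icc 1 (2 * k - 1), ∀ j, B i j =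
      ∑ l, L i l * B (2 * (l : Fin (r + 1)) + 1) j := by
    intro i hi j
    by_cases hj : j ∈ Finset.Icc 1 (2 * k - 1)
    · simp only [hB, if_pos hj]
      exact hL i hi j hj
    · simp only [hB, if_neg hj]; simp
  have key := LA2 (r := r) (by omega) (fun l j => B (2 * l + 1) j) L B a b c d
    (fun i j => hBL _ (haI i) j) (fun i j => hBL _ (hbI i) j) x hx
    (fun j => hInt _ (hcI j).1 (hcI j).2)
    (fun j h0 hl => by
      obtain ⟨j', rfl⟩ := Fin.exists_succ_eq.2 h0
      obtain ⟨j'', h⟩ := Fin.exists_castSucc_eq.2 hl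
      refine hInt _ (hdpos j') ?_
      rw [← h]; exact hdlt j'')
  have hBe : ∀ i j, 1 ≤ j → j ≤ 2 * k - 1 →
      B i j = AW m n ω (gridSource k i) (gridSink m n k j) := by
    intro i j h1 h2
    simp only [hB]; rw [if_pos (Finset.mem_Icc.2 ⟨h1, h2⟩)]
  have hcons : ∀ j, 1 ≤ (Fin.cons (d 0) c : Fin (r + 1) → ℕ) j ∧
      (Fin.cons (d 0) c : Fin (r + 1) → ℕ) j ≤ 2 * k - 1 := by
    intro j
    refine Fin.cases ?_ (fun j => ?_) j
    · simpa using hdI 0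
    · have := hcI j
      simp only [Fin.cons_succ]; omega
  have hsnoc : ∀ j, 1 ≤ (Fin.snoc c (d (Fin.last r)) : Fin (r + 1) → ℕ) j ∧
      (Fin.snoc c (d (Fin.last r)) : Fin (r + 1) → ℕ) j ≤ 2 * k - 1 := by
    intro j
    refine Fin.lastCases ?_ (fun j => ?_) j
    · simpa using hdI (Fin.last r)
    · have := hcI j
      simp only [Fin.snoc_castSucc]; omega
  have hce : ∀ i j, B i (c j) = AW m n ω (gridSource k i) (gridSink m n k (c j)) :=
    fun i j => hBe _ _ (by have := hcI j; omega) (by have := hcI j; omega)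
  have hde : ∀ i j, B i (d j) = AW m n ω (gridSource k i) (gridSink m n k (d j)) :=
    fun i j => hBe _ _ (hdI j).1 (hdI j).2
  simp only [hce, hde, fun i j => hBe i _ (hcons j).1 (hcons j).2,
    fun i j => hBe i _ (hsnoc j).1 (hsnoc j).2] at key
  exact key
end

section
/- Fix integers m, n ≥ 3, 2 ≤ k < min(m,n), and any positive real edge weights ω on the grid Γ. Fix I ⊆ {1,…,2k−1} with |I| = k−1, fix K ⊆ {2,4,…,2k−2}, and set K′ := {2,4,…,2k−2} ∖ K. Then the sum of wt(I,J) over all (k−1)-element subsets J ⊆ {1,…,2k−1} whose set of even elements equals K is equal to the sum of wt(I,J′) over all (k−1)-element subsets J′ ⊆ {1,…,2k−1} whose set of even elements equals K′. -/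
namespace LGV

def lev (v : ℕ × ℕ) : ℕ := v.1 + v.2

def InG (m n : ℕ) (v : ℕ × ℕ) : Prop := 1 ≤ v.1 ∧ v.1 ≤ m ∧ 1 ≤ v.2 ∧ v.2 ≤ n

theorem path_cons {m n : ℕ} {s t a : ℕ × ℕ} {p : List (ℕ × ℕ)} :
    IsGridPath m n s t (a :: p) ↔ a = s ∧ InG m n s ∧
      ((p = [] ∧ s = t) ∨ ∃ u, GridStep s u ∧ IsGridPath m n u t p) := by
  unfold IsGridPath InG
  cases p with
  | nil => simp [List.Chain']; grind
  | cons b q => 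
    simp only [List.head?_cons, Option.some.injEq, List.getLast?_cons_cons, List.mem_cons,
      List.Chain', List.isChain_cons_cons]
    constructor
    · rintro ⟨rfl, h1, h2, h3, h4⟩
      exact ⟨rfl, h2 a (Or.inl rfl), Or.inr ⟨b, h3, rfl, h1, fun v hv => h2 v (Or.inr hv), h4⟩⟩
    · rintro ⟨rfl, h1, h2 | ⟨u, h3, rfl, h4, h5, h6⟩⟩
      · simp at h2
      · exact ⟨rfl, h4, by grind, h3, h6⟩

theorem path_snoc {m n : ℕ} {s t a : ℕ × ℕ} {p : List (ℕ × ℕ)} :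
    IsGridPath m n s t (p ++ [a]) ↔ a = t ∧ InG m n t ∧
      ((p = [] ∧ s = t) ∨ ∃ u, GridStep u t ∧ IsGridPath m n s u p) := by
  unfold IsGridPath InG
  rcases List.eq_nil_or_concat p with rfl | ⟨q, b, rfl⟩
  · simp [List.Chain']; grind
  · have : (q ++ [b] ++ [a]).head? = (q ++ [b]).head? := by cases q <;> simp
    rw [List.concat_eq_append, this]
    simp only [List.getLast?_append, List.getLast?_singleton, List.mem_append, List.mem_singleton,
      List.Chain', List.isChain_append, Option.some_or, Option.some.injEq, Option.mem_def,
      List.head?_cons, List.isChain_singleton]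
    constructor
    · rintro ⟨h0, rfl, h2, h3, h4, h5⟩
      exact ⟨rfl, h2 a (Or.inr rfl), Or.inr ⟨b, h5 b rfl a rfl, h0, rfl, 
        fun v hv => h2 v (Or.inl hv), h3⟩⟩
    · rintro ⟨rfl, h1, h2 | ⟨u, h3, h0, rfl, h5, h6⟩⟩
      · simp at h2
      · exact ⟨h0, rfl, by grind, h6, trivial, by grind⟩

theorem not_path_nil {m n : ℕ} {s t : ℕ × ℕ} : ¬ IsGridPath m n s t [] := by
  simp [IsGridPath]

theorem path_head_le {m n : ℕ} {t : ℕ × ℕ} {p : List (ℕ × ℕ)} : ∀ {s : ℕ × ℕ},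
    IsGridPath m n s t p → ∀ v ∈ p, v = s ∨ lev s < lev v := by
  induction p with
  | nil => simp
  | cons a p ih =>
    intro s h v hv
    rw [path_cons] at h
    obtain ⟨rfl, h1, h2 | ⟨u, h3, h4⟩⟩ := h
    · grind
    · have := ih h4
      unfold GridStep at h3
      unfold lev at *
      rcases List.mem_cons.1 hv with h | h
      · exact Or.inl h
      · right
        rcases this v h with rfl | h5 <;> rcases h3 with rfl | rfl <;> simp at * <;> omega

theorem path_last_le {m n : ℕ} {s : ℕ × ℕ} {p : List (ℕ × ℕ)} : ∀ {t : ℕ × ℕ},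
    IsGridPath m n s t p → ∀ v ∈ p, v = t ∨ lev v < lev t := by
  induction p using List.reverseRecOn with
  | nil => simp
  | append_singleton p a ih =>
    intro s h v hv
    rw [path_snoc] at h
    obtain ⟨rfl, h1, h2 | ⟨u, h3, h4⟩⟩ := h
    · grind
    · have := ih h4
      unfold GridStep at h3
      unfold lev at *
      rcases List.mem_append.1 hv with h | h
      · right
        rcases this v h with rfl | h5 <;> rcases h3 with rfl | rfl <;> simp at * <;> omega
      · exact Or.inl (by simpa using h)

theorem path_head_mem {m n : ℕ} {s t : ℕ × ℕ} {p : List (ℕ × ℕ)} (h : IsGridPath m n s t p) :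
    s ∈ p := List.mem_of_head? h.1

theorem path_last_mem {m n : ℕ} {s t : ℕ × ℕ} {p : List (ℕ × ℕ)} (h : IsGridPath m n s t p) :
    t ∈ p := List.mem_of_getLast? h.2.1

theorem path_finite (m n : ℕ) (s : ℕ × ℕ) (N : ℕ) : ∀ t, lev t = N →
    {p | IsGridPath m n s t p}.Finite := by
  induction N with
  | zero =>
    intro t ht
    convert Set.finite_empty
    ext p
    simp only [Set.mem_ofPred_eq, Set.mem_empty_iff_false, iff_false]
    intro h
    have := h.2.2.1 t (path_last_mem h)
    unfold lev at ht
    omega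
  | succ N ih =>
    intro t ht
    have key : ∀ u, GridStep u t → {p | IsGridPath m n s u p}.Finite := by
      intro u hu
      apply ih
      unfold lev at *
      rcases hu with rfl | rfl <;> simp at * <;> omega
    have hs : {u | GridStep u t}.Finite := by
      apply Set.Finite.subset (Set.toFinite {(t.1 - 1, t.2), (t.1, t.2 - 1)})
      rintro u (rfl | rfl) <;> simp
    refine Set.Finite.subset (((hs.biUnion key).image (fun p => p ++ [t])).union
      (Set.finite_singleton [t])) ?_
    intro p hp
    rcases List.eq_nil_or_concat p with rfl | ⟨q, b, rfl⟩
    · exact absurd hp not_path_nil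
    · simp only [List.concat_eq_append, Set.mem_ofPred_eq, path_snoc] at hp ⊢
      obtain ⟨rfl, h1, ⟨rfl, h2⟩ | ⟨u, h3, h4⟩⟩ := hp
      · right; simp
      · left
        refine ⟨q, ?_, rfl⟩
        simp only [Set.mem_iUnion]
        exact ⟨u, h3, h4⟩

theorem weight_singleton (ω : ℕ × ℕ → ℕ × ℕ → ℝ) (v : ℕ × ℕ) : pathEdgeWeight ω [v] = 1 := by
  simp [pathEdgeWeight]

theorem weight_cons {m n : ℕ} {u t v : ℕ × ℕ} {p : List (ℕ × ℕ)} (ω : ℕ × ℕ → ℕ × ℕ → ℝ)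
    (h : IsGridPath m n u t p) : pathEdgeWeight ω (v :: p) = ω v u * pathEdgeWeight ω p := by
  cases p with
  | nil => exact absurd h not_path_nil
  | cons a p =>
    rw [path_cons] at h
    obtain ⟨rfl, -⟩ := h
    simp [pathEdgeWeight]

theorem weight_snoc {m n : ℕ} {t v : ℕ × ℕ} {p : List (ℕ × ℕ)} (ω : ℕ × ℕ → ℕ × ℕ → ℝ) :
    ∀ {s : ℕ × ℕ}, IsGridPath m n s t p →
    pathEdgeWeight ω (p ++ [v]) = ω t v * pathEdgeWeight ω p := by
  induction p with
  | nil => intro s h; exact absurd h not_path_nil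
  | cons a p ih =>
    intro s h
    rw [path_cons] at h
    obtain ⟨rfl, h1, ⟨rfl, rfl⟩ | ⟨u, h3, h4⟩⟩ := h
    · simp [pathEdgeWeight]
    · rw [weight_cons ω h4]
      have h5 : ∃ t', IsGridPath m n u t' (p ++ [v]) ∨ (p ++ [v]).head? = some u := by
        refine ⟨u, Or.inr ?_⟩
        have := h4.1
        cases p <;> simp_all
      have h6 : pathEdgeWeight ω (a :: p ++ [v]) = ω a u * pathEdgeWeight ω (p ++ [v]) := by
        have := h4.1
        cases p with
        | nil => simp at this
        | cons b q => 
          simp at this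
          subst this
          simp [pathEdgeWeight]
      rw [h6, ih h4]
      ring

def NCg {r : ℕ} (P : Fin r → Set (List (ℕ × ℕ))) : Set (Fin r → List (ℕ × ℕ)) :=
  {p | (∀ i, p i ∈ P i) ∧ ∀ i j, i ≠ j → ∀ v ∈ p i, v ∉ p j}

noncomputable def Wg (ω : ℕ × ℕ → ℕ × ℕ → ℝ) {r : ℕ} (P : Fin r → Set (List (ℕ × ℕ))) : ℝ :=
  ∑ᶠ p ∈ NCg P, ∏ i, pathEdgeWeight ω (p i)

def paths (m n : ℕ) (s t : ℕ × ℕ) : Set (List (ℕ × ℕ)) := {p | IsGridPath m n s t p}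

noncomputable def W (m n : ℕ) (ω : ℕ × ℕ → ℕ × ℕ → ℝ) {r : ℕ} (s t : Fin r → ℕ × ℕ) : ℝ :=
  Wg ω (fun i => paths m n (s i) (t i))

theorem paths_finite (m n : ℕ) (s t : ℕ × ℕ) : (paths m n s t).Finite :=
  path_finite m n s _ t rfl

theorem NCg_finite {r : ℕ} {P : Fin r → Set (List (ℕ × ℕ))} (h : ∀ i, (P i).Finite) :
    (NCg P).Finite := by
  refine Set.Finite.subset (Set.Finite.pi' h) ?_
  intro p hp
  exact hp.1

theorem W_eq_zero {m n : ℕ} {ω : ℕ × ℕ → ℕ × ℕ → ℝ} {r : ℕ} {s t : Fin r → ℕ × ℕ}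
    (h : ∀ p, p ∉ NCg (fun i => paths m n (s i) (t i))) : W m n ω s t = 0 := by
  unfold W Wg
  rw [Set.eq_empty_of_forall_notMem h]
  simp

theorem Wg_step {r : ℕ} (ω : ℕ × ℕ → ℕ × ℕ → ℝ) (P : Fin r → Set (List (ℕ × ℕ))) (l : Fin r)
    (A B : Set (List (ℕ × ℕ))) (e : List (ℕ × ℕ) → List (ℕ × ℕ)) (v : ℕ × ℕ) (α β : ℝ)
    (he : Function.Injective e) (hmem : ∀ p x, x ∈ e p ↔ x ∈ p ∨ x = v)
    (hT : P l = e '' A ∪ e '' B) (hAB : Disjoint A B)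
    (hv : ∀ i, i ≠ l → ∀ p ∈ P i, v ∉ p)
    (hfin : ∀ i, (P i).Finite)
    (hα : ∀ p ∈ A, pathEdgeWeight ω (e p) = α * pathEdgeWeight ω p)
    (hβ : ∀ p ∈ B, pathEdgeWeight ω (e p) = β * pathEdgeWeight ω p) :
    Wg ω P = α * Wg ω (Function.update P l A) + β * Wg ω (Function.update P l B) := by
  classical
  let E : (Fin r → List (ℕ × ℕ)) → (Fin r → List (ℕ × ℕ)) := fun p => Function.update p l (e (p l))
  have hE : Function.Injective E := by
    intro p q h
    ext1 i
    have := congrFun h i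
    by_cases hi : i = l
    · subst hi
      simp only [E, Function.update_self] at this
      exact he this
    · simpa [E, hi] using this
  have hEi : ∀ p i, i ≠ l → E p i = p i := fun p i hi => by simp [E, hi]
  have hEl : ∀ p, E p l = e (p l) := fun p => by simp [E]
  have hsub : ∀ C : Set (List (ℕ × ℕ)), e '' C ⊆ P l → ∀ p, p ∈ NCg (Function.update P l C) →
      E p ∈ NCg P := by
    intro C hC p hp
    have hpl : p l ∈ C := by simpa using hp.1 l
    have hpi : ∀ i, i ≠ l → p i ∈ P i := fun i hi => by simpa [hi] using hp.1 i
    refine ⟨fun i => ?_, fun i j hij x hx hx' => ?_⟩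
    · by_cases hi : i = l
      · subst hi; rw [hEl]; exact hC ⟨_, hpl, rfl⟩
      · rw [hEi _ _ hi]; exact hpi i hi
    · by_cases hi : i = l
      · subst hi
        rw [hEl, hmem] at hx
        rw [hEi _ _ (Ne.symm hij)] at hx'
        rcases hx with hx | rfl
        · exact hp.2 _ _ hij x hx hx'
        · exact hv j (Ne.symm hij) _ (hpi _ (Ne.symm hij)) hx'
      · rw [hEi _ _ hi] at hx
        by_cases hj : j = l
        · subst hj
          rw [hEl, hmem] at hx'
          rcases hx' with hx' | rfl
          · exact hp.2 _ _ hij x hx hx'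
          · exact hv i hi _ (hpi _ hi) hx
        · rw [hEi _ _ hj] at hx'
          exact hp.2 _ _ hij x hx hx'
  have hunion : NCg P = E '' NCg (Function.update P l A) ∪ E '' NCg (Function.update P l B) := by
    apply Set.Subset.antisymm
    · intro p hp
      have key : ∀ C : Set (List (ℕ × ℕ)), ∀ q ∈ C, e q = p l →
          p ∈ E '' NCg (Function.update P l C) := by
        intro C q hq hqp
        have hpE : E (Function.update p l q) = p := by
          ext1 i
          by_cases hi : i = l
          · subst hi; rw [hEl]; simpa using hqp
          · rw [hEi _ _ hi]; simp [hi]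
        refine ⟨Function.update p l q, ⟨fun i => ?_, fun i j hij x hx hx' => ?_⟩, hpE⟩
        · by_cases hi : i = l
          · subst hi; simpa using hq
          · simpa [hi] using hp.1 i
        · have hs : ∀ i, x ∈ Function.update p l q i → x ∈ p i := by
            intro i h
            by_cases hi : i = l
            · subst hi
              rw [← hqp, hmem]
              left; simpa using h
            · simpa [hi] using h
          exact hp.2 i j hij x (hs _ hx) (hs _ hx')
      have := hp.1 l
      rw [hT] at this
      rcases this with ⟨q, hq, h⟩ | ⟨q, hq, h⟩
      · exact Or.inl (key A q hq h)
      · exact Or.inr (key B q hq h)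
    · rintro _ (⟨p, hp, rfl⟩ | ⟨p, hp, rfl⟩)
      · exact hsub A (by rw [hT]; exact Set.subset_union_left) p hp
      · exact hsub B (by rw [hT]; exact Set.subset_union_right) p hp
  have hdis : Disjoint (E '' NCg (Function.update P l A)) (E '' NCg (Function.update P l B)) := by
    rw [Set.disjoint_image_iff hE, Set.disjoint_left]
    intro p hp hq
    have h1 : p l ∈ A := by simpa using hp.1 l
    have h2 : p l ∈ B := by simpa using hq.1 l
    exact Set.disjoint_left.1 hAB h1 h2
  have hf := NCg_finite hfin
  rw [hunion] at hf
  have hw : ∀ p (γ : ℝ), pathEdgeWeight ω (e (p l)) = γ * pathEdgeWeight ω (p l) →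
      ∏ i, pathEdgeWeight ω (E p i) = γ * ∏ i, pathEdgeWeight ω (p i) := by
    intro p γ h
    rw [← Finset.mul_prod_erase _ _ (Finset.mem_univ l),
      ← Finset.mul_prod_erase _ (fun i => pathEdgeWeight ω (p i)) (Finset.mem_univ l), hEl, h,
      mul_assoc]
    congr 2
    apply Finset.prod_congr rfl
    intro i hi
    rw [hEi _ _ (Finset.ne_of_mem_erase hi)]
  have hfA := hf.subset Set.subset_union_left
  have hfB := hf.subset Set.subset_union_right
  unfold Wg
  rw [hunion, finsum_mem_union hdis hfA hfB, finsum_mem_image hE.injOn, finsum_mem_image hE.injOn,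
    mul_finsum_mem' _ _ (hfA.of_finite_image hE.injOn),
    mul_finsum_mem' _ _ (hfB.of_finite_image hE.injOn)]
  congr 1
  · apply finsum_mem_congr rfl
    intro p hp
    exact hw p α (hα _ (by simpa using hp.1 l))
  · apply finsum_mem_congr rfl
    intro p hp
    exact hw p β (hβ _ (by simpa using hp.1 l))

end LGV

namespace LGV

theorem paths_update {r : ℕ} (m n : ℕ) (s t : Fin r → ℕ × ℕ) (l : Fin r) (u : ℕ × ℕ) :
    (fun i => paths m n (s i) (Function.update t l u i)) =
      Function.update (fun i => paths m n (s i) (t i)) l (paths m n (s l) u) := by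
  funext i
  by_cases hi : i = l
  · subst hi; simp
  · simp [hi]

theorem paths_update' {r : ℕ} (m n : ℕ) (s t : Fin r → ℕ × ℕ) (l : Fin r) (u : ℕ × ℕ) :
    (fun i => paths m n (Function.update s l u i) (t i)) =
      Function.update (fun i => paths m n (s i) (t i)) l (paths m n u (t l)) := by
  funext i
  by_cases hi : i = l
  · subst hi; simp
  · simp [hi]

theorem W_step_tgt {r : ℕ} (m n : ℕ) (ω : ℕ × ℕ → ℕ × ℕ → ℝ) (s t : Fin r → ℕ × ℕ) (l : Fin r)
    (hv : InG m n (t l)) (hs : s l ≠ t l) (hmax : ∀ i, lev (t i) ≤ lev (t l))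
    (hinj : ∀ i, i ≠ l → t i ≠ t l) :
    W m n ω s t =
      ω ((t l).1 - 1, (t l).2) (t l) * W m n ω s (Function.update t l ((t l).1 - 1, (t l).2)) +
      ω ((t l).1, (t l).2 - 1) (t l) * W m n ω s (Function.update t l ((t l).1, (t l).2 - 1)) := by
  unfold W
  rw [paths_update, paths_update]
  have hstep : ∀ u, GridStep u (t l) ↔ u = ((t l).1 - 1, (t l).2) ∨ u = ((t l).1, (t l).2 - 1) := by
    unfold InG at hv
    rintro ⟨a, b⟩
    rcases h : t l with ⟨c, d⟩
    rw [h] at hv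
    simp only [GridStep, Prod.mk.injEq] at *
    omega
  apply Wg_step ω _ l _ _ (fun p => p ++ [t l]) (t l)
  · intro p q h; simpa using h
  · simp
  · ext p
    rcases List.eq_nil_or_concat p with rfl | ⟨q, b, rfl⟩
    · simp [paths, not_path_nil]
    · simp only [List.concat_eq_append, paths, Set.mem_ofPred_eq, path_snoc, Set.mem_union,
        Set.mem_image]
      constructor
      · rintro ⟨rfl, h1, ⟨h2, h3⟩ | ⟨u, h3, h4⟩⟩
        · exact absurd h3 hs
        · rcases (hstep u).1 h3 with rfl | rfl
          · exact Or.inl ⟨q, h4, rfl⟩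
          · exact Or.inr ⟨q, h4, rfl⟩
      · rintro (⟨x, hx, h⟩ | ⟨x, hx, h⟩)
        · obtain ⟨rfl, h'⟩ := List.append_inj' h rfl
          exact ⟨by simpa using h'.symm, hv, Or.inr ⟨_, (hstep _).2 (Or.inl rfl), hx⟩⟩
        · obtain ⟨rfl, h'⟩ := List.append_inj' h rfl
          exact ⟨by simpa using h'.symm, hv, Or.inr ⟨_, (hstep _).2 (Or.inr rfl), hx⟩⟩
  · rw [Set.disjoint_left]
    intro p hp hq
    have h1 := hp.2.1
    have h2 := hq.2.1
    rw [h1] at h2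
    unfold InG at hv
    simp only [Option.some.injEq, Prod.mk.injEq] at h2
    omega
  · intro i hi p hp hvp
    rcases path_last_le hp _ hvp with h | h
    · exact hinj i hi h.symm
    · have := hmax i
      omega
  · intro i; exact paths_finite _ _ _ _
  · intro p hp; exact weight_snoc ω hp
  · intro p hp; exact weight_snoc ω hp

theorem W_step_src {r : ℕ} (m n : ℕ) (ω : ℕ × ℕ → ℕ × ℕ → ℝ) (s t : Fin r → ℕ × ℕ) (l : Fin r)
    (hv : InG m n (s l)) (hs : s l ≠ t l) (hmin : ∀ i, lev (s l) ≤ lev (s i))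
    (hinj : ∀ i, i ≠ l → s i ≠ s l) :
    W m n ω s t =
      ω (s l) ((s l).1 + 1, (s l).2) * W m n ω (Function.update s l ((s l).1 + 1, (s l).2)) t +
      ω (s l) ((s l).1, (s l).2 + 1) * W m n ω (Function.update s l ((s l).1, (s l).2 + 1)) t := by
  unfold W
  rw [paths_update', paths_update']
  apply Wg_step ω _ l _ _ (fun p => s l :: p) (s l)
  · intro p q h; simpa using h
  · intro p x; simp [or_comm]
  · ext p
    rcases p with - | ⟨b, q⟩
    · simp [paths, not_path_nil]
    · simp only [paths, Set.mem_ofPred_eq, path_cons, Set.mem_union, Set.mem_image, List.cons.injEq]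
      constructor
      · rintro ⟨rfl, h1, ⟨h2, h3⟩ | ⟨u, h3 | h3, h4⟩⟩
        · exact absurd h3 hs
        · subst h3
          exact Or.inl ⟨q, h4, rfl, rfl⟩
        · subst h3
          exact Or.inr ⟨q, h4, rfl, rfl⟩
      · rintro (⟨x, hx, h, rfl⟩ | ⟨x, hx, h, rfl⟩)
        · exact ⟨h.symm, hv, Or.inr ⟨_, Or.inl rfl, hx⟩⟩
        · exact ⟨h.symm, hv, Or.inr ⟨_, Or.inr rfl, hx⟩⟩
  · rw [Set.disjoint_left]
    intro p hp hq
    have h1 := hp.1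
    have h2 := hq.1
    rw [h1] at h2
    simp only [Option.some.injEq, Prod.mk.injEq] at h2
    omega
  · intro i hi p hp hvp
    rcases path_head_le hp _ hvp with h | h
    · exact hinj i hi h.symm
    · have := hmin i
      omega
  · intro i; exact paths_finite _ _ _ _
  · intro p hp; exact weight_cons ω hp
  · intro p hp; exact weight_cons ω hp

/-- strictly increasing contents -/
def Srt {r : ℕ} (t : Fin r → ℕ × ℕ) : Prop :=
  ∀ i j, i < j → (t i).2 + (t j).1 < (t j).2 + (t i).1

theorem Srt.inj {r : ℕ} {t : Fin r → ℕ × ℕ} (h : Srt t) {i j : Fin r} (hij : i ≠ j) :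
    t i ≠ t j := by
  intro he
  rcases lt_or_gt_of_ne hij with h1 | h1
  · have := h _ _ h1; rw [he] at this; omega
  · have := h _ _ h1; rw [he] at this; omega

theorem W_zero_of_tgt {r : ℕ} (m n : ℕ) (ω : ℕ × ℕ → ℕ × ℕ → ℝ) (s t : Fin r → ℕ × ℕ) {i j : Fin r}
    (hij : i ≠ j) (h : t i = t j) : W m n ω s t = 0 := by
  apply W_eq_zero
  intro p hp
  apply hp.2 i j hij (t i) (path_last_mem (hp.1 i))
  rw [h]
  exact path_last_mem (hp.1 j)

theorem W_zero_of_src {r : ℕ} (m n : ℕ) (ω : ℕ × ℕ → ℕ × ℕ → ℝ) (s t : Fin r → ℕ × ℕ) {i j : Fin r}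
    (hij : i ≠ j) (h : s i = s j) : W m n ω s t = 0 := by
  apply W_eq_zero
  intro p hp
  apply hp.2 i j hij (s i) (path_head_mem (hp.1 i))
  rw [h]
  exact path_head_mem (hp.1 j)

theorem W_zero_of_out {r : ℕ} (m n : ℕ) (ω : ℕ × ℕ → ℕ × ℕ → ℝ) (s t : Fin r → ℕ × ℕ) {i : Fin r}
    (h : ¬ InG m n (t i)) : W m n ω s t = 0 := by
  apply W_eq_zero
  intro p hp
  exact h ((hp.1 i).2.2.1 _ (path_last_mem (hp.1 i)))

/-- Moving one point between two adjacent levels either keeps sortedness or makes a collision. -/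
theorem Srt_update {r : ℕ} {t : Fin r → ℕ × ℕ} (h : Srt t) (L : ℕ) (l : Fin r) (u : ℕ × ℕ)
    (hL : ∀ i, lev (t i) = L ∨ lev (t i) = L + 1) (hu : GridStep u (t l) ∨ GridStep (t l) u)
    (hu' : lev u = L ∨ lev u = L + 1) :
    Srt (Function.update t l u) ∨ ∃ j, j ≠ l ∧ t j = u := by
  by_contra! hcon
  obtain ⟨h1, h2⟩ := hcon
  apply h1
  intro i j hij
  have h3 := h i j hij
  unfold lev at *
  have hu2 : (u.1 + 1 = (t l).1 ∧ u.2 = (t l).2) ∨ (u.1 = (t l).1 ∧ u.2 + 1 = (t l).2) ∨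
      ((t l).1 + 1 = u.1 ∧ u.2 = (t l).2) ∨ (u.1 = (t l).1 ∧ (t l).2 + 1 = u.2) := by
    rcases hu with (h | h) | (h | h) <;> have a := congrArg Prod.fst h <;>
      have b := congrArg Prod.snd h <;> simp only at a b <;> omega
  have hLl := hL l
  by_cases hi : i = l
  · subst hi
    have hj : j ≠ i := (ne_of_lt hij).symm
    have h4 : ¬ ((t j).1 = u.1 ∧ (t j).2 = u.2) := fun h => h2 j hj (Prod.ext h.1 h.2)
    have := hL j
    simp only [Function.update_self, Function.update_of_ne hj]
    omega
  · by_cases hj : j = l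
    · subst hj
      have h4 : ¬ ((t i).1 = u.1 ∧ (t i).2 = u.2) := fun h => h2 i hi (Prod.ext h.1 h.2)
      have := hL i
      simp only [Function.update_self, Function.update_of_ne hi]
      omega
    · simpa only [Function.update_of_ne hi, Function.update_of_ne hj] using h3

end LGV

namespace LGV

theorem W_base {r : ℕ} (m n : ℕ) (ω : ℕ × ℕ → ℕ × ℕ → ℝ) (s : Fin r → ℕ × ℕ)
    (hsS : Srt s) (hsG : ∀ i, InG m n (s i)) : W m n ω s s = 1 := by
  have hp : ∀ v, InG m n v → paths m n v v = {[v]} := by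
    intro v hv
    ext p
    simp only [paths, Set.mem_ofPred_eq, Set.mem_singleton_iff]
    constructor
    · intro h
      rcases p with - | ⟨a, q⟩
      · exact absurd h not_path_nil
      · rw [path_cons] at h
        obtain ⟨rfl, h1, ⟨rfl, h2⟩ | ⟨u, h3, h4⟩⟩ := h
        · rfl
        · exfalso
          have h5 := path_last_le h4 u (path_head_mem h4)
          unfold lev at h5
          rcases h3 with rfl | rfl
          · rcases h5 with h5 | h5
            · have := congrArg Prod.fst h5; simp at this
            · simp only at h5; omega
          · rcases h5 with h5 | h5
            · have := congrArg Prod.snd h5; simp at this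
            · simp only at h5; omega
    · rintro rfl
      rw [path_cons]
      exact ⟨rfl, hv, Or.inl ⟨rfl, rfl⟩⟩
  have hN : NCg (fun i => paths m n (s i) (s i)) = {fun i => [s i]} := by
    ext p
    simp only [NCg, Set.mem_ofPred_eq, Set.mem_singleton_iff]
    constructor
    · rintro ⟨h1, h2⟩
      funext i
      have := h1 i
      rw [hp _ (hsG i)] at this
      exact this
    · rintro rfl
      refine ⟨fun i => ?_, fun i j hij v hv hv' => ?_⟩
      · rw [hp _ (hsG i)]; rfl
      · simp only [List.mem_singleton] at hv hv'
        exact hsS.inj hij (hv.symm.trans hv')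
  unfold W Wg
  rw [hN, finsum_mem_singleton]
  simp [weight_singleton]

theorem lgv {r : ℕ} (m n k : ℕ) (ω : ℕ × ℕ → ℕ × ℕ → ℝ) {V : Type*} [AddCommGroup V] [Module ℝ V]
    (f : V [⋀^Fin r]→ₗ[ℝ] ℝ) (h : ℕ × ℕ → V)
    (hzero : ∀ v : ℕ × ℕ, v.1 = 0 ∨ v.2 = 0 → h v = 0)
    (hrec : ∀ v : ℕ × ℕ, 1 ≤ v.1 → 1 ≤ v.2 → k + 1 < lev v →
      h v = ω (v.1 - 1, v.2) v • h (v.1 - 1, v.2) + ω (v.1, v.2 - 1) v • h (v.1, v.2 - 1))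
    (s : Fin r → ℕ × ℕ) (hs : ∀ i, lev (s i) = k + 1)
    (hsS : Srt s) (hsG : ∀ i, InG m n (s i))
    (hf : ∀ t : Fin r → ℕ × ℕ, Srt t → (∀ i, lev (t i) = k + 1 ∧ 1 ≤ (t i).1 ∧ 1 ≤ (t i).2) →
      t ≠ s → f (fun i => h (t i)) = 0) (N : ℕ) :
    ∀ t : Fin r → ℕ × ℕ, ∑ i, lev (t i) = N → ∀ L, k + 1 ≤ L →
      (∀ i, lev (t i) = L ∨ lev (t i) = L + 1) → Srt t →
      (∀ i, (t i).1 ≤ m ∧ (t i).2 ≤ n) →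
      W m n ω s t * f (fun i => h (s i)) = f (fun i => h (t i)) := by
  induction N using Nat.strong_induction_on with
  | _ N ih =>
  intro t hN L hL htL htS htG
  by_cases hout : ∃ i, (t i).1 = 0 ∨ (t i).2 = 0
  · obtain ⟨i, hi⟩ := hout
    rw [W_zero_of_out m n ω s t (i := i) (by unfold InG; omega), zero_mul,
      f.map_coord_zero i (hzero _ hi)]
  push Not at hout
  by_cases hbase : ∀ i, lev (t i) = k + 1
  · by_cases hts : t = s
    · subst hts
      rw [W_base m n ω t hsS hsG, one_mul]
    · rw [hf t htS (fun i => ⟨hbase i, by have := hout i; omega, by have := hout i; omega⟩) hts]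
      have : ∃ i, t i ≠ s i := by
        by_contra! hc
        exact hts (funext hc)
      obtain ⟨i, hi⟩ := this
      rw [W_eq_zero, zero_mul]
      intro p hp
      rcases path_last_le (hp.1 i) _ (path_head_mem (hp.1 i)) with h1 | h1
      · exact hi h1.symm
      · rw [hs, hbase] at h1; omega
  obtain ⟨L, hL, htL, l, hl⟩ : ∃ L, k + 1 ≤ L ∧ (∀ i, lev (t i) = L ∨ lev (t i) = L + 1) ∧
      ∃ l, lev (t l) = L + 1 := by
    by_cases hex : ∃ l, lev (t l) = L + 1
    · exact ⟨L, hL, htL, hex⟩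
    · push Not at hex hbase
      obtain ⟨i, hi⟩ := hbase
      have hall : ∀ i, lev (t i) = L := fun i => (htL i).resolve_right (hex i)
      have := hall i
      exact ⟨L - 1, by omega, fun i => Or.inr (by rw [hall i]; omega), i, by omega⟩
  have hG : InG m n (t l) := by
    have := hout l; have := htG l; unfold InG; omega
  have hstep := W_step_tgt m n ω s t l hG
    (by intro he; have := hs l; rw [he] at this; omega)
    (fun i => by have := htL i; omega) (fun i hi => htS.inj hi)
  have key : ∀ u, GridStep u (t l) → W m n ω s (Function.update t l u) * f (fun i => h (s i)) =
      f (Function.update (fun i => h (t i)) l (h u)) := by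
    intro u hu
    have hu1 : lev u = L := by
      unfold lev at *
      rcases hu with h | h <;> have a := congrArg Prod.fst h <;>
      have b := congrArg Prod.snd h <;> simp only at a b <;> omega
    have hu2 : u.1 ≤ (t l).1 ∧ u.2 ≤ (t l).2 := by
      rcases hu with h | h <;> have a := congrArg Prod.fst h <;>
      have b := congrArg Prod.snd h <;> simp only at a b <;> omega
    rcases Srt_update htS L l u htL (Or.inl hu) (Or.inl hu1) with hS | ⟨j, hj, hju⟩
    · have hcomp : Function.update (fun i => h (t i)) l (h u) =
          fun i => h (Function.update t l u i) := by
        funext i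
        by_cases hi : i = l
        · subst hi; simp
        · simp [hi]
      rw [hcomp]
      refine ih (∑ i, lev (Function.update t l u i)) ?_ _ rfl L hL ?_ hS ?_
      · rw [← hN]
        apply Finset.sum_lt_sum
        · intro i _
          by_cases hi : i = l
          · subst hi; simp; omega
          · simp [hi]
        · exact ⟨l, Finset.mem_univ _, by simp; omega⟩
      · intro i
        by_cases hi : i = l
        · subst hi; simp [hu1]
        · simpa [hi] using htL i
      · intro i
        by_cases hi : i = l
        · subst hi
          have := htG i
          simp; omega
        · simpa [hi] using htG i
    · rw [W_zero_of_tgt m n ω s _ hj (by simp [hj, hju]), zero_mul, f.map_eq_zero_of_eq _ _ hj]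
      simp [hj, hju]
  have hs1 : GridStep ((t l).1 - 1, (t l).2) (t l) := by
    left; unfold InG at hG; ext <;> simp; omega
  have hs2 : GridStep ((t l).1, (t l).2 - 1) (t l) := by
    right; unfold InG at hG; ext <;> simp; omega
  have hself : (fun i => h (t i)) = Function.update (fun i => h (t i)) l (h (t l)) := by simp
  rw [hself, hrec (t l) hG.1 hG.2.2.1 (by omega), f.map_update_add, f.map_update_smul,
    f.map_update_smul, ← key _ hs1, ← key _ hs2, hstep]
  simp only [smul_eq_mul]
  ring

/-- Reduction of sources to level `k+1`. -/
theorem src_reduce {r : ℕ} (m n k : ℕ) (hkm : k < m) (hkn : k < n) (ω : ℕ × ℕ → ℕ × ℕ → ℝ)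
    {ι : Type*} (F : Finset ι)
    (c : ι → ℝ) (t : ι → Fin r → ℕ × ℕ) (ht : ∀ a ∈ F, ∀ i, k + 2 ≤ lev (t a i))
    (hyp : ∀ s : Fin r → ℕ × ℕ, Srt s → (∀ i, lev (s i) = k + 1 ∧ 1 ≤ (s i).1 ∧ 1 ≤ (s i).2) →
      ∑ a ∈ F, c a * W m n ω s (t a) = 0) (N : ℕ) :
    ∀ s : Fin r → ℕ × ℕ, ∑ i, (k + 1 - lev (s i)) = N → Srt s →
      (∀ i, (lev (s i) = k ∨ lev (s i) = k + 1) ∧ 1 ≤ (s i).1 ∧ 1 ≤ (s i).2) →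
      ∑ a ∈ F, c a * W m n ω s (t a) = 0 := by
  induction N using Nat.strong_induction_on with
  | _ N ih =>
  intro s hN hS hs
  by_cases hall : ∀ i, lev (s i) = k + 1
  · exact hyp s hS fun i => ⟨hall i, (hs i).2⟩
  push Not at hall
  obtain ⟨l, hl⟩ := hall
  have hlk : lev (s l) = k := (hs l).1.resolve_right hl
  have key : ∀ u, GridStep (s l) u → ∑ a ∈ F, c a * W m n ω (Function.update s l u) (t a) = 0 := by
    intro u hu
    have hu1 : lev u = k + 1 := by
      unfold lev at *
      rcases hu with rfl | rfl <;> simp only <;> omega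
    have hu2 : (s l).1 ≤ u.1 ∧ (s l).2 ≤ u.2 := by
      rcases hu with rfl | rfl <;> simp
    rcases Srt_update hS k l u (fun i => (hs i).1) (Or.inr hu) (Or.inr hu1) with hS' | ⟨j, hj, hju⟩
    · refine ih _ ?_ _ rfl hS' ?_
      · rw [← hN]
        apply Finset.sum_lt_sum
        · intro i _
          by_cases hi : i = l
          · subst hi; simp; omega
          · simp [hi]
        · exact ⟨l, Finset.mem_univ _, by simp; omega⟩
      · intro i
        by_cases hi : i = l
        · subst hi
          have := (hs i).2
          simp [hu1]; omega
        · simpa [hi] using hs i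
    · apply Finset.sum_eq_zero
      intro a _
      rw [W_zero_of_src m n ω _ _ hj (by simp [hj, hju]), mul_zero]
  have hG : InG m n (s l) := by
    have := (hs l).2; unfold InG; unfold lev at hlk; omega
  have hstep : ∀ a ∈ F, c a * W m n ω s (t a) = 
      ω (s l) ((s l).1 + 1, (s l).2) *
        (c a * W m n ω (Function.update s l ((s l).1 + 1, (s l).2)) (t a)) +
      ω (s l) ((s l).1, (s l).2 + 1) *
        (c a * W m n ω (Function.update s l ((s l).1, (s l).2 + 1)) (t a)) := by
    intro a ha
    rw [W_step_src m n ω s (t a) l hG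
      (by intro he; have := ht a ha l; rw [← he] at this; omega)
      (fun i => by have := (hs i).1; omega) (fun i hi => hS.inj hi)]
    ring
  rw [Finset.sum_congr rfl hstep, Finset.sum_add_distrib, ← Finset.mul_sum, ← Finset.mul_sum,
    key _ (Or.inl rfl), key _ (Or.inr rfl)]
  simp

end LGV

namespace LGV

def en (J : Finset ℕ) (i : ℕ) : ℕ := (J.sort (· ≤ ·)).getD i 0

theorem en_eq (J : Finset ℕ) {r : ℕ} (h : J.card = r) (i : Fin r) :
    en J i = J.orderEmbOfFin h i := by
  rw [Finset.orderEmbOfFin_apply, en, List.getD_eq_getElem]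
  rfl

theorem en_mem (J : Finset ℕ) {r : ℕ} (h : J.card = r) (i : Fin r) : en J i ∈ J := by
  rw [en_eq J h]; exact Finset.orderEmbOfFin_mem _ _ _

theorem en_surj (J : Finset ℕ) {r : ℕ} (h : J.card = r) {x : ℕ} (hx : x ∈ J) :
    ∃ i : Fin r, en J i = x := by
  have : x ∈ Set.range (J.orderEmbOfFin h) := by simpa using hx
  obtain ⟨i, hi⟩ := this
  exact ⟨i, by rw [en_eq J h]; exact hi⟩

theorem en_lt (J : Finset ℕ) {r : ℕ} (h : J.card = r) {i j : Fin r} (hij : i < j) :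
    en J i < en J j := by
  rw [en_eq J h, en_eq J h]
  exact (J.orderEmbOfFin h).strictMono hij

theorem move {r : ℕ} {V : Type*} [AddCommGroup V] [Module ℝ V]
    (d : V [⋀^Fin (r + 1)]→ₗ[ℝ] ℝ) (c : ℕ → V) (S : Finset ℕ) (hS : S.card = r + 1)
    (x : ℕ) (hx : x ∈ S) :
    d (fun i : Fin (r + 1) => c (en S i)) =
      (-1) ^ (S.filter (· < x)).card *
        d (Fin.cons (c x) (fun i : Fin r => c (en (S.erase x) i))) := by
  obtain ⟨p, hp⟩ := en_surj S hS hx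
  have hc : (S.erase x).card = r := by rw [Finset.card_erase_of_mem hx, hS]; rfl
  have hpc : (S.filter (· < x)).card = p := by
    have : S.filter (· < x) = (Finset.univ.filter (· < p)).image (fun i : Fin (r + 1) => en S i) := by
      ext y
      simp only [Finset.mem_filter, Finset.mem_image, Finset.mem_univ, true_and]
      constructor
      · rintro ⟨hy, hyx⟩
        obtain ⟨q, hq⟩ := en_surj S hS hy
        refine ⟨q, ?_, hq⟩
        by_contra hcon
        rcases eq_or_lt_of_le (not_lt.1 hcon) with h | h
        · subst h; omega
        · have := en_lt S hS h; omega
      · rintro ⟨q, hq, rfl⟩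
        exact ⟨en_mem S hS q, by rw [← hp]; exact en_lt S hS hq⟩
    have hinj : Function.Injective (fun i : Fin (r + 1) => en S i) := by
      intro a b hab
      rcases lt_trichotomy a b with h | h | h
      · have := en_lt S hS h; simp only at hab; omega
      · exact h
      · have := en_lt S hS h; simp only at hab; omega
    rw [this, Finset.card_image_of_injective _ hinj]
    have : (Finset.univ.filter (· < p)) = Finset.Iio p := by ext; simp
    rw [this, Fin.card_Iio]
  have he : (fun i : Fin r => en (S.erase x) i) = fun i => en S (p.succAbove i) := by
    have h1 : (fun i : Fin r => en S (p.succAbove i)) = (S.erase x).orderEmbOfFin hc := by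
      apply Finset.orderEmbOfFin_unique
      · intro i
        rw [Finset.mem_erase]
        refine ⟨?_, en_mem S hS _⟩
        rw [← hp]
        intro he
        rw [en_eq S hS, en_eq S hS] at he
        exact Fin.succAbove_ne p i ((S.orderEmbOfFin hS).injective he)
      · intro i j hij
        exact en_lt S hS (Fin.strictMono_succAbove p hij)
    rw [h1]
    funext i
    exact en_eq _ hc i
  have h2 : (Fin.cons (c x) (fun i : Fin r => c (en (S.erase x) i)) : Fin (r + 1) → V) =
      (fun i : Fin (r + 1) => c (en S i)) ∘ (p.cycleRange.symm : Equiv.Perm (Fin (r + 1))) := by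
    funext i
    refine Fin.cases ?_ (fun j => ?_) i
    · simp [hp]
    · have := congrFun he j
      simp [this]
  rw [h2, d.map_perm, hpc]
  simp only [Equiv.Perm.sign_symm, Fin.sign_cycleRange]
  rw [Units.smul_def]
  simp only [Units.val_pow_eq_pow_val, Units.val_neg, Units.val_one, zsmul_eq_mul, Int.cast_pow,
    Int.cast_neg, Int.cast_one]
  rw [← mul_assoc, ← mul_pow]
  simp

def GG {r : ℕ} {V : Type*} [AddCommGroup V] [Module ℝ V]
    (d : V [⋀^Fin (r + 1)]→ₗ[ℝ] ℝ) (c : ℕ → V) (a : V) (J : Finset ℕ) : ℝ :=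
  d (Fin.cons a (fun i : Fin r => c (en J i))) *
    d (fun i : Fin (r + 1) => c (en (Finset.Icc 1 (2 * r + 1) \ J) i))

theorem GG_swap {r : ℕ} {V : Type*} [AddCommGroup V] [Module ℝ V]
    (d : V [⋀^Fin (r + 1)]→ₗ[ℝ] ℝ) (c : ℕ → V) (x : ℕ) (hx : x ∈ Finset.Icc 1 (2 * r + 1))
    (hodd : x % 2 = 1) (J : Finset ℕ) (hJ : J ⊆ Finset.Icc 1 (2 * r + 1)) (hJc : J.card = r)
    (hxJ : x ∉ J) :
    GG d c (c x) J = GG d c (c x) ((Finset.Icc 1 (2 * r + 1) \ J).erase x) := by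
  set U := Finset.Icc 1 (2 * r + 1) with hU
  have h1 : U \ ((U \ J).erase x) = insert x J := by
    ext y
    simp only [Finset.mem_sdiff, Finset.mem_erase, Finset.mem_insert]
    constructor
    · rintro ⟨h1, h2⟩
      by_contra! hc
      exact h2 ⟨hc.1, h1, hc.2⟩
    · rintro (rfl | h)
      · exact ⟨hx, by simp⟩
      · exact ⟨hJ h, by tauto⟩
  have hc1 : (insert x J).card = r + 1 := by rw [Finset.card_insert_of_notMem hxJ, hJc]
  have hc2 : (U \ J).card = r + 1 := by
    rw [Finset.card_sdiff_of_subset hJ, hJc, hU, Nat.card_Icc]; omega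
  have hxU : x ∈ U \ J := by simp [hx, hxJ]
  have m1 := move d c (insert x J) hc1 x (Finset.mem_insert_self _ _)
  have m2 := move d c (U \ J) hc2 x hxU
  rw [Finset.erase_insert hxJ] at m1
  have hab : ((insert x J).filter (· < x)).card + ((U \ J).filter (· < x)).card = x - 1 := by
    rw [← Finset.card_union_of_disjoint]
    · have : ((insert x J).filter (· < x)) ∪ ((U \ J).filter (· < x)) = Finset.Ico 1 x := by
        ext y
        simp only [Finset.mem_union, Finset.mem_filter, Finset.mem_insert, Finset.mem_sdiff,
          Finset.mem_Ico, hU, Finset.mem_Icc]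
        simp only [hU, Finset.mem_Icc] at hx
        constructor
        · rintro (⟨rfl | h, h2⟩ | h)
          · omega
          · have := hJ h
            simp only [hU, Finset.mem_Icc] at this
            omega
          · omega
        · rintro ⟨h1, h2⟩
          by_cases hy : y ∈ J
          · exact Or.inl ⟨Or.inr hy, h2⟩
          · exact Or.inr ⟨⟨⟨h1, by omega⟩, hy⟩, h2⟩
      rw [this, Nat.card_Ico]
    · rw [Finset.disjoint_left]
      intro y hy hy'
      simp only [Finset.mem_filter, Finset.mem_insert, Finset.mem_sdiff] at hy hy'
      rcases hy.1 with h | h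
      · omega
      · exact hy'.1.2 h
  unfold GG
  rw [← hU, h1, m1, m2]
  have hsign : ((-1 : ℝ)) ^ ((insert x J).filter (· < x)).card =
      (-1) ^ ((U \ J).filter (· < x)).card := by
    have he : Even (((insert x J).filter (· < x)).card + ((U \ J).filter (· < x)).card) := by
      rw [hab, Nat.even_iff]; omega
    rw [Nat.even_add] at he
    rcases Nat.even_or_odd ((insert x J).filter (· < x)).card with h | h
    · rw [h.neg_one_pow, (he.1 h).neg_one_pow]
    · have h' : Odd ((U \ J).filter (· < x)).card := by
        rw [← Nat.not_even_iff_odd] at h ⊢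
        tauto
      rw [h.neg_one_pow, h'.neg_one_pow]
  rw [hsign]
  ring

def FK (r : ℕ) (K : Finset ℕ) : Finset (Finset ℕ) :=
  ((Finset.Icc 1 (2 * r + 1)).powersetCard r).filter (fun J => J.filter (fun x => x % 2 = 0) = K)

theorem sum_odd {r : ℕ} {V : Type*} [AddCommGroup V] [Module ℝ V]
    (d : V [⋀^Fin (r + 1)]→ₗ[ℝ] ℝ) (c : ℕ → V) (x : ℕ) (hx : x ∈ Finset.Icc 1 (2 * r + 1))
    (hodd : x % 2 = 1) (K : Finset ℕ)
    (hK : K ⊆ (Finset.Icc 1 (2 * r + 1)).filter (fun x => x % 2 = 0)) :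
    ∑ J ∈ FK r K, GG d c (c x) J =
      ∑ J ∈ FK r ((Finset.Icc 1 (2 * r + 1)).filter (fun x => x % 2 = 0) \ K), GG d c (c x) J := by
  have hne : ∀ K', ∑ J ∈ (FK r K').filter (fun J => x ∉ J), GG d c (c x) J =
      ∑ J ∈ FK r K', GG d c (c x) J := by
    intro K'
    apply Finset.sum_filter_of_ne
    intro J hJ hne hxJ
    apply hne
    simp only [FK, Finset.mem_filter, Finset.mem_powersetCard] at hJ
    obtain ⟨i, hi⟩ := en_surj J hJ.1.2 hxJ
    unfold GG
    rw [d.map_eq_zero_of_eq _ (i := 0) (j := i.succ) (by simp [hi]) (Fin.succ_ne_zero i).symm,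
      zero_mul]
  rw [← hne, ← hne]
  have hmaps : ∀ K' K'', K' ⊆ (Finset.Icc 1 (2 * r + 1)).filter (fun x => x % 2 = 0) → 
      (Finset.Icc 1 (2 * r + 1)).filter (fun x => x % 2 = 0) \ K' = K'' →
      ∀ J ∈ (FK r K').filter (fun J => x ∉ J),
      (Finset.Icc 1 (2 * r + 1) \ J).erase x ∈ (FK r K'').filter (fun J => x ∉ J) := by
    intro K' K'' hK' hKK J hJ
    simp only [FK, Finset.mem_filter, Finset.mem_powersetCard] at hJ ⊢
    obtain ⟨⟨⟨h1, h2⟩, h3⟩, h4⟩ := hJ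
    refine ⟨⟨⟨?_, ?_⟩, ?_⟩, by simp⟩
    · exact (Finset.erase_subset _ _).trans Finset.sdiff_subset
    · rw [Finset.card_erase_of_mem (by simp only [Finset.mem_sdiff]; exact ⟨hx, h4⟩),
        Finset.card_sdiff_of_subset h1, h2, Nat.card_Icc]
      omega
    · rw [← hKK, ← h3]
      ext y
      simp only [Finset.mem_filter, Finset.mem_erase, Finset.mem_sdiff]
      constructor
      · tauto
      · rintro ⟨⟨h5, h6⟩, h7⟩
        exact ⟨⟨by rintro rfl; omega, h5, by tauto⟩, h6⟩
  have hinv : ∀ K', ∀ J ∈ (FK r K').filter (fun J => x ∉ J),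
      (Finset.Icc 1 (2 * r + 1) \ (Finset.Icc 1 (2 * r + 1) \ J).erase x).erase x = J := by
    intro K' J hJ
    simp only [FK, Finset.mem_filter, Finset.mem_powersetCard] at hJ ⊢
    obtain ⟨⟨⟨h1, h2⟩, h3⟩, h4⟩ := hJ
    ext y
    simp only [Finset.mem_erase, Finset.mem_sdiff]
    constructor
    · tauto
    · intro h
      exact ⟨by rintro rfl; exact h4 h, h1 h, by tauto⟩
  refine Finset.sum_nbij' (fun J => (Finset.Icc 1 (2 * r + 1) \ J).erase x)
    (fun J => (Finset.Icc 1 (2 * r + 1) \ J).erase x) (hmaps _ _ hK rfl)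
    (hmaps _ _ Finset.sdiff_subset (Finset.sdiff_sdiff_eq_self hK)) (hinv _) (hinv _) ?_
  intro J hJ
  simp only [FK, Finset.mem_filter, Finset.mem_powersetCard] at hJ
  exact GG_swap d c x hx hodd J hJ.1.1.1 hJ.1.1.2 hJ.2

/-- The quadratic identity for determinants. -/
theorem sum_det {r : ℕ} (c : ℕ → (Fin (r + 1) → ℝ)) (a : Fin (r + 1) → ℝ) (K : Finset ℕ)
    (hK : K ⊆ (Finset.Icc 1 (2 * r + 1)).filter (fun x => x % 2 = 0)) :
    ∑ J ∈ FK r K, GG Matrix.detRowAlternating c a J =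
      ∑ J ∈ FK r ((Finset.Icc 1 (2 * r + 1)).filter (fun x => x % 2 = 0) \ K),
        GG Matrix.detRowAlternating c a J := by
  -- generic case
  have gen : ∀ c : ℕ → (Fin (r + 1) → ℝ),
      (Matrix.of fun i j : Fin (r + 1) => c (2 * i + 1) j).det ≠ 0 →
      ∑ J ∈ FK r K, GG Matrix.detRowAlternating c a J =
      ∑ J ∈ FK r ((Finset.Icc 1 (2 * r + 1)).filter (fun x => x % 2 = 0) \ K),
        GG Matrix.detRowAlternating c a J := by
    intro c hc
    set M := (Matrix.of fun i j : Fin (r + 1) => c (2 * i + 1) j) with hM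
    obtain ⟨ξ, hξ⟩ : ∃ ξ : Fin (r + 1) → ℝ, a = ∑ i, ξ i • c (2 * i + 1) := by
      refine ⟨Matrix.vecMul a M⁻¹, ?_⟩
      have : Matrix.vecMul (Matrix.vecMul a M⁻¹) M = a := by
        rw [Matrix.vecMul_vecMul, Matrix.nonsing_inv_mul _ (isUnit_iff_ne_zero.2 hc),
          Matrix.vecMul_one]
      conv_lhs => rw [← this]
      funext j
      simp [Matrix.vecMul, dotProduct, hM]
    have hlin : ∀ J, GG Matrix.detRowAlternating c a J =
        ∑ i : Fin (r + 1), ξ i * GG Matrix.detRowAlternating c (c (2 * i + 1)) J := by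
      intro J
      unfold GG
      have h1 : ∀ b : Fin (r + 1) → ℝ,
          Matrix.detRowAlternating (Fin.cons b (fun i : Fin r => c (en J i))) =
          Matrix.detRowAlternating.toMultilinearMap.toLinearMap
            (Fin.cons 0 (fun i : Fin r => c (en J i))) 0 b := by
        intro b
        simp [MultilinearMap.toLinearMap]
      rw [h1, hξ, map_sum, Finset.sum_mul]
      apply Finset.sum_congr rfl
      intro i _
      rw [map_smul, ← h1, smul_eq_mul, mul_assoc]
    simp_rw [hlin]
    rw [Finset.sum_comm, Finset.sum_comm (s := FK r _)]
    apply Finset.sum_congr rfl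
    intro i _
    rw [← Finset.mul_sum, ← Finset.mul_sum, sum_odd _ c (2 * i + 1) _ (by omega) K hK]
    simp only [Finset.mem_Icc]
    omega
  -- perturbation
  let cc : ℝ → ℕ → (Fin (r + 1) → ℝ) := fun ε x j => c x j + ε * (if x = 2 * (j : ℕ) + 1 then 1 else 0)
  have hcont : ∀ J, Continuous fun ε => GG Matrix.detRowAlternating (cc ε) a J := by
    intro J
    unfold GG
    change Continuous fun ε => Matrix.det (Fin.cons a (fun i : Fin r => cc ε (en J i))) *
      Matrix.det (fun i : Fin (r + 1) => cc ε (en (Finset.Icc 1 (2 * r + 1) \ J) i))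
    apply Continuous.mul
    · apply Continuous.matrix_det
      refine continuous_pi fun i => ?_
      refine Fin.cases ?_ (fun i => ?_) i
      · simp only [Fin.cons_zero]; fun_prop
      · simp only [Fin.cons_succ, cc]; fun_prop
    · apply Continuous.matrix_det
      simp only [cc]
      fun_prop
  have hdense : Dense {ε : ℝ | (Matrix.of fun i j : Fin (r + 1) => cc ε (2 * i + 1) j).det ≠ 0} := by
    set M := (Matrix.of fun i j : Fin (r + 1) => c (2 * i + 1) j) with hM
    have hdet : ∀ ε : ℝ, (Matrix.of fun i j : Fin (r + 1) => cc ε (2 * i + 1) j).det =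
        ((-M).charpoly).eval ε := by
      intro ε
      rw [Matrix.eval_charpoly]
      congr 1
      ext i j
      by_cases hij : i = j
      · subst hij; simp [cc, hM, add_comm]
      · have : ¬ ((i : ℕ) = j) := fun h => hij (Fin.ext h)
        simp [cc, hM, hij, this]
    have hfin : {ε : ℝ | (Matrix.of fun i j : Fin (r + 1) => cc ε (2 * i + 1) j).det = 0}.Finite := by
      refine Set.Finite.subset ((-M).charpoly.roots.toFinset.finite_toSet) ?_
      intro ε hε
      have hε' : (Matrix.of fun i j : Fin (r + 1) => cc ε (2 * i + 1) j).det = 0 := hε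
      rw [hdet] at hε'
      simp [Matrix.charpoly_monic (-M) |>.ne_zero, hε']
    exact (hfin.countable.dense_compl ℝ)
  have hfun : (fun ε => ∑ J ∈ FK r K, GG Matrix.detRowAlternating (cc ε) a J) =
      fun ε => ∑ J ∈ FK r ((Finset.Icc 1 (2 * r + 1)).filter (fun x => x % 2 = 0) \ K),
        GG Matrix.detRowAlternating (cc ε) a J := by
    apply Continuous.ext_on hdense
    · exact continuous_finsetSum _ fun J _ => hcont J
    · exact continuous_finsetSum _ fun J _ => hcont J
    · intro ε hε
      exact gen (cc ε) hε
  have h0 : cc 0 = c := by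
    funext x j; simp [cc]
  have := congrFun hfun 0
  simpa only [h0] using this

end LGV

namespace LGV

def ncEquiv (m n : ℕ) {r : ℕ} (src tgt : List (ℕ × ℕ)) (h1 : src.length = r)
    (h2 : tgt.length = r) :
    NCTuple m n src tgt ≃
      ↥(NCg (fun i : Fin r => paths m n (src.getD i (0, 0)) (tgt.getD i (0, 0)))) where
  toFun T := ⟨fun i => T.path.getD i [], by
    have hl : T.path.length = r := T.hlen.trans h1
    refine ⟨fun i => T.valid i (by rw [hl]; exact i.2), fun i j hij => T.disj i j
      (by rw [hl]; exact i.2) (by rw [hl]; exact j.2) (fun h => hij (Fin.ext h))⟩⟩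
  invFun p :=
    { path := List.ofFn p.1
      hlen := by simp [h1]
      hlen' := by simp [h2]
      valid := by
        intro l hl
        have hl' : l < r := by simpa using hl
        have := p.2.1 ⟨l, hl'⟩
        rw [List.getD_eq_getElem _ _ hl, List.getElem_ofFn]
        exact this
      disj := by
        intro l l' hl hl' hne
        have h3 : l < r := by simpa using hl
        have h4 : l' < r := by simpa using hl'
        have := p.2.2 ⟨l, h3⟩ ⟨l', h4⟩ (fun h => hne (by simpa using h))
        rw [List.getD_eq_getElem _ _ hl, List.getElem_ofFn, List.getD_eq_getElem _ _ hl',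
          List.getElem_ofFn]
        exact this }
  left_inv T := by
    have hl : T.path.length = r := T.hlen.trans h1
    cases T with
    | mk path a b c d =>
      simp only [NCTuple.mk.injEq]
      simp only at hl
      apply List.ext_getElem
      · simp [hl]
      · intro i h3 h4
        rw [List.getElem_ofFn, List.getD_eq_getElem]
  right_inv p := by
    apply Subtype.ext
    funext i
    change (List.ofFn p.1).getD i [] = p.1 i
    rw [List.getD_eq_getElem _ _ (by simp), List.getElem_ofFn]

theorem nc_finite (m n : ℕ) {r : ℕ} (src tgt : List (ℕ × ℕ)) (h1 : src.length = r)
    (h2 : tgt.length = r) : Finite (NCTuple m n src tgt) := by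
  have := (NCg_finite (P := fun i : Fin r => paths m n (src.getD i (0, 0)) (tgt.getD i (0, 0)))
    (fun i => paths_finite _ _ _ _)).to_subtype
  exact Finite.of_equiv _ (ncEquiv m n src tgt h1 h2).symm

theorem nc_sum (m n : ℕ) (ω : ℕ × ℕ → ℕ × ℕ → ℝ) {r : ℕ} (src tgt : List (ℕ × ℕ))
    (h1 : src.length = r) (h2 : tgt.length = r) :
    ∑ᶠ T : NCTuple m n src tgt, tupleEdgeWeight ω T.path =
      W m n ω (fun i : Fin r => src.getD i (0, 0)) (fun i : Fin r => tgt.getD i (0, 0)) := by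
  unfold W Wg
  rw [← finsum_set_coe_eq_finsum_mem, ← finsum_comp_equiv (ncEquiv m n src tgt h1 h2)]
  apply finsum_congr
  intro T
  have hl : T.path.length = r := T.hlen.trans h1
  unfold tupleEdgeWeight
  change _ = ∏ i : Fin r, pathEdgeWeight ω (T.path.getD i [])
  rw [← List.prod_ofFn]
  congr 1
  apply List.ext_getElem
  · simp [hl]
  · intro i h3 h4
    have : i < T.path.length := by simpa using h3
    rw [List.getElem_map, List.getElem_ofFn, List.getD_eq_getElem _ _ this]

theorem map_getD (J : Finset ℕ) {r : ℕ} (h : J.card = r) (g : ℕ → ℕ × ℕ) (i : Fin r) :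
    ((J.sort (· ≤ ·)).map g).getD i (0, 0) = g (en J i) := by
  have : (i : ℕ) < (J.sort (· ≤ ·)).length := by rw [Finset.length_sort, h]; exact i.2
  rw [en, List.getD_eq_getElem _ _ (by simpa using this), List.getD_eq_getElem _ _ this,
    List.getElem_map]

theorem patWeight_eq (m n r : ℕ) (ω : ℕ × ℕ → ℕ × ℕ → ℝ) (I J : Finset ℕ)
    (hI : I ⊆ Finset.Icc 1 (2 * r + 1)) (hJ : J ⊆ Finset.Icc 1 (2 * r + 1))
    (hIc : I.card = r) (hJc : J.card = r) :
    patWeight m n (r + 1) ω I J =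
      W m n ω (fun i : Fin r => gridSource (r + 1) (en I i))
        (fun i : Fin r => gridSink m n (r + 1) (en J i)) *
      W m n ω (fun i : Fin (r + 1) => gridSource (r + 1) (en (Finset.Icc 1 (2 * r + 1) \ I) i))
        (fun i : Fin (r + 1) => gridSink m n (r + 1) (en (Finset.Icc 1 (2 * r + 1) \ J) i)) := by
  have e : 2 * (r + 1) - 1 = 2 * r + 1 := by omega
  have hIc2 : (Finset.Icc 1 (2 * r + 1) \ I).card = r + 1 := by
    rw [Finset.card_sdiff_of_subset hI, hIc, Nat.card_Icc]; omega
  have hJc2 : (Finset.Icc 1 (2 * r + 1) \ J).card = r + 1 := by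
    rw [Finset.card_sdiff_of_subset hJ, hJc, Nat.card_Icc]; omega
  unfold patWeight
  rw [e]
  set U := Finset.Icc 1 (2 * r + 1)
  have a1 : ((I.sort (· ≤ ·)).map (gridSource (r + 1))).length = r := by simp [hIc]
  have a2 : ((J.sort (· ≤ ·)).map (gridSink m n (r + 1))).length = r := by simp [hJc]
  have b1 : (((U \ I).sort (· ≤ ·)).map (gridSource (r + 1))).length = r + 1 := by simp [hIc2]
  have b2 : (((U \ J).sort (· ≤ ·)).map (gridSink m n (r + 1))).length = r + 1 := by simp [hJc2]
  have f1 := nc_finite m n _ _ a1 a2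
  have f2 := nc_finite m n _ _ b1 b2
  have s1 := nc_sum m n ω _ _ a1 a2
  have s2 := nc_sum m n ω _ _ b1 b2
  have := Fintype.ofFinite (NCTuple m n ((I.sort (· ≤ ·)).map (gridSource (r + 1)))
    ((J.sort (· ≤ ·)).map (gridSink m n (r + 1))))
  have := Fintype.ofFinite (NCTuple m n (((U \ I).sort (· ≤ ·)).map (gridSource (r + 1)))
    (((U \ J).sort (· ≤ ·)).map (gridSink m n (r + 1))))
  simp only [map_getD _ hIc, map_getD _ hJc] at s1
  simp only [map_getD _ hIc2, map_getD _ hJc2] at s2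
  rw [← s1, ← s2, finsum_eq_sum_of_fintype, finsum_eq_sum_of_fintype, finsum_eq_sum_of_fintype,
    Fintype.sum_prod_type, Finset.sum_mul_sum]

end LGV

namespace LGV

theorem src_facts (r i : ℕ) (h1 : 1 ≤ i) (h2 : i ≤ 2 * r + 1) :
    (lev (gridSource (r + 1) i) = r + 1 ∨ lev (gridSource (r + 1) i) = r + 1 + 1) ∧
      1 ≤ (gridSource (r + 1) i).1 ∧ 1 ≤ (gridSource (r + 1) i).2 ∧
      (gridSource (r + 1) i).2 + (r + 1) = (gridSource (r + 1) i).1 + i := by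
  unfold lev gridSource
  split_ifs <;> simp only <;> omega

theorem sink_facts (m n r i : ℕ) (hm : r + 1 < m) (hn : r + 1 < n)
    (h1 : 1 ≤ i) (h2 : i ≤ 2 * r + 1) :
    (lev (gridSink m n (r + 1) i) = m + n - (r + 1) ∨
      lev (gridSink m n (r + 1) i) = m + n - (r + 1) + 1) ∧
      (gridSink m n (r + 1) i).1 ≤ m ∧ (gridSink m n (r + 1) i).2 ≤ n ∧
      (gridSink m n (r + 1) i).2 + m + (r + 1) = (gridSink m n (r + 1) i).1 + n + i := by
  unfold lev gridSink
  split_ifs <;> simp only <;> omega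

theorem src_Srt (r : ℕ) {ρ : ℕ} (S : Finset ℕ) (hS : S ⊆ Finset.Icc 1 (2 * r + 1))
    (hc : S.card = ρ) : Srt (fun i : Fin ρ => gridSource (r + 1) (en S i)) := by
  intro i j hij
  have h := en_lt S hc hij
  have hi := Finset.mem_Icc.1 (hS (en_mem S hc i))
  have hj := Finset.mem_Icc.1 (hS (en_mem S hc j))
  have a := src_facts r _ hi.1 hi.2
  have b := src_facts r _ hj.1 hj.2
  simp only
  omega

theorem sink_Srt (m n r : ℕ) {ρ : ℕ} (hm : r + 1 < m) (hn : r + 1 < n) (S : Finset ℕ)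
    (hS : S ⊆ Finset.Icc 1 (2 * r + 1))
    (hc : S.card = ρ) : Srt (fun i : Fin ρ => gridSink m n (r + 1) (en S i)) := by
  intro i j hij
  have h := en_lt S hc hij
  have hi := Finset.mem_Icc.1 (hS (en_mem S hc i))
  have hj := Finset.mem_Icc.1 (hS (en_mem S hc j))
  have a := sink_facts m n r _ hm hn hi.1 hi.2
  have b := sink_facts m n r _ hm hn hj.1 hj.2
  simp only
  omega

/-- Vector of path generating functions from the antidiagonal of level `r + 2`. -/
noncomputable def hv (r : ℕ) (ω : ℕ × ℕ → ℕ × ℕ → ℝ) : ℕ → ℕ → (Fin (r + 1) → ℝ)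
  | 0, _ => 0
  | _ + 1, 0 => 0
  | i + 1, j + 1 =>
    if i + 1 + (j + 1) ≤ r + 2 then (fun a => if (a : ℕ) = j then 1 else 0)
    else ω (i, j + 1) (i + 1, j + 1) • hv r ω i (j + 1) +
      ω (i + 1, j) (i + 1, j + 1) • hv r ω (i + 1) j

noncomputable def hh (r : ℕ) (ω : ℕ × ℕ → ℕ × ℕ → ℝ) (v : ℕ × ℕ) : Fin (r + 1) → ℝ :=
  hv r ω v.1 v.2

theorem hh_zero (r : ℕ) (ω : ℕ × ℕ → ℕ × ℕ → ℝ) (v : ℕ × ℕ) (h : v.1 = 0 ∨ v.2 = 0) :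
    hh r ω v = 0 := by
  obtain ⟨a, b⟩ := v
  unfold hh
  rcases h with h | h
  · simp only at h; subst h; simp [hv]
  · simp only at h; subst h
    cases a <;> simp [hv]

theorem hh_rec (r : ℕ) (ω : ℕ × ℕ → ℕ × ℕ → ℝ) (v : ℕ × ℕ) (h1 : 1 ≤ v.1) (h2 : 1 ≤ v.2)
    (h3 : r + 1 + 1 < lev v) :
    hh r ω v = ω (v.1 - 1, v.2) v • hh r ω (v.1 - 1, v.2) +
      ω (v.1, v.2 - 1) v • hh r ω (v.1, v.2 - 1) := by
  obtain ⟨a, b⟩ := v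
  obtain ⟨a, rfl⟩ : ∃ a', a = a' + 1 := ⟨a - 1, by simp only at h1; omega⟩
  obtain ⟨b, rfl⟩ : ∃ b', b = b' + 1 := ⟨b - 1, by simp only at h2; omega⟩
  unfold lev at h3
  simp only at h3
  unfold hh
  simp only [Nat.add_sub_cancel]
  rw [hv, if_neg (by omega)]

theorem hh_base (r : ℕ) (ω : ℕ × ℕ → ℕ × ℕ → ℝ) {ρ : ℕ} (t : Fin ρ → ℕ × ℕ) (hS : Srt t)
    (ht : ∀ i, lev (t i) = r + 1 + 1 ∧ 1 ≤ (t i).1 ∧ 1 ≤ (t i).2) :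
    ∃ q : Fin ρ → Fin (r + 1), StrictMono q ∧ (∀ i, hh r ω (t i) = Pi.single (q i) 1) ∧
      ∀ i, t i = (r + 1 - (q i : ℕ), (q i : ℕ) + 1) := by
  have hq : ∀ i, (t i).2 - 1 < r + 1 := by
    intro i
    have := ht i
    unfold lev at this
    omega
  refine ⟨fun i => ⟨(t i).2 - 1, hq i⟩, ?_, ?_, ?_⟩
  · intro i j hij
    have h1 := ht i
    have h2 := ht j
    have h3 := hS i j hij
    unfold lev at h1 h2
    rw [Fin.mk_lt_mk]
    omega
  · intro i
    have h1 := ht i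
    unfold lev at h1
    obtain ⟨a, ha⟩ : ∃ a, (t i).1 = a + 1 := ⟨(t i).1 - 1, by omega⟩
    obtain ⟨b, hb⟩ : ∃ b, (t i).2 = b + 1 := ⟨(t i).2 - 1, by omega⟩
    unfold hh
    rw [ha, hb, hv, if_pos (by omega)]
    funext x
    simp only [hb, Nat.add_sub_cancel, Pi.single_apply, Fin.ext_iff]
  · intro i
    have h1 := ht i
    unfold lev at h1
    apply Prod.ext <;> simp only <;> omega

theorem det_ne {r : ℕ} (σ : Fin (r + 1) → Fin (r + 1)) (h : Function.Injective σ) :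
    (Matrix.detRowAlternating (R := ℝ) (n := Fin (r + 1))) (fun i => Pi.single (σ i) 1) ≠ 0 := by
  let e : Equiv.Perm (Fin (r + 1)) := Equiv.ofBijective σ (Finite.injective_iff_bijective.1 h)
  have : (fun i => (Pi.single (σ i) 1 : Fin (r + 1) → ℝ)) =
      (fun i => (Pi.single i 1 : Fin (r + 1) → ℝ)) ∘ e := rfl
  rw [this, AlternatingMap.map_perm]
  have h1 : (Matrix.detRowAlternating (R := ℝ) (n := Fin (r + 1))) (fun i => Pi.single i 1) = 1 := by
    change Matrix.det _ = 1
    refine Eq.trans ?_ (Matrix.det_one (n := Fin (r + 1)) (R := ℝ))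
    congr 1
    ext i j
    rw [Matrix.one_apply, Pi.single_apply]
    simp only [eq_comm]
  rw [h1, Units.smul_def]
  rcases Int.units_eq_one_or (Equiv.Perm.sign e) with h | h <;> rw [h] <;> simp

theorem core (m n r : ℕ) (hm : r + 1 < m) (hn : r + 1 < n) (ω : ℕ × ℕ → ℕ × ℕ → ℝ)
    (K : Finset ℕ) (hK : K ⊆ (Finset.Icc 1 (2 * r + 1)).filter (fun x => x % 2 = 0))
    (s : Fin r → ℕ × ℕ) (hs : Srt s)
    (hs1 : ∀ i, lev (s i) = r + 1 + 1 ∧ 1 ≤ (s i).1 ∧ 1 ≤ (s i).2)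
    (s' : Fin (r + 1) → ℕ × ℕ) (hs' : Srt s')
    (hs1' : ∀ i, lev (s' i) = r + 1 + 1 ∧ 1 ≤ (s' i).1 ∧ 1 ≤ (s' i).2) :
    ∑ J ∈ FK r K, W m n ω s (fun i : Fin r => gridSink m n (r + 1) (en J i)) *
      W m n ω s'
        (fun i : Fin (r + 1) => gridSink m n (r + 1) (en (Finset.Icc 1 (2 * r + 1) \ J) i)) =
    ∑ J ∈ FK r ((Finset.Icc 1 (2 * r + 1)).filter (fun x => x % 2 = 0) \ K),
      W m n ω s (fun i : Fin r => gridSink m n (r + 1) (en J i)) *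
      W m n ω s'
        (fun i : Fin (r + 1) => gridSink m n (r + 1) (en (Finset.Icc 1 (2 * r + 1) \ J) i)) := by
  obtain ⟨q, hq, hq1, hq2⟩ := hh_base r ω s hs hs1
  obtain ⟨q', hq', hq1', hq2'⟩ := hh_base r ω s' hs' hs1'
  obtain ⟨x, hx⟩ : ∃ x, x ∉ Set.range q := by
    by_contra! hcon
    have := Fintype.card_le_of_surjective q hcon
    simp at this
  let d := Matrix.detRowAlternating (R := ℝ) (n := Fin (r + 1))
  let f : (Fin (r + 1) → ℝ) [⋀^Fin r]→ₗ[ℝ] ℝ := AlternatingMap.curryLeft d (Pi.single x 1)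
  have hfd : ∀ v : Fin r → (Fin (r + 1) → ℝ), f v = d (Fin.cons (Pi.single x 1) v) := fun v => rfl
  have hxc : (({x}ᶜ : Finset (Fin (r + 1)))).card = r := by
    rw [Finset.card_compl]; simp
  have hD : f (fun i => hh r ω (s i)) ≠ 0 := by
    rw [hfd]
    have : (Fin.cons (Pi.single x 1) (fun i => hh r ω (s i)) : Fin (r + 1) → (Fin (r + 1) → ℝ)) =
        fun i => Pi.single ((Fin.cons x q : Fin (r + 1) → Fin (r + 1)) i) 1 := by
      funext i
      refine Fin.cases ?_ (fun i => ?_) i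
      · simp
      · simp [hq1]
    rw [this]
    apply det_ne
    rw [Fin.cons_injective_iff]
    exact ⟨hx, hq.injective⟩
  have hD' : d (fun i => hh r ω (s' i)) ≠ 0 := by
    have : (fun i => hh r ω (s' i)) = fun i => Pi.single (q' i) 1 := funext hq1'
    rw [this]
    exact det_ne _ hq'.injective
  have hInG : ∀ v : ℕ × ℕ, lev v = r + 1 + 1 → 1 ≤ v.1 → 1 ≤ v.2 → InG m n v := by
    intro v h1 h2 h3
    unfold lev at h1
    unfold InG
    omega
  have L1 : ∀ J ⊆ Finset.Icc 1 (2 * r + 1), J.card = r →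
      W m n ω s (fun i : Fin r => gridSink m n (r + 1) (en J i)) * f (fun i => hh r ω (s i)) =
      f (fun i : Fin r => hh r ω (gridSink m n (r + 1) (en J i))) := by
    intro J hJ hJc
    have hb : ∀ i : Fin r, _ := fun i => 
      sink_facts m n r (en J i) hm hn (Finset.mem_Icc.1 (hJ (en_mem J hJc i))).1
        (Finset.mem_Icc.1 (hJ (en_mem J hJc i))).2
    refine lgv m n (r + 1) ω f (hh r ω) (hh_zero r ω) (hh_rec r ω) s (fun i => (hs1 i).1) hs
      (fun i => hInG _ (hs1 i).1 (hs1 i).2.1 (hs1 i).2.2) ?_ _ _ rfl (m + n - (r + 1)) (by omega)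
      (fun i => (hb i).1) (sink_Srt m n r hm hn J hJ hJc) (fun i => ⟨(hb i).2.1, (hb i).2.2.1⟩)
    intro t ht ht1 hne
    obtain ⟨p, hp, hp1, hp2⟩ := hh_base r ω t ht ht1
    have hxp : x ∈ Set.range p := by
      by_contra hcon
      apply hne
      have e1 := Finset.orderEmbOfFin_unique hxc (f := p) (fun i => by
        simp only [Finset.mem_compl, Finset.mem_singleton]
        exact fun h => hcon ⟨i, h⟩) hp
      have e2 := Finset.orderEmbOfFin_unique hxc (f := q) (fun i => by
        simp only [Finset.mem_compl, Finset.mem_singleton]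
        exact fun h => hx ⟨i, h⟩) hq
      funext i
      rw [hp2, hq2, e1, e2]
    obtain ⟨i, hi⟩ := hxp
    rw [hfd]
    refine d.map_eq_zero_of_eq _ (i := 0) (j := i.succ) ?_ (Fin.succ_ne_zero i).symm
    simp [hp1, hi]
  have L2 : ∀ J ⊆ Finset.Icc 1 (2 * r + 1), J.card = r + 1 →
      W m n ω s' (fun i : Fin (r + 1) => gridSink m n (r + 1) (en J i)) *
        d (fun i => hh r ω (s' i)) =
      d (fun i : Fin (r + 1) => hh r ω (gridSink m n (r + 1) (en J i))) := by
    intro J hJ hJc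
    have hb : ∀ i : Fin (r + 1), _ := fun i => 
      sink_facts m n r (en J i) hm hn (Finset.mem_Icc.1 (hJ (en_mem J hJc i))).1
        (Finset.mem_Icc.1 (hJ (en_mem J hJc i))).2
    refine lgv m n (r + 1) ω d (hh r ω) (hh_zero r ω) (hh_rec r ω) s' (fun i => (hs1' i).1) hs'
      (fun i => hInG _ (hs1' i).1 (hs1' i).2.1 (hs1' i).2.2) ?_ _ _ rfl (m + n - (r + 1)) (by omega)
      (fun i => (hb i).1) (sink_Srt m n r hm hn J hJ hJc) (fun i => ⟨(hb i).2.1, (hb i).2.2.1⟩)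
    intro t ht ht1 hne
    obtain ⟨p, hp, hp1, hp2⟩ := hh_base r ω t ht ht1
    exfalso
    apply hne
    have hu : (Finset.univ : Finset (Fin (r + 1))).card = r + 1 := by simp
    have e1 := Finset.orderEmbOfFin_unique hu (f := p) (fun i => Finset.mem_univ _) hp
    have e2 := Finset.orderEmbOfFin_unique hu (f := q') (fun i => Finset.mem_univ _) hq'
    funext i
    rw [hp2, hq2', e1, e2]
  have key := sum_det (fun j => hh r ω (gridSink m n (r + 1) j)) (Pi.single x 1) K hK
  have conv : ∀ K', ∑ J ∈ FK r K', GG Matrix.detRowAlternating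
      (fun j => hh r ω (gridSink m n (r + 1) j)) (Pi.single x 1) J =
      (∑ J ∈ FK r K', W m n ω s (fun i : Fin r => gridSink m n (r + 1) (en J i)) *
      W m n ω s'
        (fun i : Fin (r + 1) => gridSink m n (r + 1) (en (Finset.Icc 1 (2 * r + 1) \ J) i))) *
        (f (fun i => hh r ω (s i)) * d (fun i => hh r ω (s' i))) := by
    intro K'
    rw [Finset.sum_mul]
    apply Finset.sum_congr rfl
    intro J hJ
    simp only [FK, Finset.mem_filter, Finset.mem_powersetCard] at hJ
    obtain ⟨⟨h1, h2⟩, h3⟩ := hJ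
    have hc2 : (Finset.Icc 1 (2 * r + 1) \ J).card = r + 1 := by
      rw [Finset.card_sdiff_of_subset h1, h2, Nat.card_Icc]; omega
    rw [mul_mul_mul_comm, L1 J h1 h2, L2 _ Finset.sdiff_subset hc2, hfd]
    rfl
  rw [conv, conv] at key
  exact mul_right_cancel₀ (mul_ne_zero hD hD') key

theorem main (m n r : ℕ) (hm : r + 1 < m) (hn : r + 1 < n) (ω : ℕ × ℕ → ℕ × ℕ → ℝ)
    (I K : Finset ℕ) (hI : I ⊆ Finset.Icc 1 (2 * r + 1)) (hIc : I.card = r)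
    (hK : K ⊆ (Finset.Icc 1 (2 * r + 1)).filter (fun x => x % 2 = 0)) :
    ∑ J ∈ FK r K, patWeight m n (r + 1) ω I J =
    ∑ J ∈ FK r ((Finset.Icc 1 (2 * r + 1)).filter (fun x => x % 2 = 0) \ K),
      patWeight m n (r + 1) ω I J := by
  set K' := (Finset.Icc 1 (2 * r + 1)).filter (fun x => x % 2 = 0) \ K with hK'
  set F := (Finset.Icc 1 (2 * r + 1)).powersetCard r with hF
  let c : Finset ℕ → ℝ := fun J => (if J.filter (fun x => x % 2 = 0) = K then 1 else 0) -
    (if J.filter (fun x => x % 2 = 0) = K' then 1 else 0)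
  have hc : ∀ g : Finset ℕ → ℝ, ∑ J ∈ F, c J * g J = ∑ J ∈ FK r K, g J - ∑ J ∈ FK r K', g J := by
    intro g
    unfold FK
    rw [Finset.sum_filter, Finset.sum_filter, ← Finset.sum_sub_distrib]
    apply Finset.sum_congr rfl
    intro J _
    simp only [c]
    split_ifs <;> ring
  have hcard : ∀ J ⊆ Finset.Icc 1 (2 * r + 1), J.card = r →
      (Finset.Icc 1 (2 * r + 1) \ J).card = r + 1 := by
    intro J h1 h2
    rw [Finset.card_sdiff_of_subset h1, h2, Nat.card_Icc]; omega
  have hlev : ∀ {ρ : ℕ} (S : Finset ℕ), S ⊆ Finset.Icc 1 (2 * r + 1) → S.card = ρ → ∀ i : Fin ρ,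
      r + 1 + 2 ≤ lev (gridSink m n (r + 1) (en S i)) := by
    intro ρ S hS hSc i
    have hi := Finset.mem_Icc.1 (hS (en_mem S hSc i))
    have := sink_facts m n r _ hm hn hi.1 hi.2
    omega
  have hsrc : ∀ {ρ : ℕ} (S : Finset ℕ), S ⊆ Finset.Icc 1 (2 * r + 1) → S.card = ρ → ∀ i : Fin ρ,
      (lev (gridSource (r + 1) (en S i)) = r + 1 ∨ lev (gridSource (r + 1) (en S i)) = r + 1 + 1) ∧
      1 ≤ (gridSource (r + 1) (en S i)).1 ∧ 1 ≤ (gridSource (r + 1) (en S i)).2 := by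
    intro ρ S hS hSc i
    have hi := Finset.mem_Icc.1 (hS (en_mem S hSc i))
    have := src_facts r _ hi.1 hi.2
    exact ⟨this.1, this.2.1, this.2.2.1⟩
  have step1 : ∀ s : Fin r → ℕ × ℕ, Srt s →
      (∀ i, lev (s i) = r + 1 + 1 ∧ 1 ≤ (s i).1 ∧ 1 ≤ (s i).2) →
      ∑ J ∈ F, (c J * W m n ω s (fun i : Fin r => gridSink m n (r + 1) (en J i))) *
        W m n ω (fun i : Fin (r + 1) => gridSource (r + 1) (en (Finset.Icc 1 (2 * r + 1) \ I) i))
        (fun i : Fin (r + 1) => gridSink m n (r + 1) (en (Finset.Icc 1 (2 * r + 1) \ J) i)) = 0 := by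
    intro s hs hs1
    refine src_reduce m n (r + 1) hm hn ω F
      (fun J => c J * W m n ω s (fun i : Fin r => gridSink m n (r + 1) (en J i)))
      (fun J => fun i : Fin (r + 1) => gridSink m n (r + 1) (en (Finset.Icc 1 (2 * r + 1) \ J) i))
      ?_ ?_ _ _ rfl
      (src_Srt r _ Finset.sdiff_subset (hcard I hI hIc))
      (hsrc _ Finset.sdiff_subset (hcard I hI hIc))
    · intro J hJ i
      rw [hF, Finset.mem_powersetCard] at hJ
      exact hlev _ Finset.sdiff_subset (hcard J hJ.1 hJ.2) i
    · intro s' hs' hs1'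
      simp only [mul_assoc]
      rw [hc, core m n r hm hn ω K hK s hs hs1 s' hs' hs1', sub_self]
  have step2 := src_reduce m n (r + 1) hm hn ω F
      (fun J => c J * 
        W m n ω (fun i : Fin (r + 1) => gridSource (r + 1) (en (Finset.Icc 1 (2 * r + 1) \ I) i))
        (fun i : Fin (r + 1) => gridSink m n (r + 1) (en (Finset.Icc 1 (2 * r + 1) \ J) i)))
      (fun J => fun i : Fin r => gridSink m n (r + 1) (en J i))
      (by
        intro J hJ i
        rw [hF, Finset.mem_powersetCard] at hJ
        exact hlev _ hJ.1 hJ.2 i)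
      (by
        intro s hs hs1
        rw [← step1 s hs hs1]
        apply Finset.sum_congr rfl
        intro J _
        ring) _ _ rfl (src_Srt r _ hI hIc) (hsrc _ hI hIc)
  rw [← sub_eq_zero, ← hc, ← step2]
  apply Finset.sum_congr rfl
  intro J hJ
  rw [hF, Finset.mem_powersetCard] at hJ
  rw [patWeight_eq m n r ω I J hI hJ.1 hIc hJ.2]
  ring

end LGV
/-- fixing the source pattern `I` and the set `K` of even sinks, the total
weight over sink patterns with even part `K` equals the total weight over sink patterns
with even part `K′ = {2,4,…,2k-2} ∖ K`. -/
theorem stmt_3 (m n k : ℕ) (hm : 3 ≤ m) (hn : 3 ≤ n) (hk : 2 ≤ k) (hkm : k < m) (hkn : k < n)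
    (ω : ℕ × ℕ → ℕ × ℕ → ℝ) (hω : ∀ u v, 0 < ω u v)
    (I K : Finset ℕ) (hI : I ⊆ Finset.Icc 1 (2 * k - 1)) (hIcard : I.card = k - 1)
    (hK : K ⊆ (Finset.Icc 1 (2 * k - 1)).filter (fun x => x % 2 = 0)) :
    ∑ J ∈ ((Finset.Icc 1 (2 * k - 1)).powersetCard (k - 1)).filter
        (fun J => J.filter (fun x => x % 2 = 0) = K),
      patWeight m n k ω I J =
    ∑ J ∈ ((Finset.Icc 1 (2 * k - 1)).powersetCard (k - 1)).filter
        (fun J => J.filter (fun x => x % 2 = 0) =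
          (Finset.Icc 1 (2 * k - 1)).filter (fun x => x % 2 = 0) \ K),
      patWeight m n k ω I J := by
  obtain ⟨r, rfl⟩ : ∃ r, k = r + 1 := ⟨k - 1, by omega⟩
  have e : 2 * (r + 1) - 1 = 2 * r + 1 := by omega
  have e2 : r + 1 - 1 = r := rfl
  rw [e] at hI hK
  rw [e, e2]
  exact LGV.main m n r hkm hkn ω I K hI hIcard hK
end

section
/- Let k ≥ 2 and let M be an interlacing matrix of order 2k−1. Fix I, J ⊆ {1,…,2k−1} with |I| = |J| = k−1 and 1 ∉ J, 2k−1 ∉ J. Set J′ := {2,…,2k−1} ∖ J and J″ := {1,…,2k−2} ∖ J, and for K ⊆ {1,…,2k−1} write K̄ := {1,…,2k−1} ∖ K. Then det M[Ī|J̄] · det M[I|J] = det M[Ī|J̄′] · det M[I|J′] + det M[Ī|J̄″] · det M[I|J″]. -/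
/-- The minor of the (1-indexed) matrix `M` with rows `U` and columns `W`, both taken in
increasing order.  When `U` and `W` have different cardinalities we set it to `0`
(this case is never used); for `U = W = ∅` it is `1` (the empty determinant). -/
noncomputable def minorN (M : ℕ → ℕ → ℝ) (U W : Finset ℕ) : ℝ :=
  if h : U.card = W.card then
    Matrix.det (Matrix.of fun i j : Fin U.card =>
      M (U.orderIsoOfFin rfl i).val (W.orderIsoOfFin h.symm j).val)
  else 0

/-- `M` (1-indexed, of order `2k-1`) is an interlacing matrix: totally nonnegative, of rank
at most `k`, and the submatrix with all rows and columns `2,…,2k-2` has rank at most `k-1`. -/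
def IsInterlacingMatrix (k : ℕ) (M : ℕ → ℕ → ℝ) : Prop :=
  (∀ U W : Finset ℕ, U ⊆ Finset.Icc 1 (2 * k - 1) → W ⊆ Finset.Icc 1 (2 * k - 1) →
    0 ≤ minorN M U W) ∧
  (Matrix.of fun i j : Fin (2 * k - 1) => M (i.val + 1) (j.val + 1)).rank ≤ k ∧
  (Matrix.of fun (i : Fin (2 * k - 1)) (j : Fin (2 * k - 3)) =>
    M (i.val + 1) (j.val + 2)).rank ≤ k - 1

theorem aux_cons_mem_zero {V : Type*} [AddCommGroup V] [Module ℝ V] {p : ℕ}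
    (f : V [⋀^Fin (p+1)]→ₗ[ℝ] ℝ) (u : V) (b : Fin p → V)
    (h : u ∈ Submodule.span ℝ (Set.range b)) : f (Fin.cons u b) = 0 := by
  apply f.map_linearDependent
  rw [linearIndependent_finCons]
  exact fun hh => hh.2 h

theorem aux_cons_add {V : Type*} [AddCommGroup V] [Module ℝ V] {p : ℕ}
    (f : V [⋀^Fin (p+1)]→ₗ[ℝ] ℝ) (u v : V) (b : Fin p → V) :
    f (Fin.cons (u+v) b) = f (Fin.cons u b) + f (Fin.cons v b) :=
  f.toMultilinearMap.cons_add b u v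

theorem aux_cons_smul {V : Type*} [AddCommGroup V] [Module ℝ V] {p : ℕ}
    (f : V [⋀^Fin (p+1)]→ₗ[ℝ] ℝ) (t : ℝ) (v : V) (b : Fin p → V) :
    f (Fin.cons (t • v) b) = t * f (Fin.cons v b) :=
  f.toMultilinearMap.cons_smul b t v

theorem aux_snoc {V : Type*} [AddCommGroup V] [Module ℝ V] {p : ℕ}
    (f : V [⋀^Fin (p+1)]→ₗ[ℝ] ℝ) (v : V) (b : Fin p → V) :
    f (Fin.snoc b v) = (-1) ^ p * f (Fin.cons v b) := by
  have h1 : (Fin.snoc b v : Fin (p+1) → V) = (Fin.cons v b : Fin (p+1) → V) ∘ finRotate (p+1) := by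
    rw [Fin.snoc_eq_cons_rotate]; rfl
  rw [h1, f.map_perm, sign_finRotate]
  rcases Nat.even_or_odd p with h | h <;> simp [h.neg_one_pow]

theorem aux_swap {V : Type*} [AddCommGroup V] [Module ℝ V] {p : ℕ}
    (f : V [⋀^Fin (p+2)]→ₗ[ℝ] ℝ) (u v : V) (b : Fin p → V) :
    f (Fin.cons u (Fin.cons v b : Fin (p+1) → V)) =
      - f (Fin.cons v (Fin.cons u b : Fin (p+1) → V)) := by
  have h0 : ∀ w, f (Fin.cons w (Fin.cons w b : Fin (p+1) → V)) = 0 := fun w => by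
    apply aux_cons_mem_zero
    exact Submodule.subset_span ⟨0, rfl⟩
  have h := h0 (u+v)
  have e1 : ∀ w, f (Fin.cons w (Fin.cons (u+v) b : Fin (p+1) → V)) =
     f (Fin.cons w (Fin.cons u b : Fin (p+1) → V)) + f (Fin.cons w (Fin.cons v b : Fin (p+1) → V)) :=
    fun w => aux_cons_add (f.curryLeft w) u v b
  rw [e1, aux_cons_add, aux_cons_add, h0, h0] at h
  linarith

theorem aux_core {V : Type*} [AddCommGroup V] [Module ℝ V] [FiniteDimensional ℝ V] {m : ℕ}
    (f : V [⋀^Fin (m+2)]→ₗ[ℝ] ℝ) (g : V [⋀^Fin (m+1)]→ₗ[ℝ] ℝ)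
    (a : Fin (m+1) → V) (b : Fin m → V) (x y : V) (W T : Submodule ℝ V)
    (hW : Module.finrank ℝ W ≤ m+1) (hT : Module.finrank ℝ T ≤ m+2) (hWT : W ≤ T)
    (ha : ∀ i, a i ∈ W) (hb : ∀ i, b i ∈ W) (hx : x ∈ T) (hy : y ∈ T) :
    f (Fin.cons x (Fin.cons y b : Fin (m+1) → V)) * g a =
      f (Fin.cons x a) * g (Fin.cons y b) - f (Fin.cons y a) * g (Fin.cons x b) := by
  have hfl : ∀ w (v : Fin (m+1) → V), f (Fin.cons w v) = f.curryLeft w v := fun w v => rfl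
  by_cases hai : LinearIndependent ℝ a
  swap
  · rw [hfl x a, hfl y a, AlternatingMap.map_linearDependent _ _ hai,
      AlternatingMap.map_linearDependent _ _ hai, AlternatingMap.map_linearDependent _ _ hai]
    ring
  by_cases hbi : LinearIndependent ℝ b
  swap
  · have hb' : ∀ w, ¬ LinearIndependent ℝ (Fin.cons w b : Fin (m+1) → V) := fun w h =>
      hbi (linearIndependent_finCons.1 h).1
    rw [hfl x (Fin.cons y b), AlternatingMap.map_linearDependent _ _ (hb' y),
      AlternatingMap.map_linearDependent _ _ (hb' y), AlternatingMap.map_linearDependent _ _ (hb' x)]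
    ring
  obtain ⟨i, hi⟩ : ∃ i, a i ∉ Submodule.span ℝ (Set.range b) := by
    by_contra! hcon
    have h1 : Submodule.span ℝ (Set.range a) ≤ Submodule.span ℝ (Set.range b) := by
      rw [Submodule.span_le]; rintro _ ⟨i, rfl⟩; exact hcon i
    have := Submodule.finrank_mono h1
    rw [finrank_span_eq_card hai, finrank_span_eq_card hbi] at this
    simp at this
  set c := a i with hc
  have hcW : c ∈ W := ha i
  have hei : LinearIndependent ℝ (Fin.cons c b : Fin (m+1) → V) :=
    linearIndependent_finCons.2 ⟨hbi, hi⟩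
  -- as basis of W
  have hmem : ∀ j, (Fin.cons c b : Fin (m+1) → V) j ∈ W := fun j => by
    refine Fin.cases ?_ (fun j => ?_) j
    · exact hcW
    · exact hb j
  let e0 : Fin (m+1) → W := fun j => ⟨_, hmem j⟩
  have he0 : LinearIndependent ℝ e0 :=
    LinearIndependent.of_comp W.subtype (by exact hei)
  have hdim : Fintype.card (Fin (m+1)) = Module.finrank ℝ W :=
    le_antisymm he0.fintype_card_le_finrank (by simpa using hW)
  let e := basisOfLinearIndependentOfCardEqFinrank he0 hdim
  have hee : (e : Fin (m+1) → W) = e0 := coe_basisOfLinearIndependentOfCardEqFinrank he0 hdim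
  let a0 : Fin (m+1) → W := fun j => ⟨_, ha j⟩
  have key : ∀ h : V [⋀^Fin (m+1)]→ₗ[ℝ] ℝ, h a = h (Fin.cons c b) * e.det a0 := by
    intro h
    have := congrArg (fun q => q a0) (AlternatingMap.eq_smul_basis_det e (h.compLinearMap W.subtype))
    simp only [AlternatingMap.smul_apply, hee] at this
    exact this
  rw [hfl x a, hfl y a, key, key, key, ← hfl, ← hfl]
  suffices H : f (Fin.cons x (Fin.cons y b : Fin (m+1) → V)) * g (Fin.cons c b) =
      f (Fin.cons x (Fin.cons c b : Fin (m+1) → V)) * g (Fin.cons y b) -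
      f (Fin.cons y (Fin.cons c b : Fin (m+1) → V)) * g (Fin.cons x b) by
    linear_combination e.det a0 * H
  have hdec : ∀ (q : ℕ) (w z : V) (d : Fin q → V),
      w ∈ Submodule.span ℝ (Set.range (Fin.cons z d : Fin (q+1) → V)) →
      ∃ t : ℝ, ∃ r ∈ Submodule.span ℝ (Set.range d), w = t • z + r := by
    intro q w z d h
    rw [Fin.range_cons] at h
    exact Submodule.mem_span_insert.1 h
  have hF0 : ∀ w, ∀ r ∈ Submodule.span ℝ (Set.range b),
      f (Fin.cons w (Fin.cons r b : Fin (m+1) → V)) = 0 := fun w r hr => by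
    rw [hfl]; exact aux_cons_mem_zero _ _ _ hr
  have hF1 : ∀ w, ∀ r ∈ Submodule.span ℝ (Set.range b),
      f (Fin.cons r (Fin.cons w b : Fin (m+1) → V)) = 0 := fun w r hr => by
    rw [aux_swap, hF0 _ _ hr, neg_zero]
  have hFF : ∀ w, f (Fin.cons w (Fin.cons w b : Fin (m+1) → V)) = 0 := fun w => by
    apply aux_cons_mem_zero
    exact Submodule.subset_span ⟨0, rfl⟩
  have hG0 : ∀ r ∈ Submodule.span ℝ (Set.range b), g (Fin.cons r b) = 0 := fun r hr =>
    aux_cons_mem_zero _ _ _ hr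
  by_cases hyc : y ∈ Submodule.span ℝ (Set.range (Fin.cons c b : Fin (m+1) → V))
  · have h1 : f (Fin.cons y (Fin.cons c b : Fin (m+1) → V)) = 0 := aux_cons_mem_zero _ _ _ hyc
    obtain ⟨t, r, hr, rfl⟩ := hdec _ _ _ _ hyc
    rw [h1, hfl x (Fin.cons (t • c + r) b), aux_cons_add, aux_cons_add, aux_cons_smul,
      aux_cons_smul, ← hfl, ← hfl, hF0 _ _ hr, hG0 _ hr]
    ring
  have hyi : LinearIndependent ℝ (Fin.cons y (Fin.cons c b : Fin (m+1) → V) : Fin (m+2) → V) :=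
    linearIndependent_finCons.2 ⟨hei, hyc⟩
  have hxc : x ∈ Submodule.span ℝ
      (Set.range (Fin.cons y (Fin.cons c b : Fin (m+1) → V) : Fin (m+2) → V)) := by
    by_contra hxc
    have hxi := linearIndependent_finCons.2 ⟨hyi, hxc⟩
    have hle : Submodule.span ℝ (Set.range (Fin.cons x (Fin.cons y (Fin.cons c b : Fin (m+1) → V)
        : Fin (m+2) → V) : Fin (m+3) → V)) ≤ T := by
      rw [Submodule.span_le, Fin.range_cons, Fin.range_cons, Fin.range_cons]
      rintro _ (rfl | rfl | rfl | ⟨j, rfl⟩)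
      exacts [hx, hy, hWT hcW, hWT (hb j)]
    have := Submodule.finrank_mono hle
    rw [finrank_span_eq_card hxi] at this
    simp at this
    omega
  obtain ⟨s, x', hx', rfl⟩ := hdec _ _ _ _ hxc
  obtain ⟨t, r, hr, rfl⟩ := hdec _ _ _ _ hx'
  simp only [aux_cons_add, aux_cons_smul, hFF, hF1 _ _ hr, hG0 _ hr]
  rw [aux_swap f c y]
  ring

theorem aux_strictMono_cons {p : ℕ} (c : ℕ) (w : Fin p → ℕ) (hw : StrictMono w)
    (hc : ∀ i, c < w i) : StrictMono (Fin.cons c w : Fin (p+1) → ℕ) := by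
  intro i j
  refine Fin.cases ?_ (fun i => ?_) i <;> refine Fin.cases ?_ (fun j => ?_) j
  · intro h; exact absurd h (lt_irrefl _)
  · intro _; exact hc j
  · intro h; exact absurd h (by simp)
  · intro h; exact hw (by simpa using h)

theorem aux_strictMono_snoc {p : ℕ} (c : ℕ) (w : Fin p → ℕ) (hw : StrictMono w)
    (hc : ∀ i, w i < c) : StrictMono (Fin.snoc w c : Fin (p+1) → ℕ) := by
  intro i j
  refine Fin.lastCases ?_ (fun i => ?_) i <;> refine Fin.lastCases ?_ (fun j => ?_) j
  · intro h; exact absurd h (lt_irrefl _)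
  · intro h; exact absurd h (by simp [Fin.le_last])
  · intro _; simpa using hc i
  · intro h; simpa using hw (by simpa using h)

theorem aux_minor (M : ℕ → ℕ → ℝ) (n p : ℕ) (U : Finset ℕ) (hU : U.card = p)
    (hUs : U ⊆ Finset.Icc 1 n) :
    ∃ f : (Fin n → ℝ) [⋀^Fin p]→ₗ[ℝ] ℝ, ∀ (W : Finset ℕ) (w : Fin p → ℕ), W.card = p →
      StrictMono w → (∀ i, w i ∈ W) →
      minorN M U W = f (fun j => fun i : Fin n => M (i.val + 1) (w j)) := by
  subst hU
  have hmem : ∀ i, 1 ≤ U.orderEmbOfFin rfl i ∧ U.orderEmbOfFin rfl i ≤ n := fun i =>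
    Finset.mem_Icc.1 (hUs (Finset.orderEmbOfFin_mem U rfl i))
  let ρ : Fin U.card → Fin n := fun i => ⟨U.orderEmbOfFin rfl i - 1, by have := hmem i; omega⟩
  refine ⟨Matrix.detRowAlternating.compLinearMap (LinearMap.funLeft ℝ ℝ ρ), ?_⟩
  intro W w hW hw hwW
  have hw' := Finset.orderEmbOfFin_unique hW hwW hw
  rw [minorN, dif_pos hW.symm, ← Matrix.det_transpose]
  change _ = Matrix.det (fun j i => M ((ρ i).val + 1) (w j))
  congr 1
  ext j i
  have h1 : (ρ i).val + 1 = U.orderEmbOfFin rfl i := by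
    have := hmem i
    simp only [ρ]; omega
  rw [h1, hw']
  rfl

/-- the three-term determinantal identity for interlacing matrices. -/
theorem stmt_4 (k : ℕ) (hk : 2 ≤ k) (M : ℕ → ℕ → ℝ) (hM : IsInterlacingMatrix k M)
    (I J : Finset ℕ) (hI : I ⊆ Finset.Icc 1 (2 * k - 1)) (hJ : J ⊆ Finset.Icc 1 (2 * k - 1))
    (hIcard : I.card = k - 1) (hJcard : J.card = k - 1)
    (h1 : 1 ∉ J) (h2 : 2 * k - 1 ∉ J) :
    minorN M (Finset.Icc 1 (2 * k - 1) \ I) (Finset.Icc 1 (2 * k - 1) \ J) * minorN M I J =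
      minorN M (Finset.Icc 1 (2 * k - 1) \ I)
          (Finset.Icc 1 (2 * k - 1) \ (Finset.Icc 2 (2 * k - 1) \ J)) *
        minorN M I (Finset.Icc 2 (2 * k - 1) \ J) +
      minorN M (Finset.Icc 1 (2 * k - 1) \ I)
          (Finset.Icc 1 (2 * k - 1) \ (Finset.Icc 1 (2 * k - 2) \ J)) *
        minorN M I (Finset.Icc 1 (2 * k - 2) \ J) := by
  obtain ⟨m, rfl⟩ : ∃ m, k = m + 2 := ⟨k - 2, by omega⟩
  obtain ⟨-, hr1, hr2⟩ := hM
  obtain ⟨n, hn⟩ : ∃ n, n = 2 * (m + 2) - 1 := ⟨_, rfl⟩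
  have hn' : n = 2 * m + 3 := by omega
  have e1 : 2 * (m + 2) - 2 = n - 1 := by omega
  have e2 : m + 2 - 1 = m + 1 := by omega
  rw [e2] at hIcard hJcard hr2
  rw [e1]
  rw [← hn] at hI hJ h2 hr1 hr2 ⊢
  have hJr : ∀ j ∈ J, 2 ≤ j ∧ j ≤ n - 1 := by
    intro j hj
    have h3 := Finset.mem_Icc.1 (hJ hj)
    have h4 : j ≠ 1 := fun h => h1 (h ▸ hj)
    have h5 : j ≠ n := fun h => h2 (h ▸ hj)
    omega
  obtain ⟨L, hL⟩ : ∃ L, L = Finset.Icc 2 (n - 1) \ J := ⟨_, rfl⟩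
  have hJs : J ⊆ Finset.Icc 2 (n - 1) := fun j hj => Finset.mem_Icc.2 (hJr j hj)
  have hLcard : L.card = m := by
    rw [hL, Finset.card_sdiff_of_subset hJs, Nat.card_Icc, hJcard]; omega
  have hLm : ∀ j, j ∈ L ↔ (2 ≤ j ∧ j ≤ n - 1) ∧ j ∉ J := fun j => by
    rw [hL, Finset.mem_sdiff, Finset.mem_Icc]
  have hIc : (Finset.Icc 1 n \ I).card = m + 2 := by
    rw [Finset.card_sdiff_of_subset hI, Nat.card_Icc, hIcard]; omega
  have s1 : Finset.Icc 1 n \ J = insert 1 (insert n L) := by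
    ext j; have := hJr j; simp only [Finset.mem_sdiff, Finset.mem_Icc, Finset.mem_insert, hLm]; grind
  have s2 : Finset.Icc 2 n \ J = insert n L := by
    ext j; have := hJr j; simp only [Finset.mem_sdiff, Finset.mem_Icc, Finset.mem_insert, hLm]; grind
  have s3 : Finset.Icc 1 (n - 1) \ J = insert 1 L := by
    ext j; have := hJr j; simp only [Finset.mem_sdiff, Finset.mem_Icc, Finset.mem_insert, hLm]; grind
  have s4 : Finset.Icc 1 n \ (insert n L) = insert 1 J := by
    ext j; have := hJr j; simp only [Finset.mem_sdiff, Finset.mem_Icc, Finset.mem_insert, hLm]; grind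
  have s5 : Finset.Icc 1 n \ (insert 1 L) = insert n J := by
    ext j; have := hJr j; simp only [Finset.mem_sdiff, Finset.mem_Icc, Finset.mem_insert, hLm]; grind
  rw [s2, s3, s4, s5, s1]
  have hnL : n ∉ L := by rw [hLm]; omega
  have h1L : 1 ∉ L := by rw [hLm]; omega
  have h1nL : 1 ∉ insert n L := by rw [Finset.mem_insert]; push Not; exact ⟨by omega, h1L⟩
  obtain ⟨f, hf⟩ := aux_minor M n (m + 2) (Finset.Icc 1 n \ I) hIc Finset.sdiff_subset
  obtain ⟨g, hg⟩ := aux_minor M n (m + 1) I hIcard hI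
  let α : Fin (m + 1) → ℕ := J.orderEmbOfFin hJcard
  let β : Fin m → ℕ := L.orderEmbOfFin hLcard
  have hα : StrictMono α := (J.orderEmbOfFin hJcard).strictMono
  have hβ : StrictMono β := (L.orderEmbOfFin hLcard).strictMono
  have hαJ : ∀ i, α i ∈ J := fun i => Finset.orderEmbOfFin_mem J hJcard i
  have hβL : ∀ i, β i ∈ L := fun i => Finset.orderEmbOfFin_mem L hLcard i
  have hαr : ∀ i, 2 ≤ α i ∧ α i ≤ n - 1 := fun i => hJr _ (hαJ i)
  have hβr : ∀ i, 2 ≤ β i ∧ β i ≤ n - 1 := fun i => ((hLm _).1 (hβL i)).1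
  let col : ℕ → (Fin n → ℝ) := fun j i => M (i.val + 1) j
  have cc : ∀ (q c : ℕ) (w : Fin q → ℕ),
      (fun j => col ((Fin.cons c w : Fin (q+1) → ℕ) j)) =
        (Fin.cons (col c) (fun j => col (w j)) : Fin (q+1) → (Fin n → ℝ)) := by
    intro q c w; ext j
    refine Fin.cases ?_ (fun j => ?_) j <;> rfl
  have cs : ∀ (q c : ℕ) (w : Fin q → ℕ),
      (fun j => col ((Fin.snoc w c : Fin (q+1) → ℕ) j)) =
        (Fin.snoc (fun j => col (w j)) (col c) : Fin (q+1) → (Fin n → ℝ)) := by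
    intro q c w; ext j
    refine Fin.lastCases ?_ (fun j => ?_) j <;> simp
  have mc : ∀ (q c : ℕ) (w : Fin q → ℕ) (S : Finset ℕ), (∀ i, w i ∈ S) →
      ∀ i, (Fin.cons c w : Fin (q+1) → ℕ) i ∈ insert c S := by
    intro q c w S h i
    refine Fin.cases ?_ (fun i => ?_) i
    · simp
    · simpa using Or.inr (h i)
  have ms : ∀ (q c : ℕ) (w : Fin q → ℕ) (S : Finset ℕ), (∀ i, w i ∈ S) →
      ∀ i, (Fin.snoc w c : Fin (q+1) → ℕ) i ∈ insert c S := by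
    intro q c w S h i
    refine Fin.lastCases ?_ (fun i => ?_) i
    · simp
    · simpa using Or.inr (h i)
  let a : Fin (m + 1) → (Fin n → ℝ) := fun j => col (α j)
  let b : Fin m → (Fin n → ℝ) := fun j => col (β j)
  have smL : StrictMono (Fin.snoc β n : Fin (m+1) → ℕ) :=
    aux_strictMono_snoc n β hβ (fun i => by have := hβr i; omega)
  have t1 : minorN M (Finset.Icc 1 n \ I) (insert 1 (insert n L)) =
      f (Fin.cons (col 1) (Fin.snoc b (col n) : Fin (m+1) → (Fin n → ℝ))) := by
    rw [hf _ (Fin.cons 1 (Fin.snoc β n : Fin (m+1) → ℕ)) (by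
        rw [Finset.card_insert_of_notMem h1nL, Finset.card_insert_of_notMem hnL, hLcard])
      (aux_strictMono_cons 1 _ smL (fun i => by
        refine Fin.lastCases ?_ (fun i => ?_) i
        · simp; omega
        · have := hβr i; simp; omega))
      (mc _ _ _ _ (ms _ _ _ _ hβL))]
    exact congrArg f ((cc _ _ _).trans (congrArg _ (cs _ _ _)))
  have t2 : minorN M I J = g a := hg _ α hJcard hα hαJ
  have t3 : minorN M (Finset.Icc 1 n \ I) (insert 1 J) = f (Fin.cons (col 1) a) := by
    rw [hf _ (Fin.cons 1 α) (by rw [Finset.card_insert_of_notMem h1, hJcard])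
      (aux_strictMono_cons 1 _ hα (fun i => by have := hαr i; omega)) (mc _ _ _ _ hαJ)]
    exact congrArg f (cc _ _ _)
  have t4 : minorN M I (insert n L) = g (Fin.snoc b (col n)) := by
    rw [hg _ (Fin.snoc β n) (by rw [Finset.card_insert_of_notMem hnL, hLcard])
      smL (ms _ _ _ _ hβL)]
    exact congrArg g (cs _ _ _)
  have t5 : minorN M (Finset.Icc 1 n \ I) (insert n J) = f (Fin.snoc a (col n)) := by
    rw [hf _ (Fin.snoc α n) (by rw [Finset.card_insert_of_notMem h2, hJcard])
      (aux_strictMono_snoc n _ hα (fun i => by have := hαr i; omega)) (ms _ _ _ _ hαJ)]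
    exact congrArg f (cs _ _ _)
  have t6 : minorN M I (insert 1 L) = g (Fin.cons (col 1) b) := by
    rw [hg _ (Fin.cons 1 β) (by rw [Finset.card_insert_of_notMem h1L, hLcard])
      (aux_strictMono_cons 1 _ hβ (fun i => by have := hβr i; omega)) (mc _ _ _ _ hβL)]
    exact congrArg g (cc _ _ _)
  rw [t1, t2, t3, t4, t5, t6]
  rw [Matrix.rank_eq_finrank_span_cols] at hr1 hr2
  have hT : ∀ j, 1 ≤ j → j ≤ n → col j ∈ Submodule.span ℝ (Set.range
      (Matrix.of fun i j : Fin n => M (i.val + 1) (j.val + 1)).col) := by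
    intro j hj1 hj2
    apply Submodule.subset_span
    refine ⟨⟨j - 1, by omega⟩, ?_⟩
    ext i
    simp [col, Matrix.col, Nat.sub_add_cancel hj1]
  have hW : ∀ j, 2 ≤ j → j ≤ n - 1 → col j ∈ Submodule.span ℝ (Set.range
      (Matrix.of fun (i : Fin n) (j : Fin (2 * (m + 2) - 3)) => M (i.val + 1) (j.val + 2)).col) := by
    intro j hj1 hj2
    apply Submodule.subset_span
    refine ⟨⟨j - 2, by omega⟩, ?_⟩
    ext i
    simp [col, Matrix.col, Nat.sub_add_cancel hj1]
  have core := aux_core f g a b (col 1) (col n) _ _ hr2 hr1 (by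
      rw [Submodule.span_le]
      rintro _ ⟨j, rfl⟩
      exact hT (j.val + 2) (by omega) (by omega))
    (fun i => hW _ (hαr i).1 (hαr i).2) (fun i => hW _ (hβr i).1 (hβr i).2)
    (hT 1 le_rfl (by omega)) (hT n (by omega) le_rfl)
  have u1 : f (Fin.cons (col 1) (Fin.snoc b (col n) : Fin (m+1) → (Fin n → ℝ))) =
      (-1) ^ m * f (Fin.cons (col 1) (Fin.cons (col n) b : Fin (m+1) → (Fin n → ℝ))) :=
    aux_snoc (f.curryLeft (col 1)) (col n) b
  rw [u1, aux_snoc g, aux_snoc f]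
  rw [pow_succ]
  linear_combination (-1) ^ m * core
end

section
/- Let l, n ≥ 1 and let A = (a_{ij}) be an l×n real matrix. Define the l×(l+n) matrix φ(A) whose first l columns form the l×l identity matrix and whose entry in row s and column l+j equals (−1)^{l−s} · a_{l+1−s, j} for 1 ≤ s ≤ l, 1 ≤ j ≤ n. Then for every r ≥ 0 and every I = {i_1 < … < i_r} ⊆ {1,…,l} and J = {j_1 < … < j_r} ⊆ {1,…,n}, one has det A[I|J] = det of the l×l submatrix of φ(A) whose columns are the set ({1,…,l} ∖ {l+1−i : i ∈ I}) ∪ {l+j : j ∈ J}, taken in increasing order. -/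
/-- The `l × (l+n)` matrix `φ(A)` (1-indexed): the first `l` columns form the identity
matrix, and the entry in row `s`, column `l+j` is `(-1)^(l-s) * a_{l+1-s, j}`. -/
noncomputable def phiMat (l : ℕ) (a : ℕ → ℕ → ℝ) : ℕ → ℕ → ℝ := fun s c =>
  if c ≤ l then (if s = c then 1 else 0)
  else (-1 : ℝ) ^ (l - s) * a (l + 1 - s) (c - l)

lemma minorN_eq (M : ℕ → ℕ → ℝ) {k : ℕ} (f g : Fin k → ℕ) (hf : StrictMono f) (hg : StrictMono g)
    (U W : Finset ℕ) (hU : Finset.univ.image f = U) (hW : Finset.univ.image g = W) :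
    minorN M U W = Matrix.det (Matrix.of fun i j : Fin k => M (f i) (g j)) := by
  have cU : U.card = k := by
    rw [← hU, Finset.card_image_of_injective _ hf.injective]; simp
  have cW : W.card = k := by
    rw [← hW, Finset.card_image_of_injective _ hg.injective]; simp
  subst cU
  unfold minorN
  rw [dif_pos cW.symm]
  have e1 := Finset.orderEmbOfFin_unique (s := U) rfl (f := f)
    (fun x => by rw [← hU]; exact Finset.mem_image_of_mem _ (Finset.mem_univ _)) hf
  have e2 := Finset.orderEmbOfFin_unique (s := W) cW (f := g)
    (fun x => by rw [← hW]; exact Finset.mem_image_of_mem _ (Finset.mem_univ _)) hg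
  congr 1
  ext i j
  simp [e1, e2]

lemma exists_par (U : Finset ℕ) {k : ℕ} (h : U.card = k) :
    ∃ f : Fin k → ℕ, StrictMono f ∧ Finset.univ.image f = U :=
  ⟨U.orderEmbOfFin h, (U.orderEmbOfFin h).strictMono, by simp⟩

lemma erase_par {k : ℕ} (g : Fin (k+1) → ℕ) (hg : StrictMono g) (j : Fin (k+1)) :
    Finset.univ.image (g ∘ j.succAbove) = (Finset.univ.image g).erase (g j) := by
  ext x
  simp only [Finset.mem_image, Finset.mem_univ, true_and, Finset.mem_erase, Function.comp]
  constructor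
  · rintro ⟨i, rfl⟩
    exact ⟨fun h => Fin.succAbove_ne j i (hg.injective h), _, rfl⟩
  · rintro ⟨h, i, rfl⟩
    obtain ⟨y, rfl⟩ := Fin.exists_succAbove_eq (x := i) (y := j) (fun h' => h (by rw [h']))
    exact ⟨y, rfl⟩

lemma filter_par {k : ℕ} (g : Fin k → ℕ) (hg : StrictMono g) (j : Fin k) :
    ((Finset.univ.image g).filter (· < g j)).card = j := by
  have : (Finset.univ.image g).filter (· < g j) = (Finset.Iio j).image g := by
    ext x
    simp only [Finset.mem_image, Finset.mem_univ, true_and, Finset.mem_filter, Finset.mem_Iio]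
    constructor
    · rintro ⟨⟨i, rfl⟩, h⟩
      exact ⟨i, hg.lt_iff_lt.1 h, rfl⟩
    · rintro ⟨i, h, rfl⟩
      exact ⟨⟨i, rfl⟩, hg h⟩
  rw [this, Finset.card_image_of_injective _ hg.injective]; simp

lemma minor_min (M : ℕ → ℕ → ℝ) (u : ℕ) (U W : Finset ℕ) (hu : ∀ x ∈ U, u < x)
    (hc : W.card = U.card + 1) :
    minorN M (insert u U) W =
      ∑ w ∈ W, (-1 : ℝ) ^ (W.filter (· < w)).card * M u w * minorN M U (W.erase w) := by
  obtain ⟨m, hm⟩ : ∃ m, U.card = m := ⟨_, rfl⟩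
  rw [hm] at hc
  obtain ⟨f, hf, hfU⟩ := exists_par U hm
  obtain ⟨g, hg, hgW⟩ := exists_par W hc
  have hf' : StrictMono (Fin.cons u f : Fin (m + 1) → ℕ) := by
    intro i j
    refine Fin.cases ?_ (fun j => ?_) j
    · intro h; exact absurd h (Fin.not_lt_zero _)
    · refine Fin.cases ?_ (fun i => ?_) i
      · intro _
        simp only [Fin.cons_succ, Fin.cons_zero]
        exact hu _ (hfU ▸ Finset.mem_image_of_mem _ (Finset.mem_univ _))
      · intro h
        simp only [Fin.cons_succ]
        exact hf (by simpa using h)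
  have hfI : Finset.univ.image (Fin.cons u f : Fin (m + 1) → ℕ) = insert u U := by
    rw [← hfU]; ext x; simp [Fin.exists_fin_succ, eq_comm]
  rw [minorN_eq M _ _ hf' hg _ _ hfI hgW, Matrix.det_succ_row_zero, ← hgW,
    Finset.sum_image hg.injective.injOn]
  refine Finset.sum_congr rfl fun j _ => ?_
  rw [filter_par g hg, ← erase_par g hg,
    minorN_eq M f (g ∘ j.succAbove) hf (hg.comp (Fin.strictMono_succAbove j)) _ _ hfU rfl]
  rfl

lemma minor_max (M : ℕ → ℕ → ℝ) (u : ℕ) (U W : Finset ℕ) (hu : ∀ x ∈ U, x < u)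
    (hc : W.card = U.card + 1) :
    minorN M (insert u U) W =
      ∑ w ∈ W, (-1 : ℝ) ^ (U.card + (W.filter (· < w)).card) * M u w * minorN M U (W.erase w) := by
  obtain ⟨m, hm⟩ : ∃ m, U.card = m := ⟨_, rfl⟩
  rw [hm] at hc ⊢
  obtain ⟨f, hf, hfU⟩ := exists_par U hm
  obtain ⟨g, hg, hgW⟩ := exists_par W hc
  have hf' : StrictMono (Fin.snoc f u : Fin (m + 1) → ℕ) := by
    intro i j
    refine Fin.lastCases ?_ (fun j => ?_) j
    · refine Fin.lastCases ?_ (fun i => ?_) i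
      · intro h; exact absurd h (lt_irrefl _)
      · intro _
        simp only [Fin.snoc_castSucc, Fin.snoc_last]
        exact hu _ (hfU ▸ Finset.mem_image_of_mem _ (Finset.mem_univ _))
    · refine Fin.lastCases ?_ (fun i => ?_) i
      · intro h; exact absurd h (not_lt.2 (Fin.le_last _))
      · intro h
        simp only [Fin.snoc_castSucc]
        exact hf (by simpa using h)
  have hfI : Finset.univ.image (Fin.snoc f u : Fin (m + 1) → ℕ) = insert u U := by
    rw [← hfU]; ext x
    simp [Fin.exists_fin_succ', eq_comm, or_comm]
  rw [minorN_eq M _ _ hf' hg _ _ hfI hgW, Matrix.det_succ_row _ (Fin.last _), ← hgW,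
    Finset.sum_image hg.injective.injOn]
  refine Finset.sum_congr rfl fun j _ => ?_
  rw [filter_par g hg, ← erase_par g hg,
    minorN_eq M f (g ∘ j.succAbove) hf (hg.comp (Fin.strictMono_succAbove j)) _ _ hfU rfl]
  have : (Matrix.of fun i j => M ((Fin.snoc f u : Fin (m + 1) → ℕ) i) (g j)).submatrix
      (Fin.last _).succAbove j.succAbove
      = Matrix.of fun i k => M (f i) ((g ∘ j.succAbove) k) := by
    ext i k
    simp
  rw [this]
  simp

lemma minor_transpose (M : ℕ → ℕ → ℝ) (U W : Finset ℕ) (h : U.card = W.card) :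
    minorN M U W = minorN (fun x y => M y x) W U := by
  obtain ⟨f, hf, hfU⟩ := exists_par U rfl
  obtain ⟨g, hg, hgW⟩ := exists_par W h.symm
  rw [minorN_eq M f g hf hg _ _ hfU hgW, minorN_eq _ g f hg hf _ _ hgW hfU,
    ← Matrix.det_transpose]
  rfl

lemma minor_shift (M : ℕ → ℕ → ℝ) (U W : Finset ℕ) (h : U.card = W.card) :
    minorN M (U.image (· + 1)) (W.image (· + 1)) = minorN (fun x y => M (x+1) (y+1)) U W := by
  obtain ⟨m, hm⟩ : ∃ m, U.card = m := ⟨_, rfl⟩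
  rw [hm] at h
  obtain ⟨f, hf, hfU⟩ := exists_par U hm
  obtain ⟨g, hg, hgW⟩ := exists_par W h.symm
  rw [minorN_eq _ f g hf hg _ _ hfU hgW,
    minorN_eq M (fun i => f i + 1) (fun i => g i + 1) (fun _ _ h => Nat.add_lt_add_right (hf h) 1)
      (fun _ _ h => Nat.add_lt_add_right (hg h) 1) _ _ (by rw [← hfU, Finset.image_image]; rfl)
      (by rw [← hgW, Finset.image_image]; rfl)]

lemma minor_col (M : ℕ → ℕ → ℝ) (u : ℕ) (U W : Finset ℕ) (hu : ∀ x ∈ U, u < x)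
    (hw : ∀ x ∈ W, u < x) (h1 : M u u = 1) (h0 : ∀ x ∈ U, M x u = 0) (h : U.card = W.card) :
    minorN M (insert u U) (insert u W) = minorN M U W := by
  have nU : u ∉ U := fun h => lt_irrefl _ (hu _ h)
  have nW : u ∉ W := fun h => lt_irrefl _ (hw _ h)
  rw [minor_transpose _ _ _ (by simp [nU, nW, h]), minor_min _ _ _ _ hw (by simp [nU, h]),
    Finset.sum_insert nU, Finset.sum_eq_zero (fun x hx => by simp [h0 x hx]),
    minor_transpose M _ _ h, Finset.erase_insert nU, h1]
  have : (insert u U).filter (· < u) = ∅ := by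
    ext x
    simp only [Finset.mem_filter, Finset.mem_insert, Finset.notMem_empty, iff_false]
    rintro ⟨rfl | hx, h⟩
    · omega
    · have := hu _ hx; omega
  rw [this]; simp

def colsN (l : ℕ) (I J : Finset ℕ) : Finset ℕ :=
  (Finset.Icc 1 l \ I.image (fun i => l + 1 - i)) ∪ J.image (fun j => l + j)

lemma mem_colsN (l : ℕ) (I J : Finset ℕ) (hI : I ⊆ Finset.Icc 1 l) (hJ : ∀ j ∈ J, 1 ≤ j) (x : ℕ) :
    x ∈ colsN l I J ↔ (1 ≤ x ∧ x ≤ l ∧ l + 1 - x ∉ I) ∨ (l < x ∧ x - l ∈ J) := by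
  simp only [colsN, Finset.mem_union, Finset.mem_sdiff, Finset.mem_Icc, Finset.mem_image, not_exists,
    not_and]
  refine or_congr ⟨fun ⟨⟨h1, h2⟩, h3⟩ => ⟨h1, h2, fun h => h3 _ h (by omega)⟩,
    fun ⟨h1, h2, h3⟩ => ⟨⟨h1, h2⟩, fun i hi he => h3 ?_⟩⟩ ⟨?_, fun ⟨h1, h2⟩ => ⟨_, h2, by omega⟩⟩
  · have := Finset.mem_Icc.1 (hI hi)
    rwa [show l + 1 - x = i by omega]
  · rintro ⟨j, hj, rfl⟩
    have := hJ j hj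
    exact ⟨by omega, by simpa using hj⟩

lemma card_left (l : ℕ) (I : Finset ℕ) (hI : I ⊆ Finset.Icc 1 l) :
    (Finset.Icc 1 l \ I.image (fun i => l + 1 - i)).card = l - I.card := by
  rw [Finset.card_sdiff_of_subset, Finset.card_image_of_injOn]
  · simp
  · intro x hx y hy h
    have := Finset.mem_Icc.1 (hI hx)
    have := Finset.mem_Icc.1 (hI hy)
    simp only at h
    omega
  · intro x hx
    obtain ⟨i, hi, rfl⟩ := Finset.mem_image.1 hx
    have := Finset.mem_Icc.1 (hI hi)
    simp only [Finset.mem_Icc]; omega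

lemma disj_cols (l : ℕ) (I J : Finset ℕ) (hJ : ∀ j ∈ J, 1 ≤ j) :
    Disjoint (Finset.Icc 1 l \ I.image (fun i => l + 1 - i)) (J.image (fun j => l + j)) := by
  rw [Finset.disjoint_left]
  intro x hx hx'
  obtain ⟨j, hj, rfl⟩ := Finset.mem_image.1 hx'
  have := hJ j hj
  have := Finset.mem_Icc.1 (Finset.mem_sdiff.1 hx).1
  omega

lemma card_colsN (l : ℕ) (I J : Finset ℕ) (hI : I ⊆ Finset.Icc 1 l) (hJ : ∀ j ∈ J, 1 ≤ j)
    (h : I.card = J.card) : (colsN l I J).card = l := by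
  have := Finset.card_le_card hI
  simp only [Nat.card_Icc] at this
  rw [colsN, Finset.card_union_of_disjoint (disj_cols l I J hJ), card_left l I hI,
    Finset.card_image_of_injective _ (add_right_injective l)]
  omega

lemma phi_shift (l : ℕ) (a : ℕ → ℕ → ℝ) :
    (fun x y => phiMat (l+1) a (x+1) (y+1)) = phiMat l a := by
  funext s c
  unfold phiMat
  rw [show l + 1 - (s + 1) = l - s by omega, show l + 1 + 1 - (s + 1) = l + 1 - s by omega,
    show c + 1 - (l + 1) = c - l by omega]
  simp

lemma Icc_shift (l : ℕ) : Finset.Icc 1 (l+1) = insert 1 ((Finset.Icc 1 l).image (· + 1)) := by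
  ext x
  simp only [Finset.mem_Icc, Finset.mem_insert, Finset.mem_image]
  constructor
  · intro h
    by_cases h1 : x = 1
    · exact Or.inl h1
    · exact Or.inr ⟨x - 1, by omega, by omega⟩
  · rintro (rfl | ⟨y, h, rfl⟩) <;> omega

lemma mem_shift (S : Finset ℕ) (x : ℕ) : x ∈ S.image (· + 1) ↔ 1 ≤ x ∧ x - 1 ∈ S := by
  simp only [Finset.mem_image]
  constructor
  · rintro ⟨y, h, rfl⟩; exact ⟨by omega, by simpa using h⟩
  · rintro ⟨h, h'⟩; exact ⟨_, h', by omega⟩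

lemma main_aux (a : ℕ → ℕ → ℝ) (l : ℕ) : ∀ (I J : Finset ℕ), I ⊆ Finset.Icc 1 l →
    (∀ j ∈ J, 1 ≤ j) → I.card = J.card →
    minorN a I J = minorN (phiMat l a) (Finset.Icc 1 l) (colsN l I J) := by
  induction l with
  | zero =>
    intro I J hI hJ h
    have hI0 : I = ∅ := by simpa using hI
    subst hI0
    have hJ0 : J = ∅ := by rw [← Finset.card_eq_zero, ← h]; rfl
    subst hJ0
    have e : colsN 0 ∅ ∅ = ∅ := by simp [colsN]
    have hs : StrictMono (Fin.elim0 : Fin 0 → ℕ) := fun x => x.elim0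
    rw [e, minorN_eq a _ _ hs hs ∅ ∅ (by simp) (by simp),
      minorN_eq _ _ _ hs hs (Finset.Icc 1 0) ∅ (by simp) (by simp)]
    simp
  | succ l ih =>
    intro I J hI hJ h
    by_cases hm : l + 1 ∈ I
    · obtain ⟨I', hI'n, rfl⟩ : ∃ I', l + 1 ∉ I' ∧ insert (l+1) I' = I :=
        ⟨I.erase (l+1), Finset.notMem_erase _ _, Finset.insert_erase hm⟩
      have hI' : I' ⊆ Finset.Icc 1 l := by
        intro x hx
        have h1 := Finset.mem_Icc.1 (hI (Finset.mem_insert_of_mem hx))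
        have : x ≠ l + 1 := fun e => hI'n (e ▸ hx)
        rw [Finset.mem_Icc]; omega
      have hc : J.card = I'.card + 1 := by rw [← h, Finset.card_insert_of_notMem hI'n]
      have hle : I'.card ≤ l := by simpa using Finset.card_le_card hI'
      rw [minor_max a (l+1) I' J (fun x hx => by
        have := Finset.mem_Icc.1 (hI' hx); omega) hc, Icc_shift,
        minor_min _ 1 _ _ (fun x hx => by
          obtain ⟨y, hy, rfl⟩ := Finset.mem_image.1 hx
          have := Finset.mem_Icc.1 hy; omega)
          (by rw [card_colsN _ _ _ hI hJ h,
                Finset.card_image_of_injective _ (add_left_injective 1)]; simp)]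
      have hz : ∀ x ∈ Finset.Icc 1 (l+1) \ (insert (l+1) I').image (fun i => l + 1 + 1 - i),
          phiMat (l+1) a 1 x = 0 := by
        intro x hx
        obtain ⟨h1, h2⟩ := Finset.mem_sdiff.1 hx
        rw [Finset.mem_Icc] at h1
        unfold phiMat
        rw [if_pos h1.2, if_neg]
        rintro rfl
        exact h2 (Finset.mem_image.2 ⟨l+1, Finset.mem_insert_self _ _, by omega⟩)
      have hsplit : ∀ F : ℕ → ℝ, (∀ x, phiMat (l+1) a 1 x = 0 → F x = 0) →
          ∑ w ∈ colsN (l+1) (insert (l+1) I') J, F w = ∑ j ∈ J, F (l + 1 + j) := by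
        intro F hF
        rw [colsN, Finset.sum_union (disj_cols _ _ _ hJ),
          Finset.sum_eq_zero (fun x hx => hF x (hz x hx)), zero_add,
          Finset.sum_image (add_right_injective (l+1)).injOn]
      rw [hsplit _ (fun x hx => by simp [hx])]
      refine Finset.sum_congr rfl fun j hj => ?_
      have hj1 := hJ j hj
      have herase : (colsN (l+1) (insert (l+1) I') J).erase (l+1+j)
          = (colsN l I' (J.erase j)).image (· + 1) := by
        ext x
        rw [Finset.mem_erase, mem_colsN _ _ _ hI hJ, mem_shift, mem_colsN _ _ _ hI'
          (fun j hj => hJ j (Finset.mem_of_mem_erase hj))]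
        simp only [Finset.mem_insert, Finset.mem_erase]
        by_cases hx : 1 ≤ x
        · rw [show l + 1 - (x - 1) = l + 1 + 1 - x by omega, 
            show x - 1 - l = x - (l+1) by omega]
          constructor
          · rintro ⟨h1, h2 | h2⟩
            · push Not at h2
              refine ⟨hx, Or.inl ⟨by omega, by omega, h2.2.2.2⟩⟩
            · exact ⟨hx, Or.inr ⟨by omega, by omega, h2.2⟩⟩
          · rintro ⟨-, h2 | h2⟩
            · refine ⟨by omega, Or.inl ⟨by omega, by omega, ?_⟩⟩
              rintro (h3 | h3)
              · omega
              · exact h2.2.2 h3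
            · exact ⟨by omega, Or.inr ⟨by omega, h2.2.2⟩⟩
        · omega
      have hcJ : I'.card = (J.erase j).card := by rw [Finset.card_erase_of_mem hj]; omega
      have hJe : ∀ i ∈ J.erase j, 1 ≤ i := fun j hj => hJ j (Finset.mem_of_mem_erase hj)
      rw [herase, minor_shift _ _ _ (by rw [card_colsN _ _ _ hI' hJe hcJ]; simp), phi_shift,
        ← ih I' (J.erase j) hI' hJe hcJ]
      congr 1
      have hfil : ((colsN (l+1) (insert (l+1) I') J).filter (· < l+1+j)).card
          = (l - I'.card) + (J.filter (· < j)).card := by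
        have e : (colsN (l+1) (insert (l+1) I') J).filter (· < l+1+j)
          = colsN (l+1) (insert (l+1) I') (J.filter (· < j)) := by
          ext x
          rw [Finset.mem_filter, mem_colsN _ _ _ hI hJ, mem_colsN _ _ _ hI
            (fun j hj => hJ j (Finset.mem_filter.1 hj).1), Finset.mem_filter]
          constructor
          · rintro ⟨h2 | h2, h1⟩
            · exact Or.inl h2
            · exact Or.inr ⟨h2.1, h2.2, by omega⟩
          · rintro (h2 | h2)
            · exact ⟨Or.inl h2, by omega⟩
            · exact ⟨Or.inr ⟨h2.1, h2.2.1⟩, by omega⟩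
        rw [e, colsN, Finset.card_union_of_disjoint
          (disj_cols _ _ _ (fun j hj => hJ j (Finset.mem_filter.1 hj).1)), card_left _ _ hI,
          Finset.card_image_of_injective _ (add_right_injective (l+1)),
          Finset.card_insert_of_notMem hI'n]
        omega
      rw [hfil]
      unfold phiMat
      rw [if_neg (by omega), show l + 1 + 1 - 1 = l + 1 by omega, show l + 1 - 1 = l by omega,
        show l + 1 + j - (l + 1) = j by omega, ← mul_assoc, ← pow_add]
      congr 1
      rw [show l - I'.card + (J.filter (· < j)).card + l
        = I'.card + (J.filter (· < j)).card + 2 * (l - I'.card) by omega, pow_add _ _ (2 * _),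
        pow_mul]
      simp
    · have hI' : I ⊆ Finset.Icc 1 l := by
        intro x hx
        have h1 := Finset.mem_Icc.1 (hI hx)
        have : x ≠ l + 1 := fun e => hm (e ▸ hx)
        rw [Finset.mem_Icc]; omega
      have hcols : colsN (l+1) I J = insert 1 ((colsN l I J).image (· + 1)) := by
        ext x
        rw [mem_colsN _ _ _ hI hJ, Finset.mem_insert, mem_shift, mem_colsN _ _ _ hI' hJ]
        by_cases h1 : x = 1
        · subst h1
          simp [hm]
        · by_cases hx : 1 ≤ x
          · rw [show l + 1 - (x - 1) = l + 1 + 1 - x by omega, 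
              show x - 1 - l = x - (l+1) by omega]
            constructor
            · rintro (h2 | h2)
              · exact Or.inr ⟨hx, Or.inl ⟨by omega, by omega, h2.2.2⟩⟩
              · exact Or.inr ⟨hx, Or.inr ⟨by omega, h2.2⟩⟩
            · rintro (h2 | ⟨-, h2 | h2⟩)
              · exact absurd h2 h1
              · exact Or.inl ⟨by omega, by omega, h2.2.2⟩
              · exact Or.inr ⟨by omega, h2.2⟩
          · omega
      have hcc : (Finset.Icc 1 l).card = (colsN l I J).card := by
        rw [card_colsN _ _ _ hI' hJ h]; simp
      have hlt : ∀ x ∈ (Finset.Icc 1 l).image (· + 1), 1 < x := by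
        intro x hx
        obtain ⟨y, hy, rfl⟩ := Finset.mem_image.1 hx
        have := Finset.mem_Icc.1 hy; omega
      rw [hcols, Icc_shift, minor_col _ _ _ _ hlt, minor_shift _ _ _ hcc, phi_shift,
        ih I J hI' hJ h]
      · intro x hx
        obtain ⟨y, hy, rfl⟩ := Finset.mem_image.1 hx
        have := (mem_colsN _ _ _ hI' hJ _).1 hy
        omega
      · simp [phiMat]
      · intro x hx
        have := hlt x hx
        unfold phiMat
        rw [if_pos (by omega), if_neg (by omega)]
      · rw [Finset.card_image_of_injective _ (add_left_injective 1),
          Finset.card_image_of_injective _ (add_left_injective 1), hcc]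

/-- the minors of `A` appear as maximal minors of `φ(A)`:
`det A[I|J]` equals the maximal minor of `φ(A)` on columns
`({1,…,l} ∖ {l+1-i : i ∈ I}) ∪ {l+j : j ∈ J}`. -/
theorem stmt_5 (l n : ℕ) (hl : 1 ≤ l) (hn : 1 ≤ n) (a : ℕ → ℕ → ℝ)
    (r : ℕ) (I J : Finset ℕ) (hI : I ⊆ Finset.Icc 1 l) (hJ : J ⊆ Finset.Icc 1 n)
    (hIcard : I.card = r) (hJcard : J.card = r) :
    minorN a I J =
      minorN (phiMat l a) (Finset.Icc 1 l)
        ((Finset.Icc 1 l \ I.image (fun i => l + 1 - i)) ∪ J.image (fun j => l + j)) := by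
  exact main_aux a l I J hI (fun j hj => (Finset.mem_Icc.1 (hJ hj)).1) (hIcard.trans hJcard.symm)
end
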